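/- arXiv:0707.1974 — 2 statements merged into one kernel-verified Lean document; each statement's English description precedes it below -/
import Mathlib

section
/- Corollary (radial case, classical order 2β = 1). Let a, λ, α, A > 0, ν > 0, and let h : [0,∞) → ℝ be continuous and bounded with h(0) = 0. Define u(r,z,t) = (A/Γ(ν)) ∫_0^t (1/τ)·(r²/(4τ))^ν·exp(−r²/(4τ))·exp(λ(z+ατ)/(2a²))·[ ∫_0^{t−τ} ((z+ατ)/(2a√π))·w^{−3/2}·h(t−τ−w)·exp(−λ²w/(4a²))·exp(−(z+ατ)²/(4a²w)) dw ] dτ. Then u solves the classical boundary value problem: (i) ∂u/∂t(r,z,t) = a² ∂²u/∂z²(r,z,t) − λ ∂u/∂z(r,z,t) for all r, z, t > 0; (ii) ∂u/∂t(r,0,t) = ∂²u/∂r²(r,0,t) + ((1−2ν)/r) ∂u/∂r(r,0,t) + α ∂u/∂z(r,0,t) for all r, t > 0; (iii) u(r,z,t) → A·h(t) as (r,z) → (0,0) for each t > 0; (iv) u(r,z,t) → 0 as r² + z² → ∞ for each t > 0; (v) u(r,z,t) → 0 as t → 0⁺ for all r, z > 0. -/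
open MeasureTheory Real Filter Set

open scoped Topology

/-!
The inner integral, multiplied by the exponential weight, is the value at `x = z + α τ`,
`s = t - τ` of the layer potential `V` on the half-line `x > 0`: it solves
`V_s = a² V_xx - λ V_x`, vanishes for `s ≤ 0` and has boundary values proportional to `h`. So `u`
averages `V` along the rays `τ ↦ (z + α τ, t - τ)` against `τ ^ (-1 - ν) exp (-r² / (4 τ))`.
Differentiation in `z` and `t` passes to `V`, which gives the heat equation. Along a ray
`d/dτ = α ∂_x - ∂_s`, so integrating by parts trades `∂_t - α ∂_z` for the `τ`-derivative of the
kernel, which the radial operator in `r` produces as well. The derivatives of `V` blow up at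
`x = 0` at most like a power of `x⁻¹`, which the kernel absorbs on the rays from `z = 0`. As
`(r, z) → 0` the normalised kernel concentrates at `τ = 0`; the limits with value `0` follow from
Gaussian bounds.
-/

section Partials

/-- `f` is (Fréchet) differentiable at `(x, s)` with partial derivatives `fx` and `fs`. -/
def HasPartialsAt (f : ℝ → ℝ → ℝ) (fx fs x s : ℝ) : Prop :=
  HasFDerivAt (fun p : ℝ × ℝ => f p.1 p.2)
    (fx • ContinuousLinearMap.fst ℝ ℝ ℝ + fs • ContinuousLinearMap.snd ℝ ℝ ℝ) (x, s)

variable {f : ℝ → ℝ → ℝ} {fx fs x s : ℝ}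

lemma norm_smul_fst_add_smul_snd_le (p q : ℝ) :
    ‖p • ContinuousLinearMap.fst ℝ ℝ ℝ + q • ContinuousLinearMap.snd ℝ ℝ ℝ‖ ≤ |p| + |q| := by
  refine (norm_add_le _ _).trans (add_le_add ?_ ?_) <;> rw [norm_smul, Real.norm_eq_abs]
  · exact mul_le_of_le_one_right (abs_nonneg p) (ContinuousLinearMap.norm_fst_le ℝ ℝ ℝ)
  · exact mul_le_of_le_one_right (abs_nonneg q) (ContinuousLinearMap.norm_snd_le ℝ ℝ ℝ)

lemma HasPartialsAt.comp_hasDerivAt {X S : ℝ → ℝ} {X' S' τ : ℝ}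
    (hf : HasPartialsAt f fx fs (X τ) (S τ)) (hX : HasDerivAt X X' τ) (hS : HasDerivAt S S' τ) :
    HasDerivAt (fun τ => f (X τ) (S τ)) (fx * X' + fs * S') τ :=
  (HasFDerivAt.comp_hasDerivAt (f := fun τ => (X τ, S τ)) τ hf (hX.prodMk hS)).congr_deriv
    (by simp)

lemma HasPartialsAt.hasDerivAt_fst (hf : HasPartialsAt f fx fs x s) :
    HasDerivAt (fun y => f y s) fx x := by
  simpa using hf.comp_hasDerivAt (X := id) (S := fun _ => s) (hasDerivAt_id x)
    (hasDerivAt_const x s)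

lemma HasPartialsAt.hasDerivAt_snd (hf : HasPartialsAt f fx fs x s) :
    HasDerivAt (fun y => f x y) fs s := by
  simpa using hf.comp_hasDerivAt (X := fun _ => x) (S := id) (hasDerivAt_const s x)
    (hasDerivAt_id s)

end Partials

section Kernel

/-- The kernel `w ↦ w ^ (-m) * exp (-c / w)` on `(0, ∞)`, extended by zero. Up to constants it is
the heat-type kernel in both integrals of the solution formula, with `m = 1 + ν` and `m = 3 / 2`. -/
noncomputable def expInvKernel (m c w : ℝ) : ℝ := if 0 < w then w ^ (-m) * exp (-c / w) else 0

variable {m c w : ℝ}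

lemma expInvKernel_of_pos (m c : ℝ) (hw : 0 < w) :
    expInvKernel m c w = w ^ (-m) * exp (-c / w) := if_pos hw

lemma expInvKernel_of_nonpos (m c : ℝ) (hw : w ≤ 0) : expInvKernel m c w = 0 := if_neg hw.not_gt

lemma expInvKernel_nonneg (m c w : ℝ) : 0 ≤ expInvKernel m c w := by
  unfold expInvKernel
  split_ifs with hw
  · positivity
  · exact le_rfl

lemma measurable_expInvKernel (m : ℝ) : Measurable fun p : ℝ × ℝ => expInvKernel m p.1 p.2 :=
  Measurable.ite (measurableSet_lt measurable_const measurable_snd) (by fun_prop) measurable_const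

lemma expInvKernel_eq_pow_mul (m c : ℝ) (n : ℕ) (w : ℝ) :
    expInvKernel m c w = w ^ n * expInvKernel (m + n) c w := by
  rcases le_or_gt w 0 with hw | hw
  · simp only [expInvKernel_of_nonpos _ _ hw, mul_zero]
  · rw [expInvKernel_of_pos _ _ hw, expInvKernel_of_pos _ _ hw, neg_add, rpow_add hw,
      rpow_neg hw.le (n : ℝ), rpow_natCast]
    field_simp

lemma expInvKernel_anti (m w : ℝ) {c c' : ℝ} (h : c ≤ c') :
    expInvKernel m c' w ≤ expInvKernel m c w := by
  unfold expInvKernel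
  split_ifs with hw
  · gcongr
  · exact le_rfl

lemma rpow_le_mul_exp {m q : ℝ} (hm : 0 < m) (hq : 0 ≤ q) : q ^ m ≤ m ^ m * exp q := by
  have hle : q ≤ m * exp (q / m) := by
    rw [← div_le_iff₀' hm]
    linarith [add_one_le_exp (q / m)]
  calc q ^ m ≤ (m * exp (q / m)) ^ m := by gcongr
    _ = m ^ m * exp q := by
      rw [mul_rpow hm.le (exp_pos _).le, ← exp_mul, div_mul_cancel₀ _ hm.ne']

lemma expInvKernel_le (hm : 0 < m) (hc : 0 < c) (w : ℝ) :
    expInvKernel m c w ≤ m ^ m * c ^ (-m) := by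
  rcases le_or_gt w 0 with hw | hw
  · rw [expInvKernel_of_nonpos _ _ hw]
    positivity
  calc expInvKernel m c w = (c / w) ^ m * exp (-(c / w)) * c ^ (-m) := by
        rw [expInvKernel_of_pos _ _ hw, div_rpow hc.le hw.le, rpow_neg hw.le, rpow_neg hc.le,
          neg_div]
        field_simp
    _ ≤ m ^ m * exp (c / w) * exp (-(c / w)) * c ^ (-m) := by
        gcongr
        exact rpow_le_mul_exp hm (by positivity)
    _ = m ^ m * c ^ (-m) := by rw [mul_assoc (m ^ m), ← exp_add, add_neg_cancel, exp_zero, mul_one]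

lemma expInvKernel_le_exp_mul (m : ℝ) {S : ℝ} (hc : 0 < c) (hw : w ≤ S) :
    expInvKernel m c w ≤ exp (-c / (2 * S)) * expInvKernel m (c / 2) w := by
  rcases le_or_gt w 0 with h0 | h0
  · simp only [expInvKernel_of_nonpos _ _ h0, mul_zero, le_refl]
  rw [expInvKernel_of_pos _ _ h0, expInvKernel_of_pos _ _ h0, mul_left_comm, ← exp_add]
  have hsplit : -c / w = -(c / (2 * w)) + -(c / 2) / w := by field_simp; ring
  have hmono : c / (2 * S) ≤ c / (2 * w) := by gcongr
  gcongr
  rw [hsplit, neg_div (2 * S) c]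
  linarith

lemma hasPartialsAt_expInvKernel_of_pos (m c : ℝ) (hw : 0 < w) :
    HasPartialsAt (expInvKernel m) (-expInvKernel (m + 1) c w)
      (-m * expInvKernel (m + 1) c w + c * expInvKernel (m + 2) c w) c w := by
  have hev : (fun p : ℝ × ℝ => expInvKernel m p.1 p.2) =ᶠ[𝓝 (c, w)]
      fun p => p.2 ^ (-m) * exp (-p.1 * p.2⁻¹) := by
    filter_upwards [continuous_snd.continuousAt.eventually (lt_mem_nhds hw)] with p hp
    rw [expInvKernel_of_pos _ _ hp, div_eq_mul_inv]
  have hfst : HasFDerivAt (fun p : ℝ × ℝ => p.1) (ContinuousLinearMap.fst ℝ ℝ ℝ) (c, w) :=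
    hasFDerivAt_fst
  have hsnd : HasFDerivAt (fun p : ℝ × ℝ => p.2) (ContinuousLinearMap.snd ℝ ℝ ℝ) (c, w) :=
    hasFDerivAt_snd
  have hinv : HasFDerivAt (fun p : ℝ × ℝ => p.2⁻¹) _ (c, w) :=
    (hasDerivAt_inv hw.ne').comp_hasFDerivAt (c, w) hsnd
  have h₁ : w ^ (-m - 1) = w ^ (-m) * w⁻¹ := by rw [rpow_sub_one hw.ne', div_eq_mul_inv]
  have h₂ : w ^ (-(m + 1)) = w ^ (-m) * w⁻¹ := by rw [neg_add, ← sub_eq_add_neg, h₁]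
  have h₃ : w ^ (-(m + 2)) = w ^ (-m) * w⁻¹ ^ 2 := by
    rw [neg_add, rpow_add hw, rpow_neg hw.le 2, inv_pow, rpow_two]
  refine HasFDerivAt.congr_of_eventuallyEq (HasFDerivAt.congr_fderiv
    ((hsnd.rpow_const (p := -m) (Or.inl hw.ne')).mul (hfst.neg.mul hinv).exp) ?_) hev
  rw [expInvKernel_of_pos _ _ hw, expInvKernel_of_pos _ _ hw, h₂, h₃]
  ext
  · simp [div_eq_mul_inv]
    ring
  · simp [div_eq_mul_inv, h₁]
    ring

lemma hasPartialsAt_expInvKernel_zero (hm : 0 < m) (hc : 0 < c) :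
    HasPartialsAt (expInvKernel m) 0 0 c 0 := by
  -- Near `(c, 0)` the kernel is at most a constant times `w ^ 2`.
  have hO : (fun p : ℝ × ℝ => expInvKernel m p.1 p.2) =O[𝓝 (c, 0)]
      fun p : ℝ × ℝ => ‖p - (c, 0)‖ ^ 2 := by
    refine .of_bound ((m + 2) ^ (m + 2) * (c / 2) ^ (-(m + 2))) ?_
    filter_upwards [continuous_fst.continuousAt.eventually
      (lt_mem_nhds (show c / 2 < (c, (0 : ℝ)).1 from half_lt_self hc))] with p hp
    have hsq : p.2 ^ 2 ≤ ‖p - (c, 0)‖ ^ 2 := by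
      have hle := norm_snd_le (p - (c, 0))
      simp only [Prod.snd_sub, sub_zero, Real.norm_eq_abs] at hle
      rw [← sq_abs]
      gcongr
    rw [Real.norm_of_nonneg (expInvKernel_nonneg _ _ _), Real.norm_of_nonneg (by positivity),
      expInvKernel_eq_pow_mul m p.1 2, mul_comm]
    gcongr
    exact (expInvKernel_anti _ _ hp.le).trans (expInvKernel_le (by positivity) (half_pos hc) _)
  simpa [HasPartialsAt] using hO.hasFDerivAt one_lt_two

lemma hasPartialsAt_expInvKernel (hm : 0 < m) (hc : 0 < c) (w : ℝ) :
    HasPartialsAt (expInvKernel m) (-expInvKernel (m + 1) c w)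
      (-m * expInvKernel (m + 1) c w + c * expInvKernel (m + 2) c w) c w := by
  rcases lt_trichotomy w 0 with hw | rfl | hw
  · have hev : (fun p : ℝ × ℝ => expInvKernel m p.1 p.2) =ᶠ[𝓝 (c, w)] fun _ => 0 := by
      filter_upwards [continuous_snd.continuousAt.eventually (gt_mem_nhds hw)] with p hp
      exact expInvKernel_of_nonpos _ _ (le_of_lt hp)
    simpa [HasPartialsAt, expInvKernel_of_nonpos _ _ hw.le] using
      (hasFDerivAt_const (0 : ℝ) (c, w)).congr_of_eventuallyEq hev
  · simpa [expInvKernel_of_nonpos _ _ le_rfl] using hasPartialsAt_expInvKernel_zero hm hc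
  · exact hasPartialsAt_expInvKernel_of_pos m c hw

end Kernel

section KernelConv

/-- The convolution `∫ v, expInvKernel m c (s - v) * g v` of the kernel with a density `g`. -/
noncomputable def kernelConv (m : ℝ) (g : ℝ → ℝ) (c s : ℝ) : ℝ :=
  ∫ v, expInvKernel m c (s - v) * g v

variable {m c : ℝ} {g : ℝ → ℝ}

lemma measurable_expInvKernel_comp (m c : ℝ) {φ : ℝ → ℝ} (hφ : Measurable φ) :
    Measurable fun v => expInvKernel m c (φ v) :=
  (measurable_expInvKernel m).comp (measurable_const.prodMk hφ)

lemma measurable_kernelConv (m : ℝ) (hg : Measurable g) :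
    Measurable fun p : ℝ × ℝ => kernelConv m g p.1 p.2 := by
  have hmeas : Measurable fun q : (ℝ × ℝ) × ℝ => expInvKernel m q.1.1 (q.1.2 - q.2) * g q.2 :=
    ((measurable_expInvKernel m).comp (f := fun q : (ℝ × ℝ) × ℝ => (q.1.1, q.1.2 - q.2))
      (by fun_prop)).mul (by fun_prop)
  exact (hmeas.stronglyMeasurable.integral_prod_right' (ν := volume)).measurable

lemma kernelConv_eq_zero (m c : ℝ) {s : ℝ} (hg : ∀ v ≤ 0, g v = 0) (hs : s ≤ 0) :
    kernelConv m g c s = 0 :=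
  integral_eq_zero_of_ae <| .of_forall fun v => by
    rcases le_or_gt v 0 with hv | hv
    · simp [hg v hv]
    · simp [expInvKernel_of_nonpos m c (by linarith : s - v ≤ 0)]

lemma norm_expInvKernel_mul_le (hm : 0 < m) (hc : 0 < c) (w y : ℝ) :
    ‖expInvKernel m c w * y‖ ≤ m ^ m * c ^ (-m) * ‖y‖ := by
  rw [norm_mul, Real.norm_of_nonneg (expInvKernel_nonneg _ _ _)]
  gcongr
  exact expInvKernel_le hm hc w

lemma abs_kernelConv_le (hm : 0 < m) (hc : 0 < c) (hg : Integrable g) (s : ℝ) :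
    |kernelConv m g c s| ≤ m ^ m * (∫ v, ‖g v‖) * c ^ (-m) := by
  calc |kernelConv m g c s| ≤ ∫ v, m ^ m * c ^ (-m) * ‖g v‖ :=
        norm_integral_le_of_norm_le (hg.norm.const_mul _)
          (.of_forall fun v => norm_expInvKernel_mul_le hm hc (s - v) (g v))
    _ = m ^ m * (∫ v, ‖g v‖) * c ^ (-m) := by rw [integral_const_mul]; ring

lemma integrable_expInvKernel_sub_mul (hm : 0 < m) (hc : 0 < c) (hg : Integrable g) (s : ℝ) :
    Integrable fun v => expInvKernel m c (s - v) * g v := by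
  have hmeas : Measurable fun v => expInvKernel m c (s - v) :=
    measurable_expInvKernel_comp m c (by fun_prop)
  exact (hg.norm.const_mul (m ^ m * c ^ (-m))).mono'
    (hmeas.aestronglyMeasurable.mul hg.aestronglyMeasurable)
    (.of_forall fun v => norm_expInvKernel_mul_le hm hc (s - v) (g v))

lemma HasPartialsAt.comp_sub_mul_const {f : ℝ → ℝ → ℝ} {fx fs x s v : ℝ}
    (hf : HasPartialsAt f fx fs x (s - v)) (y : ℝ) :
    HasFDerivAt (fun p : ℝ × ℝ => f p.1 (p.2 - v) * y)
      (y • (fx • ContinuousLinearMap.fst ℝ ℝ ℝ + fs • ContinuousLinearMap.snd ℝ ℝ ℝ)) (x, s) := by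
  have hshift : HasFDerivAt (fun p : ℝ × ℝ => (p.1, p.2 - v))
      (ContinuousLinearMap.id ℝ (ℝ × ℝ)) (x, s) :=
    ((hasFDerivAt_id (x, s)).sub_const ((0 : ℝ), v)).congr_of_eventuallyEq
      (.of_forall fun p => by ext <;> simp)
  exact (HasFDerivAt.comp (f := fun p : ℝ × ℝ => (p.1, p.2 - v)) (x, s) hf hshift).mul_const y

/-- The derivative of the kernel `expInvKernel m` at `(c, w)`, as a linear form. -/
noncomputable def expInvKernelFDeriv (m c w : ℝ) : ℝ × ℝ →L[ℝ] ℝ :=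
  (-expInvKernel (m + 1) c w) • ContinuousLinearMap.fst ℝ ℝ ℝ +
    (-m * expInvKernel (m + 1) c w + c * expInvKernel (m + 2) c w) •
      ContinuousLinearMap.snd ℝ ℝ ℝ

lemma exists_norm_expInvKernelFDeriv_le (hm : 0 < m) (hc : 0 < c) :
    ∃ B, ∀ c' ∈ Ioo (c / 2) (2 * c), ∀ w, ‖expInvKernelFDeriv m c' w‖ ≤ B := by
  refine ⟨(1 + m) * ((m + 1) ^ (m + 1) * (c / 2) ^ (-(m + 1))) +
    2 * c * ((m + 2) ^ (m + 2) * (c / 2) ^ (-(m + 2))), fun c' hc' w => ?_⟩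
  have hbound (n : ℝ) (hn : 0 < n) : expInvKernel n c' w ≤ n ^ n * (c / 2) ^ (-n) :=
    (expInvKernel_anti n w hc'.1.le).trans (expInvKernel_le hn (half_pos hc) w)
  have h₁ := hbound (m + 1) (by positivity)
  have h₂ := hbound (m + 2) (by positivity)
  have hnn₁ := expInvKernel_nonneg (m + 1) c' w
  have hnn₂ := expInvKernel_nonneg (m + 2) c' w
  have hc0 : 0 < c' := (half_pos hc).trans hc'.1
  calc ‖expInvKernelFDeriv m c' w‖
      ≤ expInvKernel (m + 1) c' w +
          (m * expInvKernel (m + 1) c' w + c' * expInvKernel (m + 2) c' w) := by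
        refine (norm_smul_fst_add_smul_snd_le _ _).trans ?_
        rw [abs_neg, abs_of_nonneg hnn₁]
        gcongr
        refine (abs_add_le _ _).trans_eq ?_
        rw [neg_mul, abs_neg, abs_of_nonneg (by positivity), abs_of_nonneg (by positivity)]
    _ = (1 + m) * expInvKernel (m + 1) c' w + c' * expInvKernel (m + 2) c' w := by ring
    _ ≤ _ := by
        gcongr
        exact hc'.2.le

lemma stronglyMeasurable_expInvKernelFDeriv_sub (m c s : ℝ) :
    StronglyMeasurable fun v => expInvKernelFDeriv m c (s - v) := by
  have hmeas (n : ℝ) : Measurable fun v => expInvKernel n c (s - v) :=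
    measurable_expInvKernel_comp n c (by fun_prop)
  exact ((hmeas _).neg.stronglyMeasurable.smul_const _).add
    ((((hmeas _).const_mul _).add ((hmeas _).const_mul _)).stronglyMeasurable.smul_const _)

lemma integral_smul_expInvKernelFDeriv (hm : 0 < m) (hc : 0 < c) (hg : Integrable g) (s : ℝ) :
    ∫ v, g v • expInvKernelFDeriv m c (s - v) =
      (-kernelConv (m + 1) g c s) • ContinuousLinearMap.fst ℝ ℝ ℝ +
        (-m * kernelConv (m + 1) g c s + c * kernelConv (m + 2) g c s) •
          ContinuousLinearMap.snd ℝ ℝ ℝ := by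
  have h₁ := integrable_expInvKernel_sub_mul (m := m + 1) (by positivity) hc hg s
  have h₂ := integrable_expInvKernel_sub_mul (m := m + 2) (by positivity) hc hg s
  have h₁₂ : Integrable fun v => -m * (expInvKernel (m + 1) c (s - v) * g v) +
      c * (expInvKernel (m + 2) c (s - v) * g v) := (h₁.const_mul (-m)).add (h₂.const_mul c)
  calc ∫ v, g v • expInvKernelFDeriv m c (s - v)
      = ∫ v, ((-(expInvKernel (m + 1) c (s - v) * g v)) • ContinuousLinearMap.fst ℝ ℝ ℝ +
          (-m * (expInvKernel (m + 1) c (s - v) * g v) +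
            c * (expInvKernel (m + 2) c (s - v) * g v)) • ContinuousLinearMap.snd ℝ ℝ ℝ) := by
        congr 1 with v : 1
        rw [expInvKernelFDeriv, smul_add, smul_smul, smul_smul]
        congr 2 <;> ring
    _ = _ := by
        rw [integral_add (h₁.fun_neg.smul_const _) (h₁₂.smul_const _), integral_smul_const,
          integral_smul_const, integral_neg, integral_add (h₁.const_mul _) (h₂.const_mul _),
          integral_const_mul, integral_const_mul]
        rfl

lemma hasPartialsAt_kernelConv (hm : 0 < m) (hc : 0 < c) (hg : Integrable g) (s : ℝ) :
    HasPartialsAt (kernelConv m g) (-kernelConv (m + 1) g c s)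
      (-m * kernelConv (m + 1) g c s + c * kernelConv (m + 2) g c s) c s := by
  have hmeas (c' s' : ℝ) : Measurable fun v => expInvKernel m c' (s' - v) :=
    measurable_expInvKernel_comp m c' (by fun_prop)
  have hU : Prod.fst ⁻¹' Ioo (c / 2) (2 * c) ∈ 𝓝 (c, s) :=
    continuous_fst.continuousAt.preimage_mem_nhds
      (Ioo_mem_nhds (half_lt_self hc) (by linarith))
  obtain ⟨B, hB⟩ := exists_norm_expInvKernelFDeriv_le hm hc
  refine (hasFDerivAt_integral_of_dominated_of_fderiv_le
    (F := fun (p : ℝ × ℝ) v => expInvKernel m p.1 (p.2 - v) * g v)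
    (F' := fun p v => g v • expInvKernelFDeriv m p.1 (p.2 - v)) hU
    (.of_forall fun p => (hmeas _ _).aestronglyMeasurable.mul hg.aestronglyMeasurable)
    (integrable_expInvKernel_sub_mul hm hc hg s)
    (hg.aestronglyMeasurable.smul
      (stronglyMeasurable_expInvKernelFDeriv_sub m c s).aestronglyMeasurable)
    (.of_forall fun v p hp => ?_) (hg.norm.mul_const B) (.of_forall fun v p hp => ?_)).congr_fderiv
    (integral_smul_expInvKernelFDeriv hm hc hg s)
  · rw [norm_smul]
    gcongr
    exact hB p.1 hp _
  · exact (hasPartialsAt_expInvKernel hm ((half_pos hc).trans hp.1) _).comp_sub_mul_const (g v)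

end KernelConv

section GammaSubstitution

variable {ν c : ℝ}

lemma setIntegral_Ioi_comp_const_div {c : ℝ} (hc : 0 < c) (F : ℝ → ℝ) :
    ∫ y in Ioi 0, c / y ^ 2 * F (c / y) = ∫ τ in Ioi 0, F τ := by
  have hinv := integral_comp_rpow_Ioi F (p := -1) (by norm_num)
  have hscale := integral_comp_mul_left_Ioi
    (fun x : ℝ => (|(-1 : ℝ)| * x ^ ((-1 : ℝ) - 1)) • F (x ^ (-1 : ℝ))) 0 (inv_pos.2 hc)
  rw [mul_zero, inv_inv, hinv, smul_eq_mul, ← inv_mul_eq_iff_eq_mul₀ hc.ne',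
    ← integral_const_mul] at hscale
  rw [← hscale]
  refine setIntegral_congr_fun measurableSet_Ioi fun y (hy : 0 < y) => ?_
  have hdiv : (c⁻¹ * y) ^ (-1 : ℝ) = c / y := by
    rw [rpow_neg_one, mul_inv, inv_inv, div_eq_mul_inv]
  have hsq : (c⁻¹ * y) ^ ((-1 : ℝ) - 1) = (c / y) ^ 2 := by
    rw [← hdiv, ← rpow_natCast, ← rpow_mul (by positivity)]
    norm_num
  simp only [abs_neg, abs_one, one_mul, smul_eq_mul, hdiv, hsq]
  field_simp

-- With `τ = c / y` the kernel becomes the Gamma density.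
lemma rpow_mul_integral_expInvKernel_mul (ν : ℝ) (hc : 0 < c) (G : ℝ → ℝ) :
    c ^ ν * ∫ τ, expInvKernel (1 + ν) c τ * G τ =
      ∫ y in Ioi 0, exp (-y) * y ^ (ν - 1) * G (c / y) := by
  have hIoi : ∫ τ in Ioi 0, expInvKernel (1 + ν) c τ * G τ =
      ∫ τ, expInvKernel (1 + ν) c τ * G τ :=
    setIntegral_eq_integral_of_forall_compl_eq_zero fun τ hτ => by
      rw [expInvKernel_of_nonpos _ _ (not_lt.1 hτ), zero_mul]
  rw [← hIoi, ← setIntegral_Ioi_comp_const_div hc, ← integral_const_mul]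
  refine setIntegral_congr_fun measurableSet_Ioi fun y (hy : 0 < y) => ?_
  have hexp : -c / (c / y) = -y := by field_simp
  have hpow : (c / y) ^ (-(1 + ν)) = c⁻¹ * y * ((c ^ ν)⁻¹ * y ^ ν) := by
    rw [neg_add, rpow_add (by positivity), rpow_neg_one, inv_div, div_rpow hc.le hy.le,
      rpow_neg hc.le, rpow_neg hy.le]
    field_simp
  have hcν : c ^ ν ≠ 0 := (rpow_pos_of_pos hc ν).ne'
  simp only [expInvKernel_of_pos _ _ (div_pos hc hy), hexp, hpow, rpow_sub_one hy.ne']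
  field_simp

lemma integral_expInvKernel (hν : 0 < ν) (hc : 0 < c) :
    ∫ τ, expInvKernel (1 + ν) c τ = Gamma ν * c ^ (-ν) := by
  have hsubst := rpow_mul_integral_expInvKernel_mul ν hc fun _ => 1
  simp only [mul_one] at hsubst
  rw [Gamma_eq_integral hν, ← hsubst, rpow_neg hc.le, mul_right_comm,
    mul_inv_cancel₀ (rpow_pos_of_pos hc ν).ne', one_mul]

lemma integrable_expInvKernel (hν : 0 < ν) (hc : 0 < c) : Integrable (expInvKernel (1 + ν) c) := by
  refine .of_integral_ne_zero ?_
  rw [integral_expInvKernel hν hc]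
  have := Gamma_pos_of_pos hν
  positivity

lemma abs_rpow_mul_integral_expInvKernel_mul_le (hν : 0 < ν) (hc : 0 < c) {G : ℝ → ℝ} {D S : ℝ}
    (hD : 0 ≤ D) (hG : ∀ τ, 0 < τ → τ < S → |G τ| ≤ D) (hG0 : ∀ τ, S ≤ τ → G τ = 0) :
    |c ^ ν * ∫ τ, expInvKernel (1 + ν) c τ * G τ| ≤
      2 ^ ν * Gamma ν * D * exp (-c / (2 * S)) := by
  have hbound (τ : ℝ) : ‖expInvKernel (1 + ν) c τ * G τ‖ ≤
      D * exp (-c / (2 * S)) * expInvKernel (1 + ν) (c / 2) τ := by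
    have hnn := expInvKernel_nonneg (1 + ν) (c / 2) τ
    rcases le_or_gt τ 0 with hτ | hτ
    · simp [expInvKernel_of_nonpos _ _ hτ]
    rcases le_or_gt S τ with hS | hS
    · rw [hG0 τ hS, mul_zero, norm_zero]
      positivity
    rw [norm_mul, Real.norm_of_nonneg (expInvKernel_nonneg _ _ _), mul_comm, mul_assoc]
    exact mul_le_mul (hG τ hτ hS) (expInvKernel_le_exp_mul _ hc hS.le)
      (expInvKernel_nonneg _ _ _) hD
  have hint : ‖∫ τ, expInvKernel (1 + ν) c τ * G τ‖ ≤
      D * exp (-c / (2 * S)) * (Gamma ν * (c / 2) ^ (-ν)) := by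
    rw [← integral_expInvKernel hν (half_pos hc), ← integral_const_mul]
    exact norm_integral_le_of_norm_le
      ((integrable_expInvKernel hν (half_pos hc)).const_mul _) (.of_forall hbound)
  have hpow : c ^ ν * (c / 2) ^ (-ν) = 2 ^ ν := by
    rw [rpow_neg (by positivity), div_rpow hc.le zero_le_two]
    field_simp
  calc |c ^ ν * ∫ τ, expInvKernel (1 + ν) c τ * G τ|
      ≤ c ^ ν * (D * exp (-c / (2 * S)) * (Gamma ν * (c / 2) ^ (-ν))) := by
        rw [abs_mul, abs_of_pos (rpow_pos_of_pos hc ν)]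
        gcongr
        exact hint
    _ = 2 ^ ν * Gamma ν * D * exp (-c / (2 * S)) := by rw [← hpow]; ring

-- As `c → 0` the normalised kernel concentrates at `τ = 0`.
lemma tendsto_rpow_mul_integral_expInvKernel_mul (hν : 0 < ν) {ι : Type*} {l : Filter ι}
    [l.IsCountablyGenerated] {c : ι → ℝ} {G : ι → ℝ → ℝ} {M L : ℝ} (hc : ∀ᶠ i in l, 0 < c i)
    (hmeas : ∀ i, Measurable (G i)) (hM : ∀ᶠ i in l, ∀ τ > 0, |G i τ| ≤ M)
    (hlim : ∀ y > 0, Tendsto (fun i => G i (c i / y)) l (𝓝 L)) :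
    Tendsto (fun i => c i ^ ν * ∫ τ, expInvKernel (1 + ν) (c i) τ * G i τ) l
      (𝓝 (Gamma ν * L)) := by
  have hdct : Tendsto (fun i => ∫ y in Ioi 0, exp (-y) * y ^ (ν - 1) * G i (c i / y)) l
      (𝓝 (∫ y in Ioi 0, exp (-y) * y ^ (ν - 1) * L)) := by
    refine tendsto_integral_filter_of_dominated_convergence
      (fun y => exp (-y) * y ^ (ν - 1) * M) (.of_forall fun i => ?_) ?_
      ((GammaIntegral_convergent hν).mul_const M) ?_
    · have := hmeas i
      exact Measurable.aestronglyMeasurable (by fun_prop)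
    · filter_upwards [hc, hM] with i hci hMi
      filter_upwards [ae_restrict_mem measurableSet_Ioi] with y hy
      have hy : 0 < y := hy
      rw [norm_mul, Real.norm_of_nonneg (by positivity : 0 ≤ exp (-y) * y ^ (ν - 1))]
      gcongr
      exact hMi _ (div_pos hci hy)
    · filter_upwards [ae_restrict_mem measurableSet_Ioi] with y hy
      exact (hlim y hy).const_mul _
  rw [integral_mul_const, ← Gamma_eq_integral hν] at hdct
  refine hdct.congr' ?_
  filter_upwards [hc] with i hci
  exact (rpow_mul_integral_expInvKernel_mul ν hci (G i)).symm

end GammaSubstitution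

section CausalProfile

/-- A measurable `f x s` that vanishes for times `s ≤ 0` and, locally uniformly, blows up at most
polynomially as `x → 0⁺`. These are the functions that may be averaged by `kernelAverage`. -/
structure IsCausalProfile (f : ℝ → ℝ → ℝ) : Prop where
  measurable : Measurable fun p : ℝ × ℝ => f p.1 p.2
  eq_zero : ∀ x, ∀ s ≤ 0, f x s = 0
  bound : ∀ X, ∃ (C : ℝ) (N : ℕ), 0 ≤ C ∧
    ∀ x s, 0 < x → x ≤ X → s ≤ X → |f x s| ≤ C * (1 + x⁻¹) ^ N

lemma one_le_one_add_inv {x : ℝ} (hx : 0 < x) : 1 ≤ 1 + x⁻¹ := by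
  linarith [inv_pos.2 hx]

variable {f g : ℝ → ℝ → ℝ}

lemma IsCausalProfile.const_mul (hf : IsCausalProfile f) (p : ℝ) :
    IsCausalProfile fun x s => p * f x s where
  measurable := hf.measurable.const_mul p
  eq_zero x s hs := by rw [hf.eq_zero x s hs, mul_zero]
  bound X := by
    obtain ⟨C, N, hC, hfC⟩ := hf.bound X
    refine ⟨|p| * C, N, by positivity, fun x s hx hxX hsX => ?_⟩
    rw [abs_mul, mul_assoc]
    gcongr
    exact hfC x s hx hxX hsX

lemma IsCausalProfile.add (hf : IsCausalProfile f) (hg : IsCausalProfile g) :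
    IsCausalProfile fun x s => f x s + g x s where
  measurable := hf.measurable.add hg.measurable
  eq_zero x s hs := by rw [hf.eq_zero x s hs, hg.eq_zero x s hs, add_zero]
  bound X := by
    obtain ⟨C, N, hC, hfC⟩ := hf.bound X
    obtain ⟨D, M, hD, hgD⟩ := hg.bound X
    refine ⟨C + D, N + M, by positivity, fun x s hx hxX hsX => ?_⟩
    calc |f x s + g x s| ≤ |f x s| + |g x s| := abs_add_le _ _
      _ ≤ C * (1 + x⁻¹) ^ N + D * (1 + x⁻¹) ^ M :=
          add_le_add (hfC x s hx hxX hsX) (hgD x s hx hxX hsX)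
      _ ≤ C * (1 + x⁻¹) ^ (N + M) + D * (1 + x⁻¹) ^ (N + M) := by
          gcongr <;> first | exact one_le_one_add_inv hx | omega
      _ = (C + D) * (1 + x⁻¹) ^ (N + M) := by ring

lemma exists_abs_sub_le_of_hasDerivAt {f' : ℝ → ℝ → ℝ} (hf' : IsCausalProfile f')
    (hderiv : ∀ x s, 0 < x → HasDerivAt (fun y => f y s) (f' x s) x) {X M : ℝ} (hM : 0 ≤ M)
    (hbdd : ∀ x s, |x| ≤ X → s ≤ X → |f x s| ≤ M) :
    ∃ (C : ℝ) (N : ℕ), 0 ≤ C ∧ ∀ x x₀ s, 0 < x₀ → |x| ≤ X → x₀ ≤ X → s ≤ X →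
      |f x s - f x₀ s| ≤ C * (1 + x₀⁻¹) ^ N * |x - x₀| := by
  obtain ⟨C, N, hC, hf'C⟩ := hf'.bound X
  refine ⟨C * 2 ^ N + 4 * M, N + 1, by positivity, fun x x₀ s hx₀ hx hx₀X hs => ?_⟩
  have hone := one_le_one_add_inv hx₀
  rcases le_or_gt (x₀ / 2) x with hnear | hfar
  · have hLip : ∀ y ∈ Icc (x₀ / 2) X, ‖f' y s‖ ≤ C * 2 ^ N * (1 + x₀⁻¹) ^ N := fun y hy => by
      have hy0 : 0 < y := (half_pos hx₀).trans_le hy.1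
      have hinv : 1 + y⁻¹ ≤ 2 * (1 + x₀⁻¹) := by
        have := inv_anti₀ (half_pos hx₀) hy.1
        rw [inv_div, div_eq_mul_inv] at this
        linarith
      refine (hf'C y s hy0 hy.2 hs).trans ?_
      rw [mul_assoc, ← mul_pow]
      gcongr
    calc |f x s - f x₀ s| ≤ C * 2 ^ N * (1 + x₀⁻¹) ^ N * |x - x₀| :=
          Convex.norm_image_sub_le_of_norm_hasDerivWithin_le (f := fun y => f y s)
            (fun y hy => (hderiv y s ((half_pos hx₀).trans_le hy.1)).hasDerivWithinAt) hLip
            (convex_Icc _ _) ⟨by linarith, hx₀X⟩ ⟨hnear, (le_abs_self x).trans hx⟩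
      _ ≤ (C * 2 ^ N + 4 * M) * (1 + x₀⁻¹) ^ (N + 1) * |x - x₀| := by
          gcongr
          · linarith
          · omega
  · have hdist : 1 ≤ 2 * x₀⁻¹ * |x - x₀| := by
      rw [abs_sub_comm, abs_of_pos (by linarith), ← div_eq_mul_inv, div_mul_eq_mul_div,
        one_le_div hx₀]
      linarith
    calc |f x s - f x₀ s| ≤ |f x s| + |f x₀ s| := abs_sub _ _
      _ ≤ M + M := add_le_add (hbdd x s hx hs) (hbdd x₀ s (by rwa [abs_of_pos hx₀]) hs)
      _ ≤ 2 * M * (2 * x₀⁻¹ * |x - x₀|) := by nlinarith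
      _ = 4 * M * x₀⁻¹ * |x - x₀| := by ring
      _ ≤ (C * 2 ^ N + 4 * M) * (1 + x₀⁻¹) ^ (N + 1) * |x - x₀| := by
          gcongr
          · linarith [show 0 ≤ C * 2 ^ N by positivity]
          · exact (le_add_of_nonneg_left zero_le_one).trans (le_self_pow₀ hone N.succ_ne_zero)

end CausalProfile

section KernelAverage

/-- The average of `f` along the ray `τ ↦ (z + α τ, t - τ)` against the kernel. -/
noncomputable def kernelAverage (m c α : ℝ) (f : ℝ → ℝ → ℝ) (z t : ℝ) : ℝ :=
  ∫ τ, expInvKernel m c τ * f (z + α * τ) (t - τ)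

variable {f g : ℝ → ℝ → ℝ} {m c α z : ℝ}

-- The kernel vanishes to infinite order at `τ = 0`, so it absorbs powers of `x⁻¹ ≤ (α τ)⁻¹`.
lemma exists_expInvKernel_mul_one_add_inv_pow_le (hm : 0 < m) (hc : 0 < c) (hα : 0 < α) (R : ℝ)
    (N : ℕ) :
    ∃ B, ∀ τ x, 0 < τ → τ ≤ R → α * τ ≤ x → expInvKernel m c τ * (1 + x⁻¹) ^ N ≤ B := by
  refine ⟨(R + α⁻¹) ^ N * ((m + N) ^ (m + N) * c ^ (-(m + N))), fun τ x hτ hτR hx => ?_⟩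
  have hατ : 0 < α * τ := by positivity
  have hinv : 1 + x⁻¹ ≤ (R + α⁻¹) * τ⁻¹ := by
    have hx' : x⁻¹ ≤ α⁻¹ * τ⁻¹ := by
      rw [← mul_inv]
      exact inv_anti₀ hατ hx
    have hR : 1 ≤ R * τ⁻¹ := by rwa [← div_eq_mul_inv, one_le_div hτ]
    linarith
  have hx0 : 0 < x := hατ.trans_le hx
  have hR0 : 0 < R := hτ.trans_le hτR
  calc expInvKernel m c τ * (1 + x⁻¹) ^ N
      ≤ τ ^ N * expInvKernel (m + N) c τ * ((R + α⁻¹) * τ⁻¹) ^ N := by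
        rw [← expInvKernel_eq_pow_mul]
        gcongr
        exact expInvKernel_nonneg _ _ _
    _ = (R + α⁻¹) ^ N * expInvKernel (m + N) c τ := by
        rw [mul_pow, inv_pow]
        field_simp
    _ ≤ _ := by
        gcongr
        exact expInvKernel_le (by positivity) hc τ

lemma IsCausalProfile.exists_norm_expInvKernel_mul_le (hf : IsCausalProfile f) (hm : 0 < m)
    (hc : 0 < c) (hα : 0 < α) (R : ℝ) :
    ∃ B, ∀ z t τ, 0 ≤ z → z ≤ R → t ≤ R →
      ‖expInvKernel m c τ * f (z + α * τ) (t - τ)‖ ≤ (Ioc 0 R).indicator (fun _ => B) τ := by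
  obtain ⟨C, N, hC, hfC⟩ := hf.bound (R + α * R)
  obtain ⟨B, hB⟩ := exists_expInvKernel_mul_one_add_inv_pow_le hm hc hα R N
  refine ⟨C * B, fun z t τ hz hzR htR => ?_⟩
  by_cases hτ : τ ∈ Ioc 0 R
  · have hατ : 0 < α * τ := mul_pos hα hτ.1
    have hατR : α * τ ≤ α * R := by gcongr; exact hτ.2
    rw [indicator_of_mem hτ, norm_mul, Real.norm_of_nonneg (expInvKernel_nonneg _ _ _)]
    calc expInvKernel m c τ * ‖f (z + α * τ) (t - τ)‖
        ≤ expInvKernel m c τ * (C * (1 + (z + α * τ)⁻¹) ^ N) := by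
          gcongr
          · exact expInvKernel_nonneg _ _ _
          · exact hfC _ _ (by positivity) (by linarith) (by linarith [hτ.1])
      _ = C * (expInvKernel m c τ * (1 + (z + α * τ)⁻¹) ^ N) := by ring
      _ ≤ C * B := by
          gcongr
          exact hB τ _ hτ.1 hτ.2 (by linarith)
  · rw [indicator_of_notMem hτ]
    rcases le_or_gt τ 0 with h0 | h0
    · simp [expInvKernel_of_nonpos _ _ h0]
    · have hR : R < τ := lt_of_not_ge fun hle => hτ ⟨h0, hle⟩
      simp [hf.eq_zero _ (t - τ) (by linarith)]

lemma integrable_indicator_Ioc_const (R B : ℝ) :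
    Integrable ((Ioc 0 R).indicator fun _ => B) :=
  (integrableOn_const (by simp)).integrable_indicator measurableSet_Ioc

lemma IsCausalProfile.aestronglyMeasurable_expInvKernel_mul (hf : IsCausalProfile f)
    (m c α z t : ℝ) :
    AEStronglyMeasurable fun τ => expInvKernel m c τ * f (z + α * τ) (t - τ) :=
  ((measurable_expInvKernel_comp m c measurable_id).mul
    (hf.measurable.comp (f := fun τ => (z + α * τ, t - τ)) (by fun_prop))).aestronglyMeasurable

lemma IsCausalProfile.integrable_expInvKernel_mul (hf : IsCausalProfile f) (hm : 0 < m)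
    (hc : 0 < c) (hα : 0 < α) (hz : 0 ≤ z) (t : ℝ) :
    Integrable fun τ => expInvKernel m c τ * f (z + α * τ) (t - τ) := by
  obtain ⟨B, hB⟩ := hf.exists_norm_expInvKernel_mul_le hm hc hα (max z t)
  exact (integrable_indicator_Ioc_const _ B).mono'
    (hf.aestronglyMeasurable_expInvKernel_mul m c α z t)
    (.of_forall fun τ => hB z t τ hz (le_max_left z t) (le_max_right z t))

lemma kernelAverage_const_mul_add_const_mul (hf : IsCausalProfile f) (hg : IsCausalProfile g)
    (hm : 0 < m) (hc : 0 < c) (hα : 0 < α) (hz : 0 ≤ z) (p q t : ℝ) :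
    kernelAverage m c α (fun x s => p * f x s + q * g x s) z t =
      p * kernelAverage m c α f z t + q * kernelAverage m c α g z t := by
  unfold kernelAverage
  rw [← integral_const_mul, ← integral_const_mul,
    ← integral_add ((hf.integrable_expInvKernel_mul hm hc hα hz t).const_mul p)
      ((hg.integrable_expInvKernel_mul hm hc hα hz t).const_mul q)]
  congr 1 with τ
  ring

lemma hasDerivAt_kernelAverage_space {f' : ℝ → ℝ → ℝ} (hf : IsCausalProfile f)
    (hf' : IsCausalProfile f') (hderiv : ∀ x s, 0 < x → HasDerivAt (fun y => f y s) (f' x s) x)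
    (hm : 0 < m) (hc : 0 < c) (hα : 0 < α) (hz : 0 < z) (t : ℝ) :
    HasDerivAt (fun z => kernelAverage m c α f z t) (kernelAverage m c α f' z t) z := by
  obtain ⟨B, hB⟩ := hf'.exists_norm_expInvKernel_mul_le hm hc hα (max (2 * z) t)
  refine (hasDerivAt_integral_of_dominated_loc_of_deriv_le
    (F := fun z τ => expInvKernel m c τ * f (z + α * τ) (t - τ))
    (F' := fun z τ => expInvKernel m c τ * f' (z + α * τ) (t - τ))
    (Ioo_mem_nhds hz (by linarith : z < 2 * z))
    (.of_forall fun z' => hf.aestronglyMeasurable_expInvKernel_mul m c α z' t)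
    (hf.integrable_expInvKernel_mul hm hc hα hz.le t)
    (hf'.aestronglyMeasurable_expInvKernel_mul m c α z t)
    (.of_forall fun τ z' hz' =>
      hB z' t τ hz'.1.le (hz'.2.le.trans (le_max_left _ _)) (le_max_right _ _))
    (integrable_indicator_Ioc_const _ B) (.of_forall fun τ z' hz' => ?_)).2
  rcases le_or_gt τ 0 with hτ | hτ
  · simpa [expInvKernel_of_nonpos _ _ hτ] using hasDerivAt_const z' (0 : ℝ)
  · exact ((hderiv _ (t - τ) (add_pos hz'.1 (mul_pos hα hτ))).comp_add_const z'
      (α * τ)).const_mul _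

lemma hasDerivAt_kernelAverage_time {f' : ℝ → ℝ → ℝ} (hf : IsCausalProfile f)
    (hf' : IsCausalProfile f') (hderiv : ∀ x s, 0 < x → HasDerivAt (fun s => f x s) (f' x s) s)
    (hm : 0 < m) (hc : 0 < c) (hα : 0 < α) (hz : 0 ≤ z) (t : ℝ) :
    HasDerivAt (fun t => kernelAverage m c α f z t) (kernelAverage m c α f' z t) t := by
  obtain ⟨B, hB⟩ := hf'.exists_norm_expInvKernel_mul_le hm hc hα (max z (t + 1))
  refine (hasDerivAt_integral_of_dominated_loc_of_deriv_le
    (F := fun t τ => expInvKernel m c τ * f (z + α * τ) (t - τ))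
    (F' := fun t τ => expInvKernel m c τ * f' (z + α * τ) (t - τ))
    (Iio_mem_nhds (lt_add_one t))
    (.of_forall fun t' => hf.aestronglyMeasurable_expInvKernel_mul m c α z t')
    (hf.integrable_expInvKernel_mul hm hc hα hz t)
    (hf'.aestronglyMeasurable_expInvKernel_mul m c α z t)
    (.of_forall fun τ t' ht' =>
      hB z t' τ hz (le_max_left _ _) (ht'.le.trans (le_max_right _ _)))
    (integrable_indicator_Ioc_const _ B) (.of_forall fun τ t' _ => ?_)).2
  rcases le_or_gt τ 0 with hτ | hτ
  · simpa [expInvKernel_of_nonpos _ _ hτ] using hasDerivAt_const t' (0 : ℝ)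
  · exact ((hderiv _ (t' - τ) (add_pos_of_nonneg_of_pos hz (mul_pos hα hτ))).comp_sub_const t'
      τ).const_mul _

lemma hasDerivAt_kernelAverage_param (hf : IsCausalProfile f) (hm : 0 < m) (hc : 0 < c)
    (hα : 0 < α) (hz : 0 ≤ z) (t : ℝ) :
    HasDerivAt (fun c => kernelAverage m c α f z t) (-kernelAverage (m + 1) c α f z t) c := by
  unfold kernelAverage
  rw [← integral_neg]
  refine (hasDerivAt_integral_of_dominated_loc_of_deriv_le
    (F := fun c τ => expInvKernel m c τ * f (z + α * τ) (t - τ))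
    (F' := fun c τ => -(expInvKernel (m + 1) c τ * f (z + α * τ) (t - τ)))
    (Ioi_mem_nhds (half_lt_self hc))
    (.of_forall fun c' => hf.aestronglyMeasurable_expInvKernel_mul m c' α z t)
    (hf.integrable_expInvKernel_mul hm hc hα hz t)
    (hf.aestronglyMeasurable_expInvKernel_mul (m + 1) c α z t).neg
    (.of_forall fun τ c' hc' => ?_)
    (hf.integrable_expInvKernel_mul (m := m + 1) (by positivity) (half_pos hc) hα hz t).norm
    (.of_forall fun τ c' hc' => ?_)).2
  · rw [norm_neg, norm_mul, norm_mul, Real.norm_of_nonneg (expInvKernel_nonneg _ _ _),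
      Real.norm_of_nonneg (expInvKernel_nonneg _ _ _)]
    gcongr
    exact expInvKernel_anti _ _ (le_of_lt hc')
  · rw [← neg_mul]
    exact (hasPartialsAt_expInvKernel hm ((half_pos hc).trans hc') τ).hasDerivAt_fst.mul_const _

lemma hasDerivAt_integral_of_dominated_loc_of_lip_at {μ : Measure ℝ} {F : ℝ → ℝ → ℝ}
    {F' bound : ℝ → ℝ} {x₀ : ℝ} {s : Set ℝ} (hs : s ∈ 𝓝 x₀)
    (hF_meas : ∀ x ∈ s, AEStronglyMeasurable (F x) μ) (hF_int : Integrable (F x₀) μ)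
    (hF'_meas : AEStronglyMeasurable F' μ)
    (h_lip : ∀ᵐ a ∂μ, ∀ x ∈ s, ‖F x a - F x₀ a‖ ≤ bound a * ‖x - x₀‖)
    (bound_integrable : Integrable bound μ)
    (h_diff : ∀ᵐ a ∂μ, HasDerivAt (fun x => F x a) (F' a) x₀) :
    HasDerivAt (fun x => ∫ a, F x a ∂μ) (∫ a, F' a ∂μ) x₀ := by
  have hmeas : AEStronglyMeasurable (fun a => ContinuousLinearMap.toSpanSingleton ℝ (F' a)) μ :=
    (ContinuousLinearMap.toSpanSingletonCLE (𝕜 := ℝ)).continuous.comp_aestronglyMeasurable hF'_meas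
  obtain ⟨hint, hder⟩ := hasFDerivAt_integral_of_dominated_loc_of_lip' hs hF_meas hF_int hmeas
    h_lip bound_integrable (h_diff.mono fun a ha => ha.hasFDerivAt)
  refine hasDerivAt_iff_hasFDerivAt.2 (hder.congr_fderiv ?_)
  ext
  simp [ContinuousLinearMap.integral_apply hint]

lemma hasDerivAt_kernelAverage_space_zero {f' : ℝ → ℝ → ℝ} (hf : IsCausalProfile f)
    (hf' : IsCausalProfile f') (hderiv : ∀ x s, 0 < x → HasDerivAt (fun y => f y s) (f' x s) x)
    (hbdd : ∀ X, ∃ M, 0 ≤ M ∧ ∀ x s, |x| ≤ X → s ≤ X → |f x s| ≤ M)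
    (hm : 0 < m) (hc : 0 < c) (hα : 0 < α) (t : ℝ) :
    HasDerivAt (fun z => kernelAverage m c α f z t) (kernelAverage m c α f' 0 t) 0 := by
  obtain ⟨M, hM, hfM⟩ := hbdd (1 + α * |t| + |t|)
  obtain ⟨C, N, hC, hLip⟩ := exists_abs_sub_le_of_hasDerivAt hf' hderiv hM hfM
  obtain ⟨B, hB⟩ := exists_expInvKernel_mul_one_add_inv_pow_le hm hc hα |t| N
  refine hasDerivAt_integral_of_dominated_loc_of_lip_at
    (bound := (Ioc 0 |t|).indicator fun _ => C * B) (Metric.ball_mem_nhds 0 one_pos)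
    (fun z _ => hf.aestronglyMeasurable_expInvKernel_mul m c α z t)
    (hf.integrable_expInvKernel_mul hm hc hα le_rfl t)
    (hf'.aestronglyMeasurable_expInvKernel_mul m c α 0 t) (.of_forall fun τ z hz => ?_)
    (integrable_indicator_Ioc_const _ _) (.of_forall fun τ => ?_)
  · by_cases hτ : τ ∈ Ioc 0 |t|
    · have hατ : 0 < α * τ := mul_pos hα hτ.1
      have hατt : α * τ ≤ α * |t| := by gcongr; exact hτ.2
      have hz1 : |z| < 1 := by simpa using hz
      have htri := abs_add_le z (α * τ)
      rw [abs_of_pos hατ] at htri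
      have hknn := expInvKernel_nonneg m c τ
      rw [indicator_of_mem hτ, ← mul_sub, norm_mul, Real.norm_of_nonneg hknn, zero_add, sub_zero]
      calc expInvKernel m c τ * ‖f (z + α * τ) (t - τ) - f (α * τ) (t - τ)‖
          ≤ expInvKernel m c τ * (C * (1 + (α * τ)⁻¹) ^ N * |z|) := by
            gcongr
            simpa using hLip (z + α * τ) (α * τ) (t - τ) hατ (by linarith [abs_nonneg t])
              (by linarith [abs_nonneg t]) (by nlinarith [le_abs_self t, abs_nonneg t, hτ.1])
        _ = C * (expInvKernel m c τ * (1 + (α * τ)⁻¹) ^ N) * |z| := by ring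
        _ ≤ C * B * ‖z‖ := by
            rw [Real.norm_eq_abs]
            gcongr
            exact hB τ _ hτ.1 hτ.2 le_rfl
    · rw [indicator_of_notMem hτ]
      rcases le_or_gt τ 0 with h0 | h0
      · simp [expInvKernel_of_nonpos _ _ h0]
      · have hτt : |t| < τ := lt_of_not_ge fun hle => hτ ⟨h0, hle⟩
        simp [hf.eq_zero _ (t - τ) (by linarith [le_abs_self t])]
  · rcases le_or_gt τ 0 with hτ | hτ
    · simpa [expInvKernel_of_nonpos _ _ hτ] using hasDerivAt_const (0 : ℝ) (0 : ℝ)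
    · exact ((hderiv _ (t - τ) (by positivity)).comp_add_const 0 (α * τ)).const_mul _

lemma hasDerivAt_expInvKernel_mul_ray {fx fs : ℝ → ℝ → ℝ} (hf : IsCausalProfile f)
    (hpartials : ∀ x s, 0 < x → HasPartialsAt f (fx x s) (fs x s) x s)
    (hm : 0 < m) (hc : 0 < c) (hα : 0 < α) (hz : 0 ≤ z) (t τ : ℝ) :
    HasDerivAt (fun τ => expInvKernel m c τ * f (z + α * τ) (t - τ))
      ((-m * expInvKernel (m + 1) c τ + c * expInvKernel (m + 2) c τ) * f (z + α * τ) (t - τ) +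
        expInvKernel m c τ * (fx (z + α * τ) (t - τ) * α + fs (z + α * τ) (t - τ) * -1)) τ := by
  have hkernel := (hasPartialsAt_expInvKernel hm hc τ).hasDerivAt_snd
  rcases lt_trichotomy τ 0 with hτ | rfl | hτ
  · simp only [expInvKernel_of_nonpos _ _ hτ.le, mul_zero, zero_mul, add_zero]
    refine (hasDerivAt_const τ (0 : ℝ)).congr_of_eventuallyEq ?_
    filter_upwards [gt_mem_nhds hτ] with σ hσ
    rw [expInvKernel_of_nonpos _ _ (le_of_lt hσ), zero_mul]
  · -- The kernel of order `m` is `τ ^ 2` times the one of order `m + 2`.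
    obtain ⟨B, hB⟩ := hf.exists_norm_expInvKernel_mul_le (m := m + 2) (by positivity) hc hα
      (max z t)
    simp only [expInvKernel_of_nonpos _ _ le_rfl, mul_zero, zero_mul, add_zero]
    have hO : (fun τ => expInvKernel m c τ * f (z + α * τ) (t - τ)) =O[𝓝 0]
        fun τ => ‖τ - 0‖ ^ 2 := by
      refine .of_bound |B| (.of_forall fun τ => ?_)
      have hle := (hB z t τ hz (le_max_left z t) (le_max_right z t)).trans
        (indicator_le' (g := fun _ => |B|) (fun _ _ => le_abs_self B) (fun _ _ => abs_nonneg B) τ)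
      rw [expInvKernel_eq_pow_mul m c 2, mul_assoc, norm_mul, norm_pow, norm_pow, sub_zero,
        norm_norm, mul_comm]
      gcongr
      exact_mod_cast hle
    exact (hO.hasFDerivAt one_lt_two).hasDerivAt
  · exact hkernel.mul ((hpartials _ _ (add_pos_of_nonneg_of_pos hz
      (mul_pos hα hτ))).comp_hasDerivAt (X := fun τ => z + α * τ) (S := fun τ => t - τ)
      (by simpa using ((hasDerivAt_id τ).const_mul α).const_add z)
      (by simpa using (hasDerivAt_id τ).const_sub t))

-- Integration by parts along the ray; there are no boundary terms.
lemma kernelAverage_ray_identity {fx fs : ℝ → ℝ → ℝ} (hf : IsCausalProfile f)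
    (hfx : IsCausalProfile fx) (hfs : IsCausalProfile fs)
    (hpartials : ∀ x s, 0 < x → HasPartialsAt f (fx x s) (fs x s) x s)
    (hm : 0 < m) (hc : 0 < c) (hα : 0 < α) (hz : 0 ≤ z) (t : ℝ) :
    kernelAverage m c α fs z t = -m * kernelAverage (m + 1) c α f z t +
      c * kernelAverage (m + 2) c α f z t + α * kernelAverage m c α fx z t := by
  have h₁ := (hf.integrable_expInvKernel_mul (m := m + 1) (by positivity) hc hα hz t).const_mul (-m)
  have h₂ := (hf.integrable_expInvKernel_mul (m := m + 2) (by positivity) hc hα hz t).const_mul c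
  have hx := (hfx.integrable_expInvKernel_mul hm hc hα hz t).const_mul α
  have hs := hfs.integrable_expInvKernel_mul hm hc hα hz t
  have hzero := integral_eq_zero_of_hasDerivAt_of_integrable
    (fun τ => (hasDerivAt_expInvKernel_mul_ray hf hpartials hm hc hα hz t τ).congr_deriv
      (show _ = _ + _ + _ - _ by ring)) (((h₁.add h₂).add hx).sub hs)
    (hf.integrable_expInvKernel_mul hm hc hα hz t)
  rw [integral_sub ((h₁.fun_add h₂).fun_add hx) hs, integral_add (h₁.fun_add h₂) hx,
    integral_add h₁ h₂, integral_const_mul, integral_const_mul, integral_const_mul] at hzero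
  exact (sub_eq_zero.1 hzero).symm

end KernelAverage

section LayerPotential

/-- The moments `exp (κ x - η s) x ^ n ∫ v, expInvKernel m (b x²) (s - v) g v`, the class of
functions spanned by the derivatives of `layerPotential`. -/
noncomputable def layerMoment (κ η b : ℝ) (g : ℝ → ℝ) (n : ℕ) (m x s : ℝ) : ℝ :=
  exp (κ * x - η * s) * (x ^ n * kernelConv m g (b * x ^ 2) s)

/-- The exponentially weighted double-layer heat potential with density `g`. With
`κ = λ / (2a²)`, `η = λ² / (4a²)` and `b = 1 / (4a²)` it solves `V_s = a² V_xx - λ V_x`. -/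
noncomputable def layerPotential (κ η b : ℝ) (g : ℝ → ℝ) : ℝ → ℝ → ℝ :=
  layerMoment κ η b g 1 (3 / 2)

variable {κ η b m M : ℝ} {g : ℝ → ℝ} {n : ℕ}

lemma mul_sq_rpow_neg_le {x : ℝ} (hx : 0 < x) (hb : 0 < b) (hm : 0 < m) :
    (b * x ^ 2) ^ (-m) ≤ b ^ (-m) * (1 + x⁻¹) ^ ⌈2 * m⌉₊ := by
  have hone := one_le_one_add_inv hx
  calc (b * x ^ 2) ^ (-m) = b ^ (-m) * x⁻¹ ^ (2 * m) := by
        rw [mul_rpow hb.le (by positivity), inv_rpow hx.le, ← rpow_neg hx.le, ← rpow_natCast x 2,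
          ← rpow_mul hx.le]
        push_cast
        ring_nf
    _ ≤ b ^ (-m) * (1 + x⁻¹) ^ (⌈2 * m⌉₊ : ℝ) := by
        gcongr ?_ * ?_
        refine (rpow_le_rpow (by positivity) (le_add_of_nonneg_left zero_le_one)
          (by positivity)).trans ?_
        exact rpow_le_rpow_of_exponent_le hone (Nat.le_ceil _)
    _ = b ^ (-m) * (1 + x⁻¹) ^ ⌈2 * m⌉₊ := by rw [rpow_natCast]

lemma layerMoment_eq_zero (κ η b : ℝ) (hg0 : ∀ v ≤ 0, g v = 0) (n : ℕ) (m x : ℝ) {s : ℝ}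
    (hs : s ≤ 0) : layerMoment κ η b g n m x s = 0 := by
  rw [layerMoment, kernelConv_eq_zero _ _ hg0 hs, mul_zero, mul_zero]

lemma isCausalProfile_layerMoment (hb : 0 < b) (hg : Measurable g) (hgi : Integrable g)
    (hg0 : ∀ v ≤ 0, g v = 0) (hm : 0 < m) : IsCausalProfile (layerMoment κ η b g n m) where
  measurable := Measurable.mul (by fun_prop) <| Measurable.mul (by fun_prop) <|
    (measurable_kernelConv m hg).comp (f := fun p : ℝ × ℝ => (b * p.1 ^ 2, p.2)) (by fun_prop)
  eq_zero x s hs := layerMoment_eq_zero κ η b hg0 n m x hs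
  bound X := by
    refine ⟨exp (|κ| * |X| + |η| * |X|) * (|X| ^ n * (m ^ m * (∫ v, ‖g v‖) * b ^ (-m))),
      ⌈2 * m⌉₊, by positivity, fun x s hx hxX hsX => ?_⟩
    rcases le_or_gt s 0 with hs | hs
    · rw [layerMoment_eq_zero κ η b hg0 n m x hs, abs_zero]
      positivity
    have habs {y : ℝ} (hy : 0 < y) (hyX : y ≤ X) : |y| ≤ |X| := by
      rw [abs_of_pos hy]
      exact hyX.trans (le_abs_self X)
    have hexp : κ * x - η * s ≤ |κ| * |X| + |η| * |X| := by
      calc κ * x - η * s ≤ |κ * x - η * s| := le_abs_self _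
        _ ≤ |κ * x| + |η * s| := abs_sub _ _
        _ ≤ |κ| * |X| + |η| * |X| := by
            rw [abs_mul, abs_mul]
            gcongr ?_ * ?_ + ?_ * ?_
            exacts [habs hx hxX, habs hs hsX]
    calc |layerMoment κ η b g n m x s|
        = exp (κ * x - η * s) * (|x| ^ n * |kernelConv m g (b * x ^ 2) s|) := by
          rw [layerMoment, abs_mul, abs_mul, abs_pow, abs_exp]
      _ ≤ exp (|κ| * |X| + |η| * |X|) * (|X| ^ n *
            (m ^ m * (∫ v, ‖g v‖) * (b ^ (-m) * (1 + x⁻¹) ^ ⌈2 * m⌉₊))) := by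
          gcongr ?_ * (?_ * ?_)
          · exact exp_le_exp.2 hexp
          · exact pow_le_pow_left₀ (abs_nonneg x) (habs hx hxX) n
          · refine (abs_kernelConv_le hm (by positivity) hgi s).trans ?_
            gcongr
            exact mul_sq_rpow_neg_le hx hb hm
      _ = _ := by ring

lemma hasPartialsAt_layerMoment (hb : 0 < b) (hgi : Integrable g) (hm : 0 < m) {x : ℝ}
    (hx : 0 < x) (s : ℝ) :
    HasPartialsAt (layerMoment κ η b g n m)
      (κ * layerMoment κ η b g n m x s + n * layerMoment κ η b g (n - 1) m x s -
        2 * b * layerMoment κ η b g (n + 1) (m + 1) x s)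
      (-η * layerMoment κ η b g n m x s - m * layerMoment κ η b g n (m + 1) x s +
        b * layerMoment κ η b g (n + 2) (m + 2) x s) x s := by
  have hfst : HasFDerivAt (fun p : ℝ × ℝ => p.1) (ContinuousLinearMap.fst ℝ ℝ ℝ) (x, s) :=
    hasFDerivAt_fst
  have hsnd : HasFDerivAt (fun p : ℝ × ℝ => p.2) (ContinuousLinearMap.snd ℝ ℝ ℝ) (x, s) :=
    hasFDerivAt_snd
  have hconv : HasFDerivAt (fun p : ℝ × ℝ => kernelConv m g (b * p.1 ^ 2) p.2) _ (x, s) :=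
    HasFDerivAt.comp (f := fun p : ℝ × ℝ => (b * p.1 ^ 2, p.2)) (x, s)
      (hasPartialsAt_kernelConv hm (c := b * x ^ 2) (by positivity) hgi s)
      (((hfst.pow 2).const_mul b).prodMk hsnd)
  refine HasFDerivAt.congr_fderiv
    (((hfst.const_mul κ).sub (hsnd.const_mul η)).exp.mul ((hfst.pow n).mul hconv)) ?_
  unfold layerMoment
  ext
  · simp
    ring
  · simp
    ring

lemma layerPotential_eq_zero (κ η b : ℝ) (hg0 : ∀ v ≤ 0, g v = 0) (x : ℝ) {s : ℝ} (hs : s ≤ 0) :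
    layerPotential κ η b g x s = 0 :=
  layerMoment_eq_zero κ η b hg0 _ _ x hs

lemma abs_mul_kernelConv_three_halves (hb : 0 < b) (g : ℝ → ℝ) (x s : ℝ) :
    |x| * kernelConv (3 / 2) g (b * x ^ 2) s = b ^ (-(1 / 2) : ℝ) *
      ((b * x ^ 2) ^ (1 / 2 : ℝ) * ∫ τ, expInvKernel (1 + 1 / 2) (b * x ^ 2) τ * g (s - τ)) := by
  have hreflect : ∫ τ, expInvKernel (3 / 2) (b * x ^ 2) τ * g (s - τ) =
      kernelConv (3 / 2) g (b * x ^ 2) s := by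
    rw [← integral_sub_left_eq_self _ volume s]
    simp only [sub_sub_cancel, kernelConv]
  have hroot : (b * x ^ 2) ^ (1 / 2 : ℝ) = b ^ (1 / 2 : ℝ) * |x| := by
    rw [mul_rpow hb.le (by positivity), ← sqrt_eq_rpow (x ^ 2), sqrt_sq_eq_abs]
  rw [show (1 : ℝ) + 1 / 2 = 3 / 2 by norm_num, hreflect, hroot, rpow_neg hb.le]
  field_simp

lemma abs_layerPotential_le (κ : ℝ) (hη : 0 ≤ η) (hb : 0 < b) (hg0 : ∀ v ≤ 0, g v = 0)
    (hM : 0 ≤ M) (hgM : ∀ v, |g v| ≤ M) (x : ℝ) {s S : ℝ} (hs : s ≤ S) :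
    |layerPotential κ η b g x s| ≤
      b ^ (-(1 / 2) : ℝ) * (2 ^ (1 / 2 : ℝ) * Gamma (1 / 2) * M) *
        exp (κ * x - b * x ^ 2 / (2 * S)) := by
  rcases le_or_gt s 0 with hs0 | hs0
  · rw [layerPotential_eq_zero κ η b hg0 x hs0, abs_zero]
    positivity
  rcases eq_or_ne x 0 with rfl | hx
  · rw [layerPotential, layerMoment, pow_one, zero_mul, mul_zero, abs_zero]
    positivity
  have hdecay := abs_rpow_mul_integral_expInvKernel_mul_le one_half_pos
    (c := b * x ^ 2) (by positivity) (G := fun τ => g (s - τ)) hM (fun τ _ _ => hgM _)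
    (S := S) (fun τ hτ => hg0 _ (by linarith))
  calc |layerPotential κ η b g x s|
      = exp (κ * x - η * s) * |(|x| * kernelConv (3 / 2) g (b * x ^ 2) s)| := by
        rw [layerPotential, layerMoment, abs_mul, abs_mul, abs_mul, abs_exp, pow_one, abs_abs]
    _ ≤ exp (κ * x) * (b ^ (-(1 / 2) : ℝ) *
          (2 ^ (1 / 2 : ℝ) * Gamma (1 / 2) * M * exp (-(b * x ^ 2) / (2 * S)))) := by
        rw [abs_mul_kernelConv_three_halves hb, abs_mul, abs_of_pos (rpow_pos_of_pos hb _)]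
        gcongr
        exact sub_le_self _ (by positivity)
    _ = _ := by
        rw [sub_eq_add_neg, exp_add, neg_div (2 * S)]
        ring

lemma tendsto_layerPotential (κ η : ℝ) (hb : 0 < b) (hg : Measurable g) (hgM : ∀ v, |g v| ≤ M)
    {t : ℝ} (hgt : ContinuousAt g t) :
    Tendsto (fun p : ℝ × ℝ => layerPotential κ η b g p.1 p.2) (𝓝[>] 0 ×ˢ 𝓝 t)
      (𝓝 (exp (-(η * t)) * (b ^ (-(1 / 2) : ℝ) * (Gamma (1 / 2) * g t)))) := by
  have hpos : ∀ᶠ p : ℝ × ℝ in 𝓝[>] 0 ×ˢ 𝓝 t, 0 < p.1 :=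
    tendsto_fst.eventually self_mem_nhdsWithin
  have hx : Tendsto (fun p : ℝ × ℝ => p.1) (𝓝[>] 0 ×ˢ 𝓝 t) (𝓝 0) :=
    tendsto_fst.mono_right nhdsWithin_le_nhds
  have hs : Tendsto (fun p : ℝ × ℝ => p.2) (𝓝[>] 0 ×ˢ 𝓝 t) (𝓝 t) := tendsto_snd
  have hconv := tendsto_rpow_mul_integral_expInvKernel_mul one_half_pos
    (l := 𝓝[>] 0 ×ˢ 𝓝 t) (c := fun p : ℝ × ℝ => b * p.1 ^ 2) (G := fun p τ => g (p.2 - τ))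
    (hpos.mono fun p hp => by positivity) (fun p => hg.comp (by fun_prop))
    (.of_forall fun p τ _ => hgM _) (L := g t) fun y _ => hgt.tendsto.comp <| by
      simpa using hs.sub (((hx.pow 2).const_mul b).div_const y)
  have hexp : Tendsto (fun p : ℝ × ℝ => exp (κ * p.1 - η * p.2)) (𝓝[>] 0 ×ˢ 𝓝 t)
      (𝓝 (exp (-(η * t)))) := by
    simpa using ((hx.const_mul κ).sub (hs.const_mul η)).rexp
  refine (hexp.mul (hconv.const_mul (b ^ (-(1 / 2) : ℝ)))).congr' (hpos.mono fun p hp => ?_)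
  rw [← abs_mul_kernelConv_three_halves hb, abs_of_pos hp]
  simp only [layerPotential, layerMoment, pow_one]

end LayerPotential

section DiffusionProfile

/-- A solution `V` of `V_s = a² V_xx - λ V_x` on `x > 0` that vanishes for `s ≤ 0` and has Gaussian
decay in `x`. Its derivatives `Vx` and `Vxx` may be singular at `x = 0`. -/
structure IsDiffusionProfile (a lam : ℝ) (V Vx Vxx : ℝ → ℝ → ℝ) : Prop where
  causal : IsCausalProfile V
  causal_x : IsCausalProfile Vx
  causal_xx : IsCausalProfile Vxx
  hasPartialsAt : ∀ x s, 0 < x →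
    HasPartialsAt V (Vx x s) (a ^ 2 * Vxx x s - lam * Vx x s) x s
  hasDerivAt_x : ∀ x s, 0 < x → HasDerivAt (fun y => Vx y s) (Vxx x s) x
  decay : ∀ T, ∃ β D, 0 < β ∧ ∀ S ∈ Ioc 0 T, ∀ x, ∀ s ≤ S, |V x s| ≤ D * exp (-(β * x ^ 2 / S))

variable {a lam : ℝ} {V Vx Vxx : ℝ → ℝ → ℝ}

lemma IsDiffusionProfile.causal_time (hV : IsDiffusionProfile a lam V Vx Vxx) :
    IsCausalProfile fun x s => a ^ 2 * Vxx x s - lam * Vx x s := by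
  simpa only [sub_eq_add_neg, neg_mul] using
    (hV.causal_xx.const_mul (a ^ 2)).add (hV.causal_x.const_mul (-lam))

lemma IsDiffusionProfile.exists_abs_le (hV : IsDiffusionProfile a lam V Vx Vxx) (T : ℝ) :
    ∃ M, 0 ≤ M ∧ ∀ x, ∀ s ≤ T, |V x s| ≤ M := by
  obtain ⟨β, D, hβ, hD⟩ := hV.decay (max T 1)
  have hT : 0 < max T 1 := one_pos.trans_le (le_max_right T 1)
  refine ⟨|D|, abs_nonneg D, fun x s hs => ?_⟩
  calc |V x s| ≤ D * exp (-(β * x ^ 2 / max T 1)) :=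
        hD _ ⟨hT, le_rfl⟩ x s (hs.trans (le_max_left T 1))
    _ ≤ |D| * 1 := by
        gcongr
        · exact le_abs_self D
        · exact exp_le_one_iff.2 (neg_nonpos.2 (by positivity))
    _ = |D| := mul_one _

/-- The derivative in `x` of `layerPotential κ η b g`. -/
noncomputable def layerPotentialX (κ η b : ℝ) (g : ℝ → ℝ) (x s : ℝ) : ℝ :=
  κ * layerPotential κ η b g x s + layerMoment κ η b g 0 (3 / 2) x s +
    -2 * b * layerMoment κ η b g 2 (5 / 2) x s

/-- The second derivative in `x` of `layerPotential κ η b g`. -/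
noncomputable def layerPotentialXX (κ η b : ℝ) (g : ℝ → ℝ) (x s : ℝ) : ℝ :=
  κ * layerPotentialX κ η b g x s +
    (κ * layerMoment κ η b g 0 (3 / 2) x s + -2 * b * layerMoment κ η b g 1 (5 / 2) x s) +
    -2 * b * (κ * layerMoment κ η b g 2 (5 / 2) x s + 2 * layerMoment κ η b g 1 (5 / 2) x s +
      -2 * b * layerMoment κ η b g 3 (7 / 2) x s)

variable {κ η b M x : ℝ} {g : ℝ → ℝ}

lemma isCausalProfile_layerPotentialX (hb : 0 < b) (hg : Measurable g) (hgi : Integrable g)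
    (hg0 : ∀ v ≤ 0, g v = 0) : IsCausalProfile (layerPotentialX κ η b g) := by
  have hL {n : ℕ} {m : ℝ} (hm : 0 < m) : IsCausalProfile (layerMoment κ η b g n m) :=
    isCausalProfile_layerMoment hb hg hgi hg0 hm
  exact (((hL (by norm_num)).const_mul κ).add (hL (by norm_num))).add
    ((hL (by norm_num)).const_mul (-2 * b))

lemma isCausalProfile_layerPotentialXX (hb : 0 < b) (hg : Measurable g) (hgi : Integrable g)
    (hg0 : ∀ v ≤ 0, g v = 0) : IsCausalProfile (layerPotentialXX κ η b g) := by
  have hL {n : ℕ} {m : ℝ} (hm : 0 < m) : IsCausalProfile (layerMoment κ η b g n m) :=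
    isCausalProfile_layerMoment hb hg hgi hg0 hm
  have hL₀ := hL (n := 0) (m := 3 / 2) (by norm_num)
  have hL₁ := hL (n := 1) (m := 5 / 2) (by norm_num)
  have hL₂ := hL (n := 2) (m := 5 / 2) (by norm_num)
  have hL₃ := hL (n := 3) (m := 7 / 2) (by norm_num)
  exact (((isCausalProfile_layerPotentialX hb hg hgi hg0).const_mul κ).add
    ((hL₀.const_mul κ).add (hL₁.const_mul (-2 * b)))).add
    ((((hL₂.const_mul κ).add (hL₁.const_mul 2)).add (hL₃.const_mul (-2 * b))).const_mul (-2 * b))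

lemma hasPartialsAt_layerPotential (hb : 0 < b) (hgi : Integrable g) (hx : 0 < x) (s : ℝ) :
    HasPartialsAt (layerPotential κ η b g) (layerPotentialX κ η b g x s)
      (-η * layerPotential κ η b g x s - 3 / 2 * layerMoment κ η b g 1 (5 / 2) x s +
        b * layerMoment κ η b g 3 (7 / 2) x s) x s := by
  have hL := hasPartialsAt_layerMoment (κ := κ) (η := η) (n := 1) (m := 3 / 2) hb hgi
    (by norm_num) hx s
  norm_num at hL
  convert hL using 1 <;> simp only [layerPotentialX, layerPotential] <;> ring

lemma hasDerivAt_layerPotentialX (hb : 0 < b) (hgi : Integrable g) (hx : 0 < x) (s : ℝ) :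
    HasDerivAt (fun y => layerPotentialX κ η b g y s) (layerPotentialXX κ η b g x s) x := by
  have hL₀ := (hasPartialsAt_layerMoment (κ := κ) (η := η) (n := 0) (m := 3 / 2) hb hgi
    (by norm_num) hx s).hasDerivAt_fst
  have hL₂ := (hasPartialsAt_layerMoment (κ := κ) (η := η) (n := 2) (m := 5 / 2) hb hgi
    (by norm_num) hx s).hasDerivAt_fst
  norm_num at hL₀ hL₂
  refine ((((hasPartialsAt_layerPotential hb hgi hx s).hasDerivAt_fst.const_mul κ).add hL₀).add
    (hL₂.const_mul (-2 * b))).congr_deriv ?_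
  rw [layerPotentialXX]
  ring

-- Completing the square absorbs the exponential weight `exp (κ x)`.
lemma mul_sub_mul_sq_div_le (κ x : ℝ) (hb : 0 < b) {S T : ℝ} (hS : 0 < S) (hST : S ≤ T) :
    κ * x - b * x ^ 2 / (2 * S) ≤ κ ^ 2 * T / b - b / 4 * x ^ 2 / S := by
  have hsq : κ ^ 2 * S / b - b / 4 * x ^ 2 / S - (κ * x - b * x ^ 2 / (2 * S)) =
      (κ * S - b * x / 2) ^ 2 / (b * S) := by
    field_simp
    ring
  have hnn : 0 ≤ (κ * S - b * x / 2) ^ 2 / (b * S) := by positivity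
  have hmono : κ ^ 2 * S / b ≤ κ ^ 2 * T / b := by gcongr
  linarith

lemma isDiffusionProfile_layerPotential (ha : a ≠ 0) (lam : ℝ) (hg : Measurable g)
    (hgi : Integrable g) (hg0 : ∀ v ≤ 0, g v = 0) (hgM : ∀ v, |g v| ≤ M)
    (hκ : κ = lam / (2 * a ^ 2)) (hη : η = lam ^ 2 / (4 * a ^ 2)) (hb : b = 1 / (4 * a ^ 2)) :
    IsDiffusionProfile a lam (layerPotential κ η b g) (layerPotentialX κ η b g)
      (layerPotentialXX κ η b g) := by
  have hb0 : 0 < b := hb ▸ by positivity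
  have hη0 : 0 ≤ η := hη ▸ by positivity
  have hM : 0 ≤ M := (abs_nonneg _).trans (hgM 0)
  refine ⟨isCausalProfile_layerMoment hb0 hg hgi hg0 (by norm_num),
    isCausalProfile_layerPotentialX hb0 hg hgi hg0,
    isCausalProfile_layerPotentialXX hb0 hg hgi hg0, fun x s hx => ?_,
    fun x s hx => hasDerivAt_layerPotentialX hb0 hgi hx s, fun T => ⟨b / 4,
      b ^ (-(1 / 2) : ℝ) * (2 ^ (1 / 2 : ℝ) * Gamma (1 / 2) * M) * exp (κ ^ 2 * T / b),
      by positivity, fun S hS x s hs => ?_⟩⟩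
  · convert hasPartialsAt_layerPotential hb0 hgi hx s using 1
    rw [layerPotentialXX, layerPotentialX, hκ, hη, hb]
    field_simp
    ring
  · refine (abs_layerPotential_le κ hη0 hb0 hg0 hM hgM x hs).trans ?_
    rw [mul_assoc _ (exp (κ ^ 2 * T / b)), ← exp_add, ← sub_eq_add_neg]
    gcongr _ * exp ?_
    exact mul_sub_mul_sq_div_le κ x hb0 hS.1 hS.2

end DiffusionProfile

section RadialPotential

/-- The radial average `(r² / 4) ^ ν ∫ τ ^ (-1 - ν) exp (-r² / (4τ)) f (z + α τ) (t - τ) dτ`. -/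
noncomputable def radialPotential (α ν : ℝ) (f : ℝ → ℝ → ℝ) (r z t : ℝ) : ℝ :=
  (r ^ 2 / 4) ^ ν * kernelAverage (1 + ν) (r ^ 2 / 4) α f z t

variable {a lam α ν m r z : ℝ} {f V Vx Vxx : ℝ → ℝ → ℝ}

lemma IsDiffusionProfile.radialPotential_heat_equation (hV : IsDiffusionProfile a lam V Vx Vxx)
    (hα : 0 < α) (hν : 0 < ν) (hr : 0 < r) (hz : 0 < z) (t : ℝ) :
    deriv (fun t => radialPotential α ν V r z t) t =
      a ^ 2 * iteratedDeriv 2 (fun z => radialPotential α ν V r z t) z -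
        lam * deriv (fun z => radialPotential α ν V r z t) z := by
  have hm : 0 < 1 + ν := by positivity
  have hc : 0 < r ^ 2 / 4 := by positivity
  have hspace (z : ℝ) (hz : 0 < z) :
      HasDerivAt (fun z => radialPotential α ν V r z t) (radialPotential α ν Vx r z t) z :=
    (hasDerivAt_kernelAverage_space hV.causal hV.causal_x
      (fun x s hx => (hV.hasPartialsAt x s hx).hasDerivAt_fst) hm hc hα hz t).const_mul _
  have hspace₂ : HasDerivAt (fun z => radialPotential α ν Vx r z t)
      (radialPotential α ν Vxx r z t) z :=
    (hasDerivAt_kernelAverage_space hV.causal_x hV.causal_xx hV.hasDerivAt_x hm hc hα hz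
      t).const_mul _
  have htime : HasDerivAt (fun t => radialPotential α ν V r z t) _ t :=
    (hasDerivAt_kernelAverage_time hV.causal hV.causal_time
      (fun x s hx => (hV.hasPartialsAt x s hx).hasDerivAt_snd) hm hc hα hz.le t).const_mul _
  have hderiv : deriv (fun z => radialPotential α ν V r z t) =ᶠ[𝓝 z]
      fun z => radialPotential α ν Vx r z t := by
    filter_upwards [lt_mem_nhds hz] with z' hz'
    exact (hspace z' hz').deriv
  have hlin := kernelAverage_const_mul_add_const_mul hV.causal_xx hV.causal_x hm hc hα hz.le
    (a ^ 2) (-lam) t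
  simp only [neg_mul, ← sub_eq_add_neg] at hlin
  rw [htime.deriv, hlin, iteratedDeriv_succ, iteratedDeriv_one, hderiv.deriv_eq, hspace₂.deriv,
    (hspace z hz).deriv, radialPotential, radialPotential]
  ring

lemma hasDerivAt_rpow_mul_kernelAverage_radius (hf : IsCausalProfile f) (ν : ℝ) (hm : 0 < m)
    (hα : 0 < α) (hr : 0 < r) (hz : 0 ≤ z) (t : ℝ) :
    HasDerivAt (fun r => (r ^ 2 / 4) ^ ν * kernelAverage m (r ^ 2 / 4) α f z t)
      (2 * ν / r * ((r ^ 2 / 4) ^ ν * kernelAverage m (r ^ 2 / 4) α f z t) -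
        r / 2 * ((r ^ 2 / 4) ^ ν * kernelAverage (m + 1) (r ^ 2 / 4) α f z t)) r := by
  have hc : 0 < r ^ 2 / 4 := by positivity
  have hsq : HasDerivAt (fun r : ℝ => r ^ 2 / 4) (r / 2) r :=
    ((hasDerivAt_pow 2 r).div_const 4).congr_deriv (by norm_num; ring)
  refine ((hsq.rpow_const (p := ν) (Or.inl hc.ne')).mul
    ((hasDerivAt_kernelAverage_param hf hm hc hα hz t).comp r hsq)).congr_deriv ?_
  rw [rpow_sub_one hc.ne']
  simp only [Function.comp_apply]
  field_simp
  ring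

lemma radialOperator_radialPotential (hf : IsCausalProfile f) (hν : 0 < ν) (hα : 0 < α)
    (hr : 0 < r) (hz : 0 ≤ z) (t : ℝ) :
    iteratedDeriv 2 (fun r => radialPotential α ν f r z t) r +
        (1 - 2 * ν) / r * deriv (fun r => radialPotential α ν f r z t) r =
      (r ^ 2 / 4) ^ ν * (-(1 + ν) * kernelAverage (1 + ν + 1) (r ^ 2 / 4) α f z t +
        r ^ 2 / 4 * kernelAverage (1 + ν + 2) (r ^ 2 / 4) α f z t) := by
  have hfirst (r : ℝ) (hr : 0 < r) := hasDerivAt_rpow_mul_kernelAverage_radius hf ν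
    (m := 1 + ν) (by positivity) hα hr hz t
  have hnext := hasDerivAt_rpow_mul_kernelAverage_radius hf ν (m := 1 + ν + 1) (by positivity)
    hα hr hz t
  have hinv : HasDerivAt (fun r : ℝ => 2 * ν / r) (-(2 * ν / r ^ 2)) r :=
    ((hasDerivAt_inv hr.ne').const_mul (2 * ν)).congr_deriv (by ring)
  have hhalf : HasDerivAt (fun r : ℝ => r / 2) (1 / 2) r := (hasDerivAt_id r).div_const 2
  have hderiv : deriv (fun r => radialPotential α ν f r z t) =ᶠ[𝓝 r]
      fun r => 2 * ν / r * ((r ^ 2 / 4) ^ ν * kernelAverage (1 + ν) (r ^ 2 / 4) α f z t) -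
        r / 2 * ((r ^ 2 / 4) ^ ν * kernelAverage (1 + ν + 1) (r ^ 2 / 4) α f z t) := by
    filter_upwards [lt_mem_nhds hr] with r' hr'
    exact (hfirst r' hr').deriv
  have hsecond := (hinv.mul (hfirst r hr)).sub (hhalf.mul hnext)
  rw [iteratedDeriv_succ, iteratedDeriv_one, hderiv.deriv_eq, hderiv.eq_of_nhds]
  refine (congrArg (· + _) hsecond.deriv).trans ?_
  rw [show 1 + ν + 1 + 1 = 1 + ν + 2 by ring]
  field_simp
  ring

lemma IsDiffusionProfile.radialPotential_boundary_condition
    (hV : IsDiffusionProfile a lam V Vx Vxx) (hα : 0 < α) (hν : 0 < ν) (hr : 0 < r) (t : ℝ) :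
    deriv (fun t => radialPotential α ν V r 0 t) t =
      iteratedDeriv 2 (fun r => radialPotential α ν V r 0 t) r +
        (1 - 2 * ν) / r * deriv (fun r => radialPotential α ν V r 0 t) r +
        α * deriv (fun z => radialPotential α ν V r z t) 0 := by
  have hm : 0 < 1 + ν := by positivity
  have hc : 0 < r ^ 2 / 4 := by positivity
  have hbdd (X : ℝ) : ∃ M, 0 ≤ M ∧ ∀ x s, |x| ≤ X → s ≤ X → |V x s| ≤ M := by
    obtain ⟨M, hM, hVM⟩ := hV.exists_abs_le X
    exact ⟨M, hM, fun x s _ hs => hVM x s hs⟩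
  have htime : HasDerivAt (fun t => radialPotential α ν V r 0 t) _ t :=
    (hasDerivAt_kernelAverage_time hV.causal hV.causal_time
      (fun x s hx => (hV.hasPartialsAt x s hx).hasDerivAt_snd) hm hc hα le_rfl t).const_mul _
  have hspace : HasDerivAt (fun z => radialPotential α ν V r z t) _ 0 :=
    (hasDerivAt_kernelAverage_space_zero hV.causal hV.causal_x
      (fun x s hx => (hV.hasPartialsAt x s hx).hasDerivAt_fst) hbdd hm hc hα t).const_mul _
  rw [htime.deriv, hspace.deriv, radialOperator_radialPotential hV.causal hν hα hr le_rfl,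
    kernelAverage_ray_identity hV.causal hV.causal_x hV.causal_time hV.hasPartialsAt hm hc hα
      le_rfl]
  ring

lemma tendsto_radialPotential_origin (hf : Measurable fun p : ℝ × ℝ => f p.1 p.2) (hα : 0 < α)
    (hν : 0 < ν) {t M L : ℝ} (hM : ∀ x, ∀ s ≤ t, |f x s| ≤ M)
    (hlim : Tendsto (fun p : ℝ × ℝ => f p.1 p.2) (𝓝[>] 0 ×ˢ 𝓝 t) (𝓝 L)) :
    Tendsto (fun w : ℝ × ℝ => radialPotential α ν f w.1 w.2 t) (𝓝[Ioi 0 ×ˢ Ioi 0] (0, 0))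
      (𝓝 (Gamma ν * L)) := by
  have hpos : ∀ᶠ w : ℝ × ℝ in 𝓝[Ioi 0 ×ˢ Ioi 0] (0, 0), 0 < w.1 ∧ 0 < w.2 :=
    eventually_mem_nhdsWithin.mono fun w hw => hw
  have hid : Tendsto (fun w : ℝ × ℝ => w) (𝓝[Ioi 0 ×ˢ Ioi 0] (0, 0)) (𝓝 (0, 0)) :=
    nhdsWithin_le_nhds
  refine tendsto_rpow_mul_integral_expInvKernel_mul hν (hpos.mono fun w hw => ?_)
    (fun w => hf.comp (f := fun τ => (w.2 + α * τ, t - τ)) (by fun_prop))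
    (.of_forall fun w τ hτ => hM _ _ (sub_le_self t (le_of_lt hτ)))
    fun y hy => hlim.comp (Tendsto.prodMk ?_ ?_)
  · have := hw.1
    positivity
  · have : 0 < y := hy
    refine tendsto_nhdsWithin_iff.2 ⟨?_, hpos.mono fun w hw => ?_⟩
    · simpa using hid.snd_nhds.add ((((hid.fst_nhds.pow 2).div_const 4).div_const y).const_mul α)
    · have := hw.1
      have := hw.2
      exact mem_Ioi.2 (by positivity)
  · simpa using (((hid.fst_nhds.pow 2).div_const 4).div_const y).const_sub t

lemma IsDiffusionProfile.exists_abs_radialPotential_le (hV : IsDiffusionProfile a lam V Vx Vxx)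
    (hα : 0 < α) (hν : 0 < ν) (T : ℝ) :
    ∃ δ D, 0 < δ ∧ ∀ t ∈ Ioc 0 T, ∀ r z, 0 < r → 0 < z →
      |radialPotential α ν V r z t| ≤ D * exp (-(δ * (r ^ 2 + z ^ 2) / t)) := by
  obtain ⟨β, D, hβ, hD⟩ := hV.decay T
  refine ⟨min β (1 / 8), 2 ^ ν * Gamma ν * |D|, by positivity, fun t ht r z hr hz => ?_⟩
  have ht0 := ht.1
  have hprofile (τ : ℝ) (hτ : 0 < τ) : |V (z + α * τ) (t - τ)| ≤ |D| * exp (-(β * z ^ 2 / t)) := by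
    refine (hD t ht _ _ (sub_le_self t hτ.le)).trans ?_
    gcongr
    · exact le_abs_self D
    · exact le_add_of_nonneg_right (by positivity)
  calc |radialPotential α ν V r z t|
      ≤ 2 ^ ν * Gamma ν * (|D| * exp (-(β * z ^ 2 / t))) * exp (-(r ^ 2 / 4) / (2 * t)) :=
        abs_rpow_mul_integral_expInvKernel_mul_le hν (by positivity) (by positivity)
          (fun τ hτ _ => hprofile τ hτ) fun τ hτ => hV.causal.eq_zero _ _ (sub_nonpos.2 hτ)
    _ = 2 ^ ν * Gamma ν * |D| * exp (-((1 / 8 * r ^ 2 + β * z ^ 2) / t)) := by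
        rw [mul_assoc, mul_assoc |D|, ← exp_add, ← mul_assoc]
        congr 2
        field_simp
        ring
    _ ≤ 2 ^ ν * Gamma ν * |D| * exp (-(min β (1 / 8) * (r ^ 2 + z ^ 2) / t)) := by
        rw [mul_add]
        gcongr
        · exact min_le_right _ _
        · exact min_le_left _ _

lemma IsDiffusionProfile.tendsto_radialPotential_infty (hV : IsDiffusionProfile a lam V Vx Vxx)
    (hα : 0 < α) (hν : 0 < ν) {t : ℝ} (ht : 0 < t) :
    Tendsto (fun w : ℝ × ℝ => radialPotential α ν V w.1 w.2 t)
      (comap (fun w : ℝ × ℝ => w.1 ^ 2 + w.2 ^ 2) atTop ⊓ 𝓟 (Ioi 0 ×ˢ Ioi 0)) (𝓝 0) := by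
  obtain ⟨δ, D, hδ, hD⟩ := hV.exists_abs_radialPotential_le hα hν t
  have hinf : Tendsto (fun w : ℝ × ℝ => δ * (w.1 ^ 2 + w.2 ^ 2) / t)
      (comap (fun w : ℝ × ℝ => w.1 ^ 2 + w.2 ^ 2) atTop ⊓ 𝓟 (Ioi 0 ×ˢ Ioi 0)) atTop :=
    ((tendsto_comap.mono_left inf_le_left).const_mul_atTop hδ).atTop_div_const ht
  have hlim := (tendsto_exp_neg_atTop_nhds_zero.comp hinf).const_mul D
  rw [mul_zero] at hlim
  refine squeeze_zero_norm' ?_ hlim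
  filter_upwards [mem_inf_of_right (mem_principal_self _)] with w hw
  exact hD t ⟨ht, le_rfl⟩ w.1 w.2 hw.1 hw.2

lemma IsDiffusionProfile.tendsto_radialPotential_time_zero
    (hV : IsDiffusionProfile a lam V Vx Vxx) (hα : 0 < α) (hν : 0 < ν) (hr : 0 < r)
    (hz : 0 < z) : Tendsto (fun t => radialPotential α ν V r z t) (𝓝[>] 0) (𝓝 0) := by
  obtain ⟨δ, D, hδ, hD⟩ := hV.exists_abs_radialPotential_le hα hν 1
  have hinf : Tendsto (fun t : ℝ => δ * (r ^ 2 + z ^ 2) / t) (𝓝[>] 0) atTop :=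
    tendsto_inv_nhdsGT_zero.const_mul_atTop (by positivity)
  have hlim := (tendsto_exp_neg_atTop_nhds_zero.comp hinf).const_mul D
  rw [mul_zero] at hlim
  refine squeeze_zero_norm' ?_ hlim
  filter_upwards [Ioc_mem_nhdsGT one_pos] with t ht
  exact hD t ht r z hr hz

end RadialPotential

section LumpedProfile

/-- The boundary datum `h`, cut off outside `(0, T]` and rescaled so that its layer potential has
boundary limits `C * h` on `(0, T)`. -/
noncomputable def lumpedDensity (a lam C : ℝ) (h : ℝ → ℝ) (T : ℝ) : ℝ → ℝ :=
  (Ioc 0 T).indicator fun v => C / (2 * a * √π) * (exp (lam ^ 2 / (4 * a ^ 2) * v) * h v)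

/-- The solution on the half-line `x > 0` of `V_s = a² V_xx - λ V_x` with zero initial values and,
for `0 < s < T`, boundary values `C * h s`. These are limits as `x → 0⁺`: the formula itself gives
`0` at `x = 0`. -/
noncomputable def lumpedProfile (a lam C : ℝ) (h : ℝ → ℝ) (T : ℝ) : ℝ → ℝ → ℝ :=
  layerPotential (lam / (2 * a ^ 2)) (lam ^ 2 / (4 * a ^ 2)) (1 / (4 * a ^ 2))
    (lumpedDensity a lam C h T)

variable {a T M : ℝ} {h : ℝ → ℝ}

lemma lumpedDensity_of_mem (a lam C : ℝ) (h : ℝ → ℝ) {v : ℝ} (hv : v ∈ Ioc 0 T) :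
    lumpedDensity a lam C h T v =
      C / (2 * a * √π) * (exp (lam ^ 2 / (4 * a ^ 2) * v) * h v) :=
  indicator_of_mem hv _

lemma lumpedDensity_of_nonpos (a lam C : ℝ) (h : ℝ → ℝ) (T : ℝ) {v : ℝ} (hv : v ≤ 0) :
    lumpedDensity a lam C h T v = 0 :=
  indicator_of_notMem (fun hmem => hv.not_gt hmem.1) _

lemma measurable_lumpedDensity (a lam C : ℝ) (hcont : ContinuousOn h (Ioi 0)) (T : ℝ) :
    Measurable (lumpedDensity a lam C h T) := by
  classical
  rw [lumpedDensity, ← piecewise_eq_indicator]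
  have : ContinuousOn h (Ioc 0 T) := hcont.mono Ioc_subset_Ioi_self
  exact ContinuousOn.measurable_piecewise (by fun_prop) continuousOn_const measurableSet_Ioc

lemma continuousAt_lumpedDensity (a lam C : ℝ) (hcont : ContinuousOn h (Ioi 0)) {t : ℝ}
    (ht : t ∈ Ioo 0 T) : ContinuousAt (lumpedDensity a lam C h T) t := by
  have hht : ContinuousAt h t := hcont.continuousAt (Ioi_mem_nhds ht.1)
  have hsmooth : ContinuousAt
      (fun v => C / (2 * a * √π) * (exp (lam ^ 2 / (4 * a ^ 2) * v) * h v)) t := by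
    fun_prop
  refine hsmooth.congr ?_
  filter_upwards [Ioo_mem_nhds ht.1 ht.2] with v hv
  exact (lumpedDensity_of_mem a lam C h (Ioo_subset_Ioc_self hv)).symm

lemma abs_lumpedDensity_le (a lam C : ℝ) (hM : 0 ≤ M) (hhM : ∀ t ∈ Ioc 0 T, |h t| ≤ M) (v : ℝ) :
    |lumpedDensity a lam C h T v| ≤
      |C / (2 * a * √π)| * (exp (lam ^ 2 / (4 * a ^ 2) * T) * M) := by
  by_cases hv : v ∈ Ioc 0 T
  · rw [lumpedDensity_of_mem a lam C h hv, abs_mul, abs_mul, abs_exp]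
    gcongr
    exacts [hv.2, hhM v hv]
  · rw [lumpedDensity, indicator_of_notMem hv, abs_zero]
    positivity

lemma exists_abs_lumpedDensity_le (a lam C : ℝ) (hbdd : ∃ M, ∀ t ∈ Ioc 0 T, |h t| ≤ M) :
    ∃ M, ∀ v, |lumpedDensity a lam C h T v| ≤ M := by
  obtain ⟨M, hM⟩ := hbdd
  exact ⟨_, abs_lumpedDensity_le a lam C (le_max_right M 0)
    fun t ht => (hM t ht).trans (le_max_left M 0)⟩

lemma integrable_lumpedDensity (a lam C : ℝ) (hcont : ContinuousOn h (Ioi 0))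
    (hbdd : ∃ M, ∀ t ∈ Ioc 0 T, |h t| ≤ M) : Integrable (lumpedDensity a lam C h T) := by
  obtain ⟨M, hM⟩ := exists_abs_lumpedDensity_le a lam C hbdd
  have hint : IntegrableOn (lumpedDensity a lam C h T) (Ioc 0 T) :=
    Measure.integrableOn_of_bounded measure_Ioc_lt_top.ne
      (measurable_lumpedDensity a lam C hcont T).aestronglyMeasurable (.of_forall hM)
  exact (integrableOn_iff_integrable_of_support_subset support_indicator_subset).1 hint

lemma exists_isDiffusionProfile_lumpedProfile (ha : a ≠ 0) (lam C : ℝ)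
    (hcont : ContinuousOn h (Ioi 0)) (hbdd : ∃ M, ∀ t ∈ Ioc 0 T, |h t| ≤ M) :
    ∃ Vx Vxx, IsDiffusionProfile a lam (lumpedProfile a lam C h T) Vx Vxx := by
  obtain ⟨M, hM⟩ := exists_abs_lumpedDensity_le a lam C hbdd
  exact ⟨_, _, isDiffusionProfile_layerPotential ha lam (measurable_lumpedDensity a lam C hcont T)
    (integrable_lumpedDensity a lam C hcont hbdd)
    (fun v => lumpedDensity_of_nonpos a lam C h T) hM rfl rfl rfl⟩

lemma tendsto_lumpedProfile (ha : 0 < a) (lam C : ℝ) (hcont : ContinuousOn h (Ioi 0))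
    (hbdd : ∃ M, ∀ t ∈ Ioc 0 T, |h t| ≤ M) {t : ℝ} (ht : t ∈ Ioo 0 T) :
    Tendsto (fun p : ℝ × ℝ => lumpedProfile a lam C h T p.1 p.2) (𝓝[>] 0 ×ˢ 𝓝 t)
      (𝓝 (C * h t)) := by
  obtain ⟨M, hM⟩ := exists_abs_lumpedDensity_le a lam C hbdd
  have hlim := tendsto_layerPotential (lam / (2 * a ^ 2)) (lam ^ 2 / (4 * a ^ 2))
    (b := 1 / (4 * a ^ 2)) (by positivity) (measurable_lumpedDensity a lam C hcont T) hM
    (continuousAt_lumpedDensity a lam C hcont ht)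
  have hroot : (1 / (4 * a ^ 2)) ^ (-(1 / 2) : ℝ) = 2 * a := by
    rw [one_div (4 * a ^ 2), inv_rpow (by positivity), rpow_neg (by positivity), inv_inv,
      ← sqrt_eq_rpow, show 4 * a ^ 2 = (2 * a) ^ 2 by ring, sqrt_sq (by positivity)]
  have hvalue : C * h t = exp (-(lam ^ 2 / (4 * a ^ 2) * t)) *
      ((1 / (4 * a ^ 2)) ^ (-(1 / 2) : ℝ) *
        (Gamma (1 / 2) * lumpedDensity a lam C h T t)) := by
    rw [hroot, Gamma_one_half_eq, lumpedDensity_of_mem a lam C h (Ioo_subset_Ioc_self ht), exp_neg]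
    field_simp
  rw [hvalue]
  exact hlim

lemma kernelConv_eq_intervalIntegral (m c : ℝ) {g : ℝ → ℝ} (hg0 : ∀ v ≤ 0, g v = 0) {s : ℝ}
    (hs : 0 ≤ s) :
    kernelConv m g c s = ∫ w in (0 : ℝ)..s, w ^ (-m) * exp (-c / w) * g (s - w) := by
  calc kernelConv m g c s = ∫ w, expInvKernel m c w * g (s - w) := by
        rw [kernelConv, ← integral_sub_left_eq_self _ volume s]
        simp only [sub_sub_cancel]
    _ = ∫ w in Ioc 0 s, expInvKernel m c w * g (s - w) := by
        refine (setIntegral_eq_integral_of_forall_compl_eq_zero fun w hw => ?_).symm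
        rcases le_or_gt w 0 with hw0 | hw0
        · rw [expInvKernel_of_nonpos m c hw0, zero_mul]
        · rw [hg0 _ (sub_nonpos.2 (not_le.1 fun hws => hw ⟨hw0, hws⟩).le), mul_zero]
    _ = ∫ w in (0 : ℝ)..s, w ^ (-m) * exp (-c / w) * g (s - w) := by
        rw [intervalIntegral.integral_of_le hs]
        exact setIntegral_congr_fun measurableSet_Ioc fun w hw => by
          rw [expInvKernel_of_pos m c hw.1]

lemma lumpedProfile_eq_intervalIntegral (a lam C : ℝ) (h : ℝ → ℝ) (x : ℝ) {s : ℝ}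
    (hs : s ∈ Icc 0 T) :
    lumpedProfile a lam C h T x s = C * (exp (lam * x / (2 * a ^ 2)) *
      ∫ w in (0 : ℝ)..s, x / (2 * a * √π) * w ^ (-(3 / 2 : ℝ)) * h (s - w) *
        exp (-lam ^ 2 * w / (4 * a ^ 2)) * exp (-x ^ 2 / (4 * a ^ 2 * w))) := by
  rw [lumpedProfile, layerPotential, layerMoment, kernelConv_eq_intervalIntegral _ _
    (fun v => lumpedDensity_of_nonpos a lam C h T) hs.1]
  simp only [← intervalIntegral.integral_const_mul]
  refine intervalIntegral.integral_congr_Ioo_of_le hs.1 fun w hw => ?_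
  have hmem : s - w ∈ Ioc 0 T := ⟨sub_pos.2 hw.2, by linarith [hw.1, hs.2]⟩
  have hexp : exp (lam / (2 * a ^ 2) * x - lam ^ 2 / (4 * a ^ 2) * s) *
      exp (lam ^ 2 / (4 * a ^ 2) * (s - w)) =
      exp (lam * x / (2 * a ^ 2)) * exp (-lam ^ 2 * w / (4 * a ^ 2)) := by
    rw [← exp_add, ← exp_add]
    ring_nf
  rw [lumpedDensity_of_mem a lam C h hmem,
    show -(1 / (4 * a ^ 2) * x ^ 2) / w = -x ^ 2 / (4 * a ^ 2 * w) by field_simp]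
  linear_combination (x * w ^ (-(3 / 2 : ℝ)) * exp (-x ^ 2 / (4 * a ^ 2 * w)) *
    (C / (2 * a * √π)) * h (s - w)) * hexp

lemma radialPotential_eq_intervalIntegral {f : ℝ → ℝ → ℝ} (hf : ∀ x, ∀ s ≤ 0, f x s = 0)
    (α ν r z : ℝ) {t : ℝ} (ht : 0 ≤ t) :
    radialPotential α ν f r z t = ∫ τ in (0 : ℝ)..t, 1 / τ * (r ^ 2 / (4 * τ)) ^ ν *
      exp (-r ^ 2 / (4 * τ)) * f (z + α * τ) (t - τ) := by
  have hker {τ : ℝ} (hτ : 0 < τ) : (r ^ 2 / 4) ^ ν * expInvKernel (1 + ν) (r ^ 2 / 4) τ =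
      1 / τ * (r ^ 2 / (4 * τ)) ^ ν * exp (-r ^ 2 / (4 * τ)) := by
    rw [expInvKernel_of_pos _ _ hτ, neg_add, rpow_add hτ, rpow_neg_one, rpow_neg hτ.le,
      show r ^ 2 / (4 * τ) = r ^ 2 / 4 / τ by field_simp, div_rpow (by positivity) hτ.le,
      show -r ^ 2 / (4 * τ) = -(r ^ 2 / 4) / τ by field_simp]
    ring
  have hsupp : ∀ τ ∉ Ioc 0 t,
      (r ^ 2 / 4) ^ ν * (expInvKernel (1 + ν) (r ^ 2 / 4) τ * f (z + α * τ) (t - τ)) = 0 := by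
    intro τ hτ
    rcases le_or_gt τ 0 with hτ0 | hτ0
    · rw [expInvKernel_of_nonpos _ _ hτ0, zero_mul, mul_zero]
    · rw [hf _ _ (sub_nonpos.2 (not_le.1 fun hτt => hτ ⟨hτ0, hτt⟩).le), mul_zero, mul_zero]
  rw [radialPotential, kernelAverage, ← integral_const_mul,
    ← setIntegral_eq_integral_of_forall_compl_eq_zero hsupp, intervalIntegral.integral_of_le ht]
  exact setIntegral_congr_fun measurableSet_Ioc fun τ hτ => by
    rw [← mul_assoc, hker hτ.1]

lemma incompleteLumped_eq_radialPotential (a lam α A ν : ℝ) (h : ℝ → ℝ) (r z : ℝ) {t : ℝ}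
    (ht : t ∈ Ioc 0 T) :
    (A / Gamma ν) * ∫ τ in (0 : ℝ)..t, (1 / τ) * (r ^ 2 / (4 * τ)) ^ ν *
          exp (-r ^ 2 / (4 * τ)) * exp (lam * (z + α * τ) / (2 * a ^ 2)) *
          ∫ w in (0 : ℝ)..(t - τ), ((z + α * τ) / (2 * a * √π)) *
            w ^ (-(3 / 2 : ℝ)) * h (t - τ - w) *
            exp (-lam ^ 2 * w / (4 * a ^ 2)) *
            exp (-(z + α * τ) ^ 2 / (4 * a ^ 2 * w)) =
      radialPotential α ν (lumpedProfile a lam (A / Gamma ν) h T) r z t := by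
  have hcausal (x s : ℝ) (hs : s ≤ 0) : lumpedProfile a lam (A / Gamma ν) h T x s = 0 :=
    layerPotential_eq_zero _ _ _ (fun v => lumpedDensity_of_nonpos a lam _ h T) x hs
  rw [radialPotential_eq_intervalIntegral hcausal α ν r z ht.1.le,
    ← intervalIntegral.integral_const_mul]
  refine intervalIntegral.integral_congr_Ioo_of_le ht.1.le fun τ hτ => ?_
  rw [lumpedProfile_eq_intervalIntegral a lam _ h _
    ⟨sub_nonneg.2 hτ.2.le, by linarith [hτ.1, ht.2]⟩]
  ring

end LumpedProfile

theorem classical_incomplete_lumped_radial_general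
    (a lam α A ν : ℝ) (ha : 0 < a) (hα : 0 < α) (hν : 0 < ν)
    (h : ℝ → ℝ) (hcont : ContinuousOn h (Ioi 0))
    (hbdd : ∀ T, ∃ M, ∀ t ∈ Ioc 0 T, |h t| ≤ M)
    (u : ℝ → ℝ → ℝ → ℝ)
    (hu : ∀ r z t : ℝ, u r z t =
      (A / Gamma ν) *
        ∫ τ in (0 : ℝ)..t, (1 / τ) * (r ^ 2 / (4 * τ)) ^ ν *
          exp (-r ^ 2 / (4 * τ)) * exp (lam * (z + α * τ) / (2 * a ^ 2)) *
          ∫ w in (0 : ℝ)..(t - τ), ((z + α * τ) / (2 * a * √π)) *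
            w ^ (-(3 / 2 : ℝ)) * h (t - τ - w) *
            exp (-lam ^ 2 * w / (4 * a ^ 2)) *
            exp (-(z + α * τ) ^ 2 / (4 * a ^ 2 * w))) :
    (∀ r z t : ℝ, 0 < r → 0 < z → 0 < t →
      deriv (fun t' => u r z t') t =
        a ^ 2 * iteratedDeriv 2 (fun z' => u r z' t) z -
          lam * deriv (fun z' => u r z' t) z) ∧
    (∀ r t : ℝ, 0 < r → 0 < t →
      deriv (fun t' => u r 0 t') t =
        iteratedDeriv 2 (fun r' => u r' 0 t) r +
          ((1 - 2 * ν) / r) * deriv (fun r' => u r' 0 t) r +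
          α * deriv (fun z' => u r z' t) 0) ∧
    (∀ t : ℝ, 0 < t →
      Tendsto (fun w : ℝ × ℝ => u w.1 w.2 t)
        (𝓝[Ioi 0 ×ˢ Ioi 0] (0, 0)) (𝓝 (A * h t))) ∧
    (∀ t : ℝ, 0 < t →
      Tendsto (fun w : ℝ × ℝ => u w.1 w.2 t)
        ((comap (fun w : ℝ × ℝ => w.1 ^ 2 + w.2 ^ 2) atTop) ⊓
          𝓟 (Ioi (0 : ℝ) ×ˢ Ioi (0 : ℝ))) (𝓝 0)) ∧
    (∀ r z : ℝ, 0 < r → 0 < z →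
      Tendsto (fun t => u r z t) (𝓝[>] 0) (𝓝 0)) := by
  have hrep (T r z : ℝ) {t : ℝ} (ht : t ∈ Ioc 0 T) :
      u r z t = radialPotential α ν (lumpedProfile a lam (A / Gamma ν) h T) r z t :=
    (hu r z t).trans (incompleteLumped_eq_radialPotential a lam α A ν h r z ht)
  choose Vx Vxx hV using fun T =>
    exists_isDiffusionProfile_lumpedProfile ha.ne' lam (A / Gamma ν) hcont (hbdd T)
  have hnear (r z : ℝ) {t : ℝ} (ht : 0 < t) : u r z =ᶠ[𝓝 t]
      radialPotential α ν (lumpedProfile a lam (A / Gamma ν) h (t + 1)) r z := by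
    filter_upwards [Ioo_mem_nhds ht (lt_add_one t)] with s hs
    exact hrep _ r z (Ioo_subset_Ioc_self hs)
  refine ⟨fun r z t hr hz ht => ?_, fun r t hr ht => ?_, fun t ht => ?_, fun t ht => ?_,
    fun r z hr hz => ?_⟩
  · simp only [(hnear r z ht).deriv_eq, (hnear r _ ht).eq_of_nhds]
    exact (hV _).radialPotential_heat_equation hα hν hr hz t
  · simp only [(hnear r 0 ht).deriv_eq, (hnear _ _ ht).eq_of_nhds]
    exact (hV _).radialPotential_boundary_condition hα hν hr t
  · obtain ⟨M, -, hM⟩ := (hV (t + 1)).exists_abs_le t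
    have hlim := tendsto_radialPotential_origin (hV _).causal.measurable hα hν hM
      (tendsto_lumpedProfile ha lam _ hcont (hbdd _) ⟨ht, lt_add_one t⟩)
    rw [← mul_assoc, mul_div_cancel₀ A (Gamma_pos_of_pos hν).ne'] at hlim
    exact hlim.congr fun w => (hrep _ w.1 w.2 ⟨ht, (lt_add_one t).le⟩).symm
  · exact ((hV _).tendsto_radialPotential_infty hα hν ht).congr
      fun w => (hrep _ w.1 w.2 ⟨ht, le_rfl⟩).symm
  · refine ((hV 1).tendsto_radialPotential_time_zero hα hν hr hz).congr' ?_
    filter_upwards [Ioc_mem_nhdsGT one_pos] with t ht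
    exact (hrep _ r z ht).symm

/-- Corollary to Theorem 3 (radial case, classical order `2β = 1`): the function
`u(r,z,t) = (A/Γ(ν)) ∫_0^t (1/τ)(r²/(4τ))^ν e^{−r²/(4τ)} e^{λ(z+ατ)/(2a²)}
  [ ∫_0^{t−τ} ((z+ατ)/(2a√π)) w^{−3/2} h(t−τ−w) e^{−λ²w/(4a²)} e^{−(z+ατ)²/(4a²w)} dw ] dτ`
solves the classical radial boundary value problem (5.17)–(5.19). -/
theorem classical_incomplete_lumped_radial
    (a lam α A ν : ℝ) (ha : 0 < a) (hlam : 0 < lam) (hα : 0 < α) (hA : 0 < A)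
    (hν : 0 < ν)
    (h : ℝ → ℝ) (hcont : ContinuousOn h (Ici 0))
    (hbdd : ∃ Cb : ℝ, ∀ t : ℝ, 0 ≤ t → |h t| ≤ Cb) (h0 : h 0 = 0)
    (u : ℝ → ℝ → ℝ → ℝ)
    (hu : ∀ r z t : ℝ, u r z t =
      (A / Real.Gamma ν) *
        ∫ τ in (0 : ℝ)..t, (1 / τ) * (r ^ 2 / (4 * τ)) ^ ν *
          Real.exp (-r ^ 2 / (4 * τ)) * Real.exp (lam * (z + α * τ) / (2 * a ^ 2)) *
          ∫ w in (0 : ℝ)..(t - τ), ((z + α * τ) / (2 * a * Real.sqrt π)) *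
            w ^ (-(3 / 2 : ℝ)) * h (t - τ - w) *
            Real.exp (-lam ^ 2 * w / (4 * a ^ 2)) *
            Real.exp (-(z + α * τ) ^ 2 / (4 * a ^ 2 * w))) :
    -- (i) the heat equation for `r, z, t > 0`
    (∀ r z t : ℝ, 0 < r → 0 < z → 0 < t →
      deriv (fun t' => u r z t') t =
        a ^ 2 * iteratedDeriv 2 (fun z' => u r z' t) z -
          lam * deriv (fun z' => u r z' t) z) ∧
    -- (ii) the boundary condition at `z = 0`
    (∀ r t : ℝ, 0 < r → 0 < t →
      deriv (fun t' => u r 0 t') t =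
        iteratedDeriv 2 (fun r' => u r' 0 t) r +
          ((1 - 2 * ν) / r) * deriv (fun r' => u r' 0 t) r +
          α * deriv (fun z' => u r z' t) 0) ∧
    -- (iii) `u → A h(t)` as `(r,z) → (0,0)`
    (∀ t : ℝ, 0 < t →
      Tendsto (fun w : ℝ × ℝ => u w.1 w.2 t)
        (nhdsWithin (0, 0) (Ioi (0 : ℝ) ×ˢ Ioi (0 : ℝ))) (nhds (A * h t))) ∧
    -- (iv) `u → 0` as `r² + z² → ∞`
    (∀ t : ℝ, 0 < t →
      Tendsto (fun w : ℝ × ℝ => u w.1 w.2 t)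
        ((comap (fun w : ℝ × ℝ => w.1 ^ 2 + w.2 ^ 2) atTop) ⊓
          𝓟 (Ioi (0 : ℝ) ×ˢ Ioi (0 : ℝ))) (nhds 0)) ∧
    -- (v) `u → 0` as `t → 0⁺`
    (∀ r z : ℝ, 0 < r → 0 < z →
      Tendsto (fun t => u r z t) (nhdsWithin 0 (Ioi 0)) (nhds 0)) := by
  obtain ⟨M, hM⟩ := hbdd
  exact classical_incomplete_lumped_radial_general a lam α A ν ha hα hν h
    (hcont.mono Ioi_subset_Ici_self) (fun _ => ⟨M, fun t ht => hM t ht.1.le⟩) u hu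
end

section
/- Special case of Theorem 1 with 2β = 1 (classical incomplete lumped formulation, linear case). Let a, λ, α, γ, A > 0 and let h : [0,∞) → ℝ be continuous and bounded with h(0) = 0. Define u(x,z,t) = (A x e^{γx}/(4aπ)) ∫_0^t τ^{−3/2}·exp(−x²/(4τ) − γ²τ)·exp(λ(z+ατ)/(2a²))·[ (z+ατ) ∫_0^{t−τ} w^{−3/2}·exp(−(z+ατ)²/(4a²w))·exp(−λ²w/(4a²))·h(t−τ−w) dw ] dτ. Then u solves the classical boundary value problem: (i) ∂u/∂t(x,z,t) = a² ∂²u/∂z²(x,z,t) − λ ∂u/∂z(x,z,t) for all x, z, t > 0; (ii) ∂u/∂t(x,0,t) = ∂²u/∂x²(x,0,t) − 2γ ∂u/∂x(x,0,t) + α ∂u/∂z(x,0,t) for all x, t > 0; (iii) u(x,z,t) → A·h(t) as (x,z) → (0,0) for each t > 0; (iv) u(x,z,t) → 0 as x² + z² → ∞ for each t > 0; (v) u(x,z,t) → 0 as t → 0⁺ for all x, z > 0. -/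
open MeasureTheory Real Filter Set
open scoped Topology

/-!
Up to a constant, `u` is a cascade of two first-passage problems. The kernel
`p_{d,μ}(y, w) = y w^{-3/2} exp(-(y - μw)² / (4dw))` solves `∂_w p = d ∂_y² p - μ ∂_y p`, and
`u(x, z, t) = A/(4aπ) ∫ p_{1,2γ}(x, τ) (∫ p_{a²,λ}(z + ατ, t - τ - r) h(r) dr) dτ`.

Differentiating under the integral sign gives the interior equation. Since the second kernel sees
`τ` through `z + ατ` and `t - τ`, integrating by parts in `τ` trades `∂_t` on the second kernel for
`∂_τ` on the first plus `α ∂_z` on the second, which is the boundary condition. Both are legitimate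
because `p` vanishes to infinite order as `w → 0` with only a polynomial loss in `y`: the blow-up of
the second kernel as `z + ατ → 0` is absorbed by the flatness of the first at `τ = 0`.

By parabolic scaling `p_{d,μ}(y, ·)` is an approximate identity of mass `2 √(πd)` as `y → 0`, which
gives the corner value. For the decay in space and as `t → 0`, half of the Gaussian exponent is
pulled out of the integral; the other half is a kernel of diffusivity `2d`, whose mass does not
depend on `y`.
-/

section Calculus

variable {E : Type*} [NormedAddCommGroup E]

lemma hasDerivAt_zero_of_isBigO_sq {𝕜 : Type*} [NontriviallyNormedField 𝕜] [NormedSpace 𝕜 E]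
    {f : 𝕜 → E} {s : 𝕜} (h : f =O[𝓝 s] fun σ => (σ - s) ^ 2) : HasDerivAt f 0 s := by
  have h' : f =O[𝓝 s] fun σ => ‖σ - s‖ ^ 2 := by simpa only [← norm_pow] using h.norm_right
  simpa using (h'.hasFDerivAt (𝕜 := 𝕜) one_lt_two).hasDerivAt

lemma iteratedDeriv_two_eq_of_hasDerivAt {𝕜 : Type*} [NontriviallyNormedField 𝕜] [NormedSpace 𝕜 E]
    {f f' : 𝕜 → E} {f'' : E} {x : 𝕜} (h : ∀ᶠ y in 𝓝 x, HasDerivAt f (f' y) y)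
    (h' : HasDerivAt f' f'' x) : iteratedDeriv 2 f x = f'' := by
  have hderiv : deriv f =ᶠ[𝓝 x] f' := h.mono fun y hy => hy.deriv
  rw [iteratedDeriv_succ, iteratedDeriv_one, hderiv.deriv_eq, h'.deriv]

lemma hasDerivAt_integral_of_dominated_loc_of_lip' {𝕜 : Type*} [RCLike 𝕜] [NormedSpace ℝ E]
    [NormedSpace 𝕜 E] {β : Type*} [MeasurableSpace β] {μ : Measure β} {F : 𝕜 → β → E} {F' : β → E}
    {bound : β → ℝ} {x₀ : 𝕜} {s : Set 𝕜} (hs : s ∈ 𝓝 x₀)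
    (hF_meas : ∀ x ∈ s, AEStronglyMeasurable (F x) μ) (hF_int : Integrable (F x₀) μ)
    (hF'_meas : AEStronglyMeasurable F' μ)
    (h_lip : ∀ᵐ b ∂μ, ∀ x ∈ s, ‖F x b - F x₀ b‖ ≤ bound b * ‖x - x₀‖)
    (bound_integrable : Integrable bound μ)
    (h_diff : ∀ᵐ b ∂μ, HasDerivAt (F · b) (F' b) x₀) :
    HasDerivAt (fun x => ∫ b, F x b ∂μ) (∫ b, F' b ∂μ) x₀ := by
  set L : E →L[𝕜] 𝕜 →L[𝕜] E := ContinuousLinearMap.smulRightL 𝕜 𝕜 E 1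
  have hL_meas : AEStronglyMeasurable (L ∘ F') μ := L.continuous.comp_aestronglyMeasurable hF'_meas
  obtain ⟨hL_int, key⟩ := hasFDerivAt_integral_of_dominated_loc_of_lip' hs hF_meas hF_int hL_meas
    h_lip bound_integrable (h_diff.mono fun _ hb => hb.hasFDerivAt)
  have hF'_int : Integrable F' μ := by
    rw [← integrable_norm_iff hL_meas] at hL_int
    simpa [L, (· ∘ ·), integrable_norm_iff hF'_meas] using! hL_int
  by_cases hE : CompleteSpace E
  · rw [hasDerivAt_iff_hasFDerivAt]
    simpa only [(· ∘ ·), ContinuousLinearMap.integral_comp_comm _ hF'_int] using! key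
  · simpa only [integral, hE, dite_false] using! hasDerivAt_const x₀ (0 : E)

end Calculus

/-- The factor `w ^ (-3/2) * exp (-(y - μ * w) ^ 2 / (4 * d * w))` common to the first-passage
density of a diffusion with diffusivity `d` and drift `μ` and to its derivatives, extended by zero
to `w ≤ 0`. -/
noncomputable def driftGaussian (d μ y w : ℝ) : ℝ :=
  if 0 < w then w ^ (-(3 / 2 : ℝ)) * exp (-(y - μ * w) ^ 2 / (4 * d * w)) else 0

/-- The density at time `w` of the first passage at level `y` of a diffusion with diffusivity `d`
and drift `μ`, without its normalisation `(4 * π * d) ^ (-1/2)`. -/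
noncomputable def firstPassage (d μ y w : ℝ) : ℝ := y * driftGaussian d μ y w

/-- The derivative `∂_y` of `firstPassage`. -/
noncomputable def firstPassageDx (d μ y w : ℝ) : ℝ :=
  (1 - y * ((y - μ * w) / (2 * d * w))) * driftGaussian d μ y w

/-- The second derivative `∂_y²` of `firstPassage`. -/
noncomputable def firstPassageDxx (d μ y w : ℝ) : ℝ :=
  (-((y - μ * w) / (2 * d * w)) * (1 - y * ((y - μ * w) / (2 * d * w)))
    - (2 * y - μ * w) / (2 * d * w)) * driftGaussian d μ y w

/-- The time derivative `∂_w` of `firstPassage`. -/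
noncomputable def firstPassageDw (d μ y w : ℝ) : ℝ :=
  y * (-3 / (2 * w) + y ^ 2 / (4 * d * w ^ 2) - μ ^ 2 / (4 * d)) * driftGaussian d μ y w

/-- Causal kernels vanishing to infinite order at time zero: `D y w` is smaller than any power
of `w`, uniformly for bounded `y > 0` up to a polynomial loss in `y`. -/
structure IsFlatKernel (D : ℝ → ℝ → ℝ) : Prop where
  measurable : Measurable (Function.uncurry D)
  eq_zero : ∀ y w, w ≤ 0 → D y w = 0
  bound : ∀ (Y T : ℝ) (k : ℕ), ∃ (m : ℕ) (C : ℝ), 0 ≤ C ∧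
    ∀ y w, 0 < y → y ≤ Y → 0 < w → w ≤ T → |D y w| * y ^ m ≤ C * w ^ k

section DriftGaussian

lemma driftGaussian_of_nonpos (d μ y : ℝ) {w : ℝ} (hw : w ≤ 0) : driftGaussian d μ y w = 0 :=
  if_neg hw.not_gt

lemma driftGaussian_of_pos (d μ y : ℝ) {w : ℝ} (hw : 0 < w) :
    driftGaussian d μ y w = w ^ (-(3 / 2 : ℝ)) * exp (-(y - μ * w) ^ 2 / (4 * d * w)) :=
  if_pos hw

lemma driftGaussian_nonneg (d μ y w : ℝ) : 0 ≤ driftGaussian d μ y w := by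
  unfold driftGaussian
  split_ifs <;> positivity

lemma measurable_driftGaussian (d μ : ℝ) : Measurable (Function.uncurry (driftGaussian d μ)) := by
  unfold driftGaussian Function.uncurry
  refine Measurable.ite (measurableSet_lt measurable_const measurable_snd) ?_ measurable_const
  fun_prop

lemma firstPassageDw_eq {d : ℝ} (hd : d ≠ 0) (μ y w : ℝ) :
    firstPassageDw d μ y w = d * firstPassageDxx d μ y w - μ * firstPassageDx d μ y w := by
  unfold firstPassageDw firstPassageDxx firstPassageDx
  rcases le_or_gt w 0 with hw | hw
  · simp only [driftGaussian_of_nonpos d μ y hw, mul_zero, sub_zero]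
  · field_simp
    ring

lemma exp_neg_sq_div_mul_pow_le {d w : ℝ} (hd : 0 < d) (hw : 0 < w) (y : ℝ) (n : ℕ) :
    exp (-(y ^ 2 / (4 * d * w))) * y ^ (2 * n) ≤ n.factorial * (4 * d) ^ n * w ^ n := by
  have hexp := pow_div_factorial_le_exp (y ^ 2 / (4 * d * w)) (by positivity) n
  rw [div_le_iff₀ (by positivity)] at hexp
  have hpow : y ^ (2 * n) = (y ^ 2 / (4 * d * w)) ^ n * ((4 * d) ^ n * w ^ n) := by
    rw [← mul_pow, ← mul_pow, div_mul_cancel₀ _ (by positivity), pow_mul]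
  rw [hpow, exp_neg, inv_mul_le_iff₀ (exp_pos _)]
  calc _ ≤ (exp (y ^ 2 / (4 * d * w)) * n.factorial) * ((4 * d) ^ n * w ^ n) := by gcongr
    _ = _ := by ring

lemma exp_drift_eq {d w : ℝ} (hd : d ≠ 0) (hw : w ≠ 0) (μ y : ℝ) :
    exp (-(y - μ * w) ^ 2 / (4 * d * w)) =
      exp (μ * y / (2 * d)) * exp (-(μ ^ 2 * w / (4 * d))) * exp (-(y ^ 2 / (4 * d * w))) := by
  rw [← exp_add, ← exp_add]
  congr 1
  field_simp
  ring

lemma exp_drift_le {d w : ℝ} (hd : 0 < d) (hw : 0 < w) (μ y : ℝ) :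
    exp (-(y - μ * w) ^ 2 / (4 * d * w)) ≤
      exp (|μ| * |y| / (2 * d)) * exp (-(y ^ 2 / (4 * d * w))) := by
  rw [exp_drift_eq hd.ne' hw.ne', ← exp_add (μ * y / (2 * d)), ← abs_mul]
  gcongr
  have hlin : μ * y / (2 * d) ≤ |μ * y| / (2 * d) := by gcongr; exact le_abs_self _
  have hsq : 0 ≤ μ ^ 2 * w / (4 * d) := by positivity
  linarith

lemma driftGaussian_mul_sq_le {d : ℝ} (hd : 0 < d) (μ : ℝ) {y w T : ℝ} (hw : 0 < w) (hT : w ≤ T) :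
    driftGaussian d μ y w * w ^ 2 ≤
      √T * exp (|μ| * |y| / (2 * d)) * exp (-(y ^ 2 / (4 * d * w))) := by
  have hrpow : w ^ (-(3 / 2 : ℝ)) * w ^ 2 = √w := by
    rw [← rpow_natCast, ← rpow_add hw, sqrt_eq_rpow]
    norm_num
  rw [driftGaussian_of_pos _ _ _ hw, mul_right_comm, hrpow, mul_assoc √T]
  exact mul_le_mul (sqrt_le_sqrt hT) (exp_drift_le hd hw μ y) (exp_pos _).le (sqrt_nonneg T)

lemma firstPassage_of_nonpos (d μ y : ℝ) {w : ℝ} (hw : w ≤ 0) : firstPassage d μ y w = 0 := by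
  rw [firstPassage, driftGaussian_of_nonpos d μ y hw, mul_zero]

lemma firstPassage_of_pos (d μ y : ℝ) {w : ℝ} (hw : 0 < w) :
    firstPassage d μ y w =
      y * (w ^ (-(3 / 2 : ℝ)) * exp (-(y - μ * w) ^ 2 / (4 * d * w))) := by
  rw [firstPassage, driftGaussian_of_pos d μ y hw]

lemma firstPassage_nonneg (d μ : ℝ) {y : ℝ} (hy : 0 ≤ y) (w : ℝ) : 0 ≤ firstPassage d μ y w :=
  mul_nonneg hy (driftGaussian_nonneg d μ y w)

end DriftGaussian

namespace IsFlatKernel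

variable {D : ℝ → ℝ → ℝ}

lemma of_mul_driftGaussian {d : ℝ} (hd : 0 < d) (μ : ℝ) {p P : ℝ → ℝ → ℝ}
    (hp : Measurable (Function.uncurry p)) (hP : Continuous (Function.uncurry P))
    (hpP : ∀ y w, 0 < w → p y w * w ^ 2 = P y w) :
    IsFlatKernel fun y w => p y w * driftGaussian d μ y w where
  measurable := hp.mul (measurable_driftGaussian d μ)
  eq_zero y w hw := by rw [driftGaussian_of_nonpos d μ y hw, mul_zero]
  bound Y T k := by
    obtain ⟨C, hC⟩ := (isCompact_Icc (a := ((0 : ℝ), (0 : ℝ)))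
      (b := (Y, T))).exists_bound_of_continuousOn hP.continuousOn
    refine ⟨2 * (k + 4), |C| * (√T * exp (|μ| * Y / (2 * d))) *
      ((k + 4).factorial * (4 * d) ^ (k + 4)), by positivity, fun y w hy hyY hw hwT => ?_⟩
    have hPC : |p y w| * w ^ 2 ≤ |C| := by
      rw [← abs_of_pos (pow_pos hw 2), ← abs_mul, hpP y w hw]
      exact (hC (y, w) ⟨⟨hy.le, hw.le⟩, ⟨hyY, hwT⟩⟩).trans (le_abs_self C)
    have hgauss : driftGaussian d μ y w * w ^ 2 ≤
        √T * exp (|μ| * Y / (2 * d)) * exp (-(y ^ 2 / (4 * d * w))) :=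
      (driftGaussian_mul_sq_le hd μ hw hwT).trans (by rw [abs_of_pos hy]; gcongr)
    have hpow := exp_neg_sq_div_mul_pow_le hd hw y (k + 4)
    have hG0 := driftGaussian_nonneg d μ y w
    refine le_of_mul_le_mul_right ?_ (pow_pos hw 4)
    rw [abs_mul, abs_of_nonneg hG0]
    calc |p y w| * driftGaussian d μ y w * y ^ (2 * (k + 4)) * w ^ 4
        = (|p y w| * w ^ 2) * (driftGaussian d μ y w * w ^ 2) * y ^ (2 * (k + 4)) := by ring
      _ ≤ |C| * (√T * exp (|μ| * Y / (2 * d)) * exp (-(y ^ 2 / (4 * d * w)))) *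
          y ^ (2 * (k + 4)) := by gcongr
      _ = |C| * (√T * exp (|μ| * Y / (2 * d))) *
          (exp (-(y ^ 2 / (4 * d * w))) * y ^ (2 * (k + 4))) := by ring
      _ ≤ |C| * (√T * exp (|μ| * Y / (2 * d))) *
          ((k + 4).factorial * (4 * d) ^ (k + 4) * w ^ (k + 4)) := by gcongr
      _ = _ := by ring

lemma abs_le_pow (h : IsFlatKernel D) {y₁ : ℝ} (hy₁ : 0 < y₁) (Y T : ℝ) (k : ℕ) :
    ∃ C, 0 ≤ C ∧ ∀ y w, y₁ ≤ y → y ≤ Y → w ≤ T → |D y w| ≤ C * |w| ^ k := by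
  obtain ⟨m, C, hC0, hC⟩ := h.bound Y T k
  refine ⟨C / y₁ ^ m, by positivity, fun y w hy hY hT => ?_⟩
  rcases le_or_gt w 0 with hw | hw
  · rw [h.eq_zero y w hw, abs_zero]
    positivity
  · rw [abs_of_pos hw, div_mul_eq_mul_div, le_div_iff₀ (by positivity)]
    calc |D y w| * y₁ ^ m ≤ |D y w| * y ^ m := by gcongr
      _ ≤ C * w ^ k := hC y w (hy₁.trans_le hy) hY hw hT

lemma abs_mul_pow_le (h : IsFlatKernel D) (Y T : ℝ) :
    ∃ (m : ℕ) (C : ℝ), 0 ≤ C ∧ ∀ y w, 0 < y → y ≤ Y → w ≤ T → |D y w| * y ^ m ≤ C := by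
  obtain ⟨m, C, hC0, hC⟩ := h.bound Y T 0
  refine ⟨m, C, hC0, fun y w hy hY hT => ?_⟩
  rcases le_or_gt w 0 with hw | hw
  · rwa [h.eq_zero y w hw, abs_zero, zero_mul]
  · simpa only [pow_zero, mul_one] using hC y w hy hY hw hT

lemma hasDerivAt_of_nonpos (h : IsFlatKernel D) {y w : ℝ → ℝ} {s : ℝ} (hy : ContinuousAt y s)
    (hw : DifferentiableAt ℝ w s) (hy0 : 0 < y s) (hw0 : w s ≤ 0) :
    HasDerivAt (fun σ => D (y σ) (w σ)) 0 s := by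
  rcases hw0.lt_or_eq with hneg | hzero
  · refine (hasDerivAt_const s (0 : ℝ)).congr_of_eventuallyEq ?_
    filter_upwards [hw.continuousAt.eventually_lt continuousAt_const hneg] with σ hσ
    exact h.eq_zero _ _ hσ.le
  · obtain ⟨C, -, hC⟩ := h.abs_le_pow (half_pos hy0) (y s + 1) 1 2
    refine hasDerivAt_zero_of_isBigO_sq
      (.trans (.of_bound C ?_) (hw.isBigO_sub.pow 2))
    filter_upwards [hw.continuousAt.eventually_lt continuousAt_const (hw0.trans_lt one_pos),
      hy.eventually_lt continuousAt_const (lt_add_one (y s)),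
      continuousAt_const.eventually_lt hy (half_lt_self hy0)] with σ hwσ hyσ hyσ'
    rw [hzero, sub_zero, norm_pow]
    exact hC _ _ hyσ'.le hyσ.le hwσ.le

end IsFlatKernel

section FirstPassage

variable {d : ℝ} (hd : 0 < d) (μ : ℝ)

include hd

lemma isFlatKernel_firstPassage : IsFlatKernel (firstPassage d μ) :=
  .of_mul_driftGaussian hd μ (p := fun y _ => y) (P := fun y w => y * w ^ 2)
    measurable_fst (by fun_prop) (fun _ _ _ => rfl)

lemma isFlatKernel_firstPassageDx : IsFlatKernel (firstPassageDx d μ) :=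
  .of_mul_driftGaussian hd μ (P := fun y w => w ^ 2 - y * (y - μ * w) * w / (2 * d))
    (by fun_prop) (by fun_prop) (fun y w hw => by field_simp)

lemma isFlatKernel_firstPassageDxx : IsFlatKernel (firstPassageDxx d μ) :=
  .of_mul_driftGaussian hd μ
    (P := fun y w => -(y - μ * w) / (2 * d) * (w - y * ((y - μ * w) / (2 * d)))
      - (2 * y - μ * w) * w / (2 * d))
    (by fun_prop) (by fun_prop) (fun y w hw => by field_simp)

lemma isFlatKernel_firstPassageDw : IsFlatKernel (firstPassageDw d μ) :=
  .of_mul_driftGaussian hd μ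
    (P := fun y w => y * (-3 / 2 * w + y ^ 2 / (4 * d) - μ ^ 2 * w ^ 2 / (4 * d)))
    (by fun_prop) (by fun_prop) (fun y w hw => by field_simp)

lemma hasDerivAt_firstPassage_of_pos {y w : ℝ → ℝ} {y' w' s : ℝ}
    (hy : HasDerivAt y y' s) (hw : HasDerivAt w w' s) (hw0 : 0 < w s) :
    HasDerivAt (fun σ => firstPassage d μ (y σ) (w σ))
      (firstPassageDx d μ (y s) (w s) * y' + firstPassageDw d μ (y s) (w s) * w') s := by
  have heq : (fun σ => firstPassage d μ (y σ) (w σ)) =ᶠ[𝓝 s] fun σ =>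
      y σ * ((w σ) ^ (-(3 / 2 : ℝ)) * exp (-(y σ - μ * w σ) ^ 2 / (4 * d * w σ))) := by
    filter_upwards [continuousAt_const.eventually_lt hw.continuousAt hw0] with σ hσ
    rw [firstPassage, driftGaussian_of_pos _ _ _ hσ]
  refine HasDerivAt.congr_of_eventuallyEq ?_ heq
  have hpow := hw.rpow_const (p := -(3 / 2 : ℝ)) (Or.inl hw0.ne')
  have hexp := ((((hy.sub (hw.const_mul μ)).pow 2).neg).div (hw.const_mul (4 * d))
    (by positivity : 4 * d * w s ≠ 0)).exp
  refine (hy.mul (hpow.mul hexp)).congr_deriv ?_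
  have hrpow : (w s) ^ (-(3 / 2 : ℝ) - 1) = (w s) ^ (-(3 / 2 : ℝ)) / w s := by
    rw [rpow_sub hw0, rpow_one]
  simp only [Pi.mul_apply, Pi.sub_apply, Pi.neg_apply, Pi.pow_apply, Pi.div_apply, hrpow]
  rw [firstPassageDx, firstPassageDw, driftGaussian_of_pos _ _ _ hw0]
  field_simp
  ring

lemma hasDerivAt_firstPassage {y w : ℝ → ℝ} {y' w' s : ℝ}
    (hy : HasDerivAt y y' s) (hw : HasDerivAt w w' s) (hy0 : 0 < y s) :
    HasDerivAt (fun σ => firstPassage d μ (y σ) (w σ))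
      (firstPassageDx d μ (y s) (w s) * y' + firstPassageDw d μ (y s) (w s) * w') s := by
  rcases le_or_gt (w s) 0 with hw0 | hw0
  · rw [(isFlatKernel_firstPassageDx hd μ).eq_zero _ _ hw0,
      (isFlatKernel_firstPassageDw hd μ).eq_zero _ _ hw0, zero_mul, zero_mul, add_zero]
    exact (isFlatKernel_firstPassage hd μ).hasDerivAt_of_nonpos hy.continuousAt
      hw.differentiableAt hy0 hw0
  · exact hasDerivAt_firstPassage_of_pos hd μ hy hw hw0

lemma hasDerivAt_firstPassage_fst {y : ℝ} (hy : 0 < y) (w : ℝ) :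
    HasDerivAt (fun y => firstPassage d μ y w) (firstPassageDx d μ y w) y := by
  simpa only [mul_one, mul_zero, add_zero] using
    hasDerivAt_firstPassage hd μ (hasDerivAt_id' y) (hasDerivAt_const y w) hy

lemma hasDerivAt_firstPassage_snd {y : ℝ} (hy : 0 < y) (w : ℝ) :
    HasDerivAt (fun w => firstPassage d μ y w) (firstPassageDw d μ y w) w := by
  simpa only [mul_one, mul_zero, zero_add] using
    hasDerivAt_firstPassage hd μ (hasDerivAt_const w y) (hasDerivAt_id' w) hy

lemma hasDerivAt_firstPassageDx (y w : ℝ) :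
    HasDerivAt (fun y => firstPassageDx d μ y w) (firstPassageDxx d μ y w) y := by
  rcases le_or_gt w 0 with hw | hw
  · simp only [(isFlatKernel_firstPassageDx hd μ).eq_zero _ _ hw,
      (isFlatKernel_firstPassageDxx hd μ).eq_zero _ _ hw]
    exact hasDerivAt_const _ _
  · unfold firstPassageDx firstPassageDxx
    simp only [driftGaussian_of_pos _ _ _ hw]
    have hlin : HasDerivAt (fun y => y - μ * w) 1 y := (hasDerivAt_id y).sub_const _
    have hexp := ((hlin.pow 2).neg.div_const (4 * d * w)).exp.const_mul (w ^ (-(3 / 2 : ℝ)))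
    have hpoly := ((hasDerivAt_id y).mul (hlin.div_const (2 * d * w))).const_sub 1
    refine (hpoly.mul hexp).congr_deriv ?_
    simp only [Pi.mul_apply, Pi.neg_apply, Pi.pow_apply, id]
    field_simp
    ring

end FirstPassage

/-- Locally bounded signals that vanish before time zero. -/
structure IsCausal (H : ℝ → ℝ) : Prop where
  measurable : Measurable H
  eq_zero : ∀ r < 0, H r = 0
  bound : ∀ T, ∃ B, ∀ r ≤ T, |H r| ≤ B

/-- The response at time `s` of the kernel `D y` to the signal `H`, a convolution in time. -/
noncomputable def response (D : ℝ → ℝ → ℝ) (H : ℝ → ℝ) (y s : ℝ) : ℝ :=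
  ∫ w, D y w * H (s - w)

/-- Two kernels in cascade: the response of `D₂` at level `z + α * τ` is the input of `D₁` at
level `x` with delay `τ`. -/
noncomputable def cascade (α : ℝ) (H : ℝ → ℝ) (D₁ D₂ : ℝ → ℝ → ℝ) (x z t : ℝ) : ℝ :=
  ∫ τ, D₁ x τ * response D₂ H (z + α * τ) (t - τ)

/-- The integrand of `cascade` as a double integral, over the delay `p.1` and the time `p.2` at
which the signal is read. -/
def cascadeIntegrand (α : ℝ) (H : ℝ → ℝ) (D₁ D₂ : ℝ → ℝ → ℝ) (x z t : ℝ) (p : ℝ × ℝ) : ℝ :=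
  D₁ x p.1 * D₂ (z + α * p.1) (t - p.1 - p.2) * H p.2

lemma IsCausal.indicator_Ici {h : ℝ → ℝ} (hcont : ContinuousOn h (Ici 0)) :
    IsCausal ((Ici 0).indicator h) where
  measurable := hcont.measurable_piecewise continuousOn_const measurableSet_Ici
  eq_zero r hr := indicator_of_notMem (notMem_Ici.2 hr) h
  bound T := by
    obtain ⟨B, hB⟩ := (isCompact_Icc (a := (0 : ℝ)) (b := T)).exists_bound_of_continuousOn
      (hcont.mono Icc_subset_Ici_self)
    refine ⟨|B|, fun r hr => ?_⟩
    rcases lt_or_ge r 0 with hneg | hnonneg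
    · rw [indicator_of_notMem (notMem_Ici.2 hneg), abs_zero]
      exact abs_nonneg B
    · rw [indicator_of_mem (mem_Ici.2 hnonneg)]
      exact (hB r ⟨hnonneg, hr⟩).trans (le_abs_self B)

section Response

variable {D D' : ℝ → ℝ → ℝ} {H : ℝ → ℝ}

lemma mul_causal_eq_zero (hD : IsFlatKernel D) (hH : IsCausal H) (y : ℝ) {s w : ℝ}
    (hw : w ∉ Icc 0 s) : D y w * H (s - w) = 0 := by
  rcases lt_or_ge w 0 with hneg | hnonneg
  · rw [hD.eq_zero y w hneg.le, zero_mul]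
  · have hsw : s < w := by simpa only [mem_Icc, hnonneg, true_and, not_le] using hw
    rw [hH.eq_zero _ (sub_neg.2 hsw), mul_zero]

lemma response_of_neg (hD : IsFlatKernel D) (hH : IsCausal H) (y : ℝ) {s : ℝ} (hs : s < 0) :
    response D H y s = 0 := by
  refine integral_eq_zero_of_ae (.of_forall fun w => mul_causal_eq_zero hD hH y ?_)
  rw [Icc_eq_empty hs.not_ge]
  exact notMem_empty w

lemma measurable_response (hD : IsFlatKernel D) (hH : IsCausal H) :
    Measurable (Function.uncurry (response D H)) := by
  have hkernel : Measurable fun q : (ℝ × ℝ) × ℝ => D q.1.1 q.2 :=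
    hD.measurable.comp (f := fun q : (ℝ × ℝ) × ℝ => (q.1.1, q.2)) (by fun_prop)
  have hsignal : Measurable fun q : (ℝ × ℝ) × ℝ => H (q.1.2 - q.2) :=
    hH.measurable.comp (by fun_prop)
  exact (hkernel.mul hsignal).stronglyMeasurable.integral_prod_right.measurable

lemma aestronglyMeasurable_mul_causal (hD : IsFlatKernel D) (hH : IsCausal H) (y s : ℝ) :
    AEStronglyMeasurable fun w => D y w * H (s - w) :=
  ((hD.measurable.comp measurable_prodMk_left).mul
    (hH.measurable.comp (measurable_const.sub measurable_id))).aestronglyMeasurable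

lemma exists_integrable_bound_response (hD : IsFlatKernel D) (hH : IsCausal H) (Y T : ℝ) :
    ∃ (m : ℕ) (bound : ℝ → ℝ), Integrable bound ∧
      ∀ y s w, 0 < y → y ≤ Y → s ≤ T → |D y w * H (s - w)| * y ^ m ≤ bound w := by
  obtain ⟨m, C, hC0, hC⟩ := hD.abs_mul_pow_le Y T
  obtain ⟨B, hB⟩ := hH.bound T
  refine ⟨m, (Icc 0 T).indicator fun _ => C * B,
    (integrableOn_const measure_Icc_lt_top.ne).integrable_indicator measurableSet_Icc,
    fun y s w hy hY hs => ?_⟩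
  by_cases hw : w ∈ Icc 0 s
  · rw [indicator_of_mem (Icc_subset_Icc_right hs hw), abs_mul, mul_right_comm]
    exact mul_le_mul (hC y w hy hY (hw.2.trans hs)) (hB _ (by linarith [hw.1])) (abs_nonneg _) hC0
  · rw [mul_causal_eq_zero hD hH y hw, abs_zero, zero_mul]
    exact indicator_nonneg (fun _ _ => mul_nonneg hC0 ((abs_nonneg _).trans (hB T le_rfl))) w

lemma abs_response_mul_pow_le (hD : IsFlatKernel D) (hH : IsCausal H) (Y T : ℝ) :
    ∃ (m : ℕ) (C : ℝ), ∀ y s, 0 < y → y ≤ Y → s ≤ T → |response D H y s| * y ^ m ≤ C := by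
  obtain ⟨m, bound, hint, hbound⟩ := exists_integrable_bound_response hD hH Y T
  refine ⟨m, ∫ w, bound w, fun y s hy hY hs => ?_⟩
  rw [response, ← abs_of_pos (pow_pos hy m), ← abs_mul, ← integral_mul_const, ← norm_eq_abs]
  refine norm_integral_le_of_norm_le hint (.of_forall fun w => ?_)
  rw [norm_eq_abs, abs_mul, abs_of_pos (pow_pos hy m)]
  exact hbound y s w hy hY hs

lemma integrable_mul_causal (hD : IsFlatKernel D) (hH : IsCausal H) {y : ℝ} (hy : 0 < y) (s : ℝ) :
    Integrable fun w => D y w * H (s - w) := by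
  obtain ⟨m, bound, hint, hbound⟩ := exists_integrable_bound_response hD hH y s
  refine (hint.div_const (y ^ m)).mono' (aestronglyMeasurable_mul_causal hD hH y s)
    (.of_forall fun w => ?_)
  rw [le_div_iff₀ (by positivity)]
  exact hbound y s w hy le_rfl le_rfl

lemma hasDerivAt_response (hD : IsFlatKernel D) (hD' : IsFlatKernel D') (hH : IsCausal H)
    (hderiv : ∀ y w, 0 < y → HasDerivAt (fun y => D y w) (D' y w) y) {y : ℝ} (hy : 0 < y) (s : ℝ) :
    HasDerivAt (fun y => response D H y s) (response D' H y s) y := by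
  obtain ⟨m, bound, hint, hbound⟩ := exists_integrable_bound_response hD' hH (y + 1) s
  refine (hasDerivAt_integral_of_dominated_loc_of_deriv_le
    (F := fun y w => D y w * H (s - w)) (F' := fun y w => D' y w * H (s - w))
    (Ioo_mem_nhds (half_lt_self hy) (lt_add_one y))
    (.of_forall fun η => aestronglyMeasurable_mul_causal hD hH η s)
    (integrable_mul_causal hD hH hy s) (aestronglyMeasurable_mul_causal hD' hH y s)
    (.of_forall fun w η hη => ?_) (hint.div_const ((y / 2) ^ m)) (.of_forall fun w η hη => ?_)).2
  · have hη0 : 0 < η := (half_pos hy).trans hη.1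
    rw [le_div_iff₀ (by positivity)]
    calc ‖D' η w * H (s - w)‖ * (y / 2) ^ m ≤ |D' η w * H (s - w)| * η ^ m := by
          rw [norm_eq_abs]
          gcongr
          exact hη.1.le
      _ ≤ bound w := hbound η s w hη0 hη.2.le le_rfl
  · exact (hderiv η w ((half_pos hy).trans hη.1)).mul_const _

lemma abs_response_add_sub_mul_pow_le_of_near (hD : IsFlatKernel D) (hD' : IsFlatKernel D')
    (hH : IsCausal H) (hderiv : ∀ y w, 0 < y → HasDerivAt (fun y => D y w) (D' y w) y) (Y T : ℝ) :
    ∃ (m : ℕ) (C : ℝ), ∀ y z s, 0 < y → y ≤ Y → |z| ≤ y / 2 → s ≤ T →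
      |response D H (y + z) s - response D H y s| * y ^ m ≤ C * |z| := by
  obtain ⟨m, C, hC⟩ := abs_response_mul_pow_le hD' hH (2 * Y) T
  refine ⟨m, C * 2 ^ m, fun y z s hy hY hz hs => ?_⟩
  have hseg : ∀ η ∈ uIcc y (y + z), y / 2 ≤ η ∧ η ≤ 2 * Y := fun η hη => by
    have hdist := abs_sub_left_of_mem_uIcc hη
    rw [add_sub_cancel_left] at hdist
    have hη' := abs_le.1 (hdist.trans hz)
    constructor <;> linarith
  have hslope : ∀ η ∈ uIcc y (y + z), ‖response D' H η s‖ ≤ C * 2 ^ m / y ^ m := fun η hη => by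
    obtain ⟨hη₁, hη₂⟩ := hseg η hη
    rw [le_div_iff₀ (by positivity), norm_eq_abs]
    calc |response D' H η s| * y ^ m = |response D' H η s| * (y / 2) ^ m * 2 ^ m := by
          rw [div_pow]; field_simp
      _ ≤ |response D' H η s| * η ^ m * 2 ^ m := by gcongr
      _ ≤ C * 2 ^ m := by gcongr; exact hC η s ((half_pos hy).trans_le hη₁) hη₂ hs
  have hmvt := (convex_uIcc y (y + z)).norm_image_sub_le_of_norm_hasDerivWithin_le
    (fun η hη => (hasDerivAt_response hD hD' hH hderiv
      ((half_pos hy).trans_le (hseg η hη).1) s).hasDerivWithinAt) hslope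
    left_mem_uIcc right_mem_uIcc
  rwa [add_sub_cancel_left, norm_eq_abs, norm_eq_abs, div_mul_eq_mul_div,
    le_div_iff₀ (by positivity)] at hmvt

lemma abs_response_add_sub_mul_pow_le (hD : IsFlatKernel D) (hD' : IsFlatKernel D')
    (hH : IsCausal H) (hderiv : ∀ y w, 0 < y → HasDerivAt (fun y => D y w) (D' y w) y) {Y T M : ℝ}
    (hM : ∀ y s, |y| ≤ Y + 1 → s ≤ T → |response D H y s| ≤ M) :
    ∃ (m : ℕ) (C : ℝ), ∀ y z s, 0 < y → y ≤ Y → |z| ≤ 1 → s ≤ T →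
      |response D H (y + z) s - response D H y s| * y ^ m ≤ C * |z| := by
  obtain ⟨m, C, hC⟩ := abs_response_add_sub_mul_pow_le_of_near hD hD' hH hderiv Y T
  refine ⟨m + 1, |C| * Y + 4 * |M| * Y ^ m, fun y z s hy hY hz hs => ?_⟩
  have hY0 : 0 < Y := hy.trans_le hY
  rw [add_mul]
  rcases le_or_gt |z| (y / 2) with hnear | hfar
  · refine le_add_of_le_of_nonneg ?_ (by positivity)
    calc _ = |response D H (y + z) s - response D H y s| * y ^ m * y := by ring
      _ ≤ |C| * |z| * Y :=
        mul_le_mul ((hC y z s hy hY hnear hs).trans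
          (mul_le_mul_of_nonneg_right (le_abs_self C) (abs_nonneg z))) hY hy.le (by positivity)
      _ = _ := by ring
  · refine le_add_of_nonneg_of_le (by positivity) ?_
    have hz' := abs_le.1 hz
    have hdiff : |response D H (y + z) s - response D H y s| ≤ |M| + |M| :=
      (abs_sub _ _).trans (add_le_add
        ((hM _ s (abs_le.2 ⟨by linarith, by linarith⟩) hs).trans (le_abs_self M))
        ((hM y s (abs_le.2 ⟨by linarith, by linarith⟩) hs).trans (le_abs_self M)))
    calc _ ≤ (|M| + |M|) * (Y ^ m * (2 * |z|)) := by
          rw [pow_succ]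
          gcongr
          linarith
      _ = _ := by ring

end Response

section Cascade

variable {α x z t T : ℝ} {H : ℝ → ℝ} {D₁ D₁' D₂ D₂' : ℝ → ℝ → ℝ}

lemma cascadeIntegrand_eq_zero (h₁ : IsFlatKernel D₁) (h₂ : IsFlatKernel D₂) (hH : IsCausal H)
    (α x z : ℝ) (ht : t ≤ T) {p : ℝ × ℝ} (hp : ¬(0 < p.1 ∧ p ∈ Icc (0, 0) (T, T))) :
    cascadeIntegrand α H D₁ D₂ x z t p = 0 := by
  rw [cascadeIntegrand]
  rcases le_or_gt p.1 0 with hτ | hτ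
  · rw [h₁.eq_zero x p.1 hτ, zero_mul, zero_mul]
  rcases lt_or_ge p.2 0 with hr | hr
  · rw [hH.eq_zero p.2 hr, mul_zero]
  · have hlate : t - p.1 - p.2 ≤ 0 := by
      by_contra hpos
      exact hp ⟨hτ, ⟨hτ.le, hr⟩, ⟨by linarith, by linarith⟩⟩
    rw [h₂.eq_zero _ _ hlate, mul_zero, zero_mul]

lemma measurable_cascadeIntegrand (h₁ : IsFlatKernel D₁) (h₂ : IsFlatKernel D₂)
    (hH : IsCausal H) (α x z t : ℝ) : Measurable (cascadeIntegrand α H D₁ D₂ x z t) := by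
  have hfst : Measurable fun p : ℝ × ℝ => D₁ x p.1 :=
    h₁.measurable.comp (f := fun p : ℝ × ℝ => (x, p.1)) (by fun_prop)
  have hsnd : Measurable fun p : ℝ × ℝ => D₂ (z + α * p.1) (t - p.1 - p.2) :=
    h₂.measurable.comp (f := fun p : ℝ × ℝ => (z + α * p.1, t - p.1 - p.2)) (by fun_prop)
  exact (hfst.mul hsnd).mul (hH.measurable.comp measurable_snd)

-- The blow-up `(α τ)⁻ᵐ` of the second kernel is absorbed by the flatness of the first.
lemma abs_cascadeIntegrand_le_pow (h₁ : IsFlatKernel D₁) (h₂ : IsFlatKernel D₂) (hH : IsCausal H)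
    (hα : 0 < α) {x₁ : ℝ} (hx₁ : 0 < x₁) (X Z T : ℝ) (n : ℕ) :
    ∃ C, 0 ≤ C ∧ ∀ x z t, x ∈ Icc x₁ X → z ∈ Icc 0 Z → t ≤ T →
      ∀ p, |cascadeIntegrand α H D₁ D₂ x z t p| ≤ C * |p.1| ^ n := by
  obtain ⟨m, C₂, hC₂, hD₂⟩ := h₂.abs_mul_pow_le (Z + α * T) T
  obtain ⟨C₁, hC₁, hD₁⟩ := h₁.abs_le_pow hx₁ X T (n + m)
  obtain ⟨B, hB⟩ := hH.bound T
  have hB0 : 0 ≤ B := (abs_nonneg _).trans (hB T le_rfl)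
  refine ⟨C₁ * (C₂ / α ^ m) * B, by positivity, fun x z t hx hz ht p => ?_⟩
  by_cases hp : 0 < p.1 ∧ p ∈ Icc (0, 0) (T, T)
  · obtain ⟨hτ, ⟨-, hr⟩, hτT, hrT⟩ := hp
    have hy : α * p.1 ≤ z + α * p.1 := le_add_of_nonneg_left hz.1
    have hy0 : 0 < α * p.1 := mul_pos hα hτ
    have hsnd : |D₂ (z + α * p.1) (t - p.1 - p.2)| ≤ C₂ / (α * p.1) ^ m := by
      rw [le_div_iff₀ (by positivity)]
      calc _ ≤ |D₂ (z + α * p.1) (t - p.1 - p.2)| * (z + α * p.1) ^ m := by gcongr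
        _ ≤ C₂ := hD₂ _ _ (hy0.trans_le hy) (add_le_add hz.2 (by gcongr))
          (by linarith [show 0 ≤ p.2 from hr])
    rw [cascadeIntegrand, abs_mul, abs_mul]
    calc _ ≤ C₁ * |p.1| ^ (n + m) * (C₂ / (α * p.1) ^ m) * B := by
          gcongr
          exacts [hD₁ x p.1 hx.1 hx.2 hτT, hB _ hrT]
      _ = _ := by
          rw [abs_of_pos hτ, pow_add, mul_pow]
          field_simp
  · rw [cascadeIntegrand_eq_zero h₁ h₂ hH α x z ht hp, abs_zero]
    positivity

lemma exists_integrable_bound_cascadeIntegrand (h₁ : IsFlatKernel D₁) (h₂ : IsFlatKernel D₂)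
    (hH : IsCausal H) (hα : 0 < α) {x₁ : ℝ} (hx₁ : 0 < x₁) (X Z T : ℝ) :
    ∃ bound : ℝ × ℝ → ℝ, Integrable bound ∧ ∀ x z t, x ∈ Icc x₁ X → z ∈ Icc 0 Z → t ≤ T →
      ∀ p, ‖cascadeIntegrand α H D₁ D₂ x z t p‖ ≤ bound p := by
  obtain ⟨C, hC0, hC⟩ := abs_cascadeIntegrand_le_pow h₁ h₂ hH hα hx₁ X Z T 0
  refine ⟨(Icc (0, 0) (T, T)).indicator fun _ => C,
    (integrableOn_const isCompact_Icc.measure_lt_top.ne).integrable_indicator measurableSet_Icc,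
    fun x z t hx hz ht p => ?_⟩
  by_cases hp : p ∈ Icc ((0 : ℝ), (0 : ℝ)) (T, T)
  · rw [indicator_of_mem hp]
    simpa only [pow_zero, mul_one, norm_eq_abs] using hC x z t hx hz ht p
  · rw [cascadeIntegrand_eq_zero h₁ h₂ hH α x z ht (fun hp' => hp hp'.2), norm_zero]
    exact indicator_nonneg (fun _ _ => hC0) p

lemma integrable_cascadeIntegrand (h₁ : IsFlatKernel D₁) (h₂ : IsFlatKernel D₂) (hH : IsCausal H)
    (hα : 0 < α) (hx : 0 < x) (hz : 0 ≤ z) (t : ℝ) :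
    Integrable (cascadeIntegrand α H D₁ D₂ x z t) := by
  obtain ⟨bound, hint, hbound⟩ := exists_integrable_bound_cascadeIntegrand h₁ h₂ hH hα hx x z t
  exact hint.mono' (measurable_cascadeIntegrand h₁ h₂ hH α x z t).aestronglyMeasurable
    (.of_forall (hbound x z t ⟨le_rfl, le_rfl⟩ ⟨hz, le_rfl⟩ le_rfl))

lemma integral_cascadeIntegrand_snd (α : ℝ) (H : ℝ → ℝ) (D₁ D₂ : ℝ → ℝ → ℝ) (x z t τ : ℝ) :
    ∫ r, cascadeIntegrand α H D₁ D₂ x z t (τ, r) =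
      D₁ x τ * response D₂ H (z + α * τ) (t - τ) := by
  simp only [cascadeIntegrand, mul_assoc, integral_const_mul]
  rw [response, ← integral_sub_left_eq_self _ volume (t - τ)]
  simp only [sub_sub_cancel]

lemma cascade_eq_integral (h₁ : IsFlatKernel D₁) (h₂ : IsFlatKernel D₂) (hH : IsCausal H)
    (hα : 0 < α) (hx : 0 < x) (hz : 0 ≤ z) (t : ℝ) :
    cascade α H D₁ D₂ x z t = ∫ p, cascadeIntegrand α H D₁ D₂ x z t p := by
  rw [Measure.volume_eq_prod, integral_prod _ (integrable_cascadeIntegrand h₁ h₂ hH hα hx hz t)]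
  simp only [integral_cascadeIntegrand_snd]
  rfl

lemma hasDerivAt_cascade_x (h₁ : IsFlatKernel D₁) (h₁' : IsFlatKernel D₁') (h₂ : IsFlatKernel D₂)
    (hH : IsCausal H) (hα : 0 < α)
    (hderiv : ∀ x τ, 0 < x → HasDerivAt (fun x => D₁ x τ) (D₁' x τ) x)
    (hx : 0 < x) (hz : 0 ≤ z) (t : ℝ) :
    HasDerivAt (fun x => cascade α H D₁ D₂ x z t) (cascade α H D₁' D₂ x z t) x := by
  obtain ⟨bound, hint, hbound⟩ :=
    exists_integrable_bound_cascadeIntegrand h₁' h₂ hH hα (half_pos hx) (x + 1) z t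
  rw [cascade_eq_integral h₁' h₂ hH hα hx hz]
  refine HasDerivAt.congr_of_eventuallyEq ?_
    ((lt_mem_nhds hx).mono fun ξ hξ => cascade_eq_integral h₁ h₂ hH hα hξ hz t)
  refine (hasDerivAt_integral_of_dominated_loc_of_deriv_le
    (F := fun x p => cascadeIntegrand α H D₁ D₂ x z t p)
    (F' := fun x p => cascadeIntegrand α H D₁' D₂ x z t p)
    (Ioo_mem_nhds (half_lt_self hx) (lt_add_one x))
    (.of_forall fun ξ => (measurable_cascadeIntegrand h₁ h₂ hH α ξ z t).aestronglyMeasurable)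
    (integrable_cascadeIntegrand h₁ h₂ hH hα hx hz t)
    (measurable_cascadeIntegrand h₁' h₂ hH α x z t).aestronglyMeasurable
    (.of_forall fun p ξ hξ => hbound ξ z t (Ioo_subset_Icc_self hξ) ⟨hz, le_rfl⟩ le_rfl p) hint
    (.of_forall fun p ξ hξ => ?_)).2
  exact ((hderiv ξ p.1 ((half_pos hx).trans hξ.1)).mul_const _).mul_const _

lemma hasDerivAt_cascade_z (h₁ : IsFlatKernel D₁) (h₂ : IsFlatKernel D₂) (h₂' : IsFlatKernel D₂')
    (hH : IsCausal H) (hα : 0 < α)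
    (hderiv : ∀ y w, 0 < y → HasDerivAt (fun y => D₂ y w) (D₂' y w) y)
    (hx : 0 < x) (hz : 0 < z) (t : ℝ) :
    HasDerivAt (fun z => cascade α H D₁ D₂ x z t) (cascade α H D₁ D₂' x z t) z := by
  obtain ⟨bound, hint, hbound⟩ :=
    exists_integrable_bound_cascadeIntegrand h₁ h₂' hH hα hx x (z + 1) t
  rw [cascade_eq_integral h₁ h₂' hH hα hx hz.le]
  refine HasDerivAt.congr_of_eventuallyEq ?_
    ((lt_mem_nhds hz).mono fun ζ hζ => cascade_eq_integral h₁ h₂ hH hα hx (le_of_lt hζ) t)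
  refine (hasDerivAt_integral_of_dominated_loc_of_deriv_le
    (F := fun z p => cascadeIntegrand α H D₁ D₂ x z t p)
    (F' := fun z p => cascadeIntegrand α H D₁ D₂' x z t p)
    (Ioo_mem_nhds hz (lt_add_one z))
    (.of_forall fun ζ => (measurable_cascadeIntegrand h₁ h₂ hH α x ζ t).aestronglyMeasurable)
    (integrable_cascadeIntegrand h₁ h₂ hH hα hx hz.le t)
    (measurable_cascadeIntegrand h₁ h₂' hH α x z t).aestronglyMeasurable
    (.of_forall fun p ζ hζ => hbound x ζ t ⟨le_rfl, le_rfl⟩ (Ioo_subset_Icc_self hζ) le_rfl p) hint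
    (.of_forall fun p ζ hζ => ?_)).2
  rcases le_or_gt p.1 0 with hτ | hτ
  · simp only [cascadeIntegrand, h₁.eq_zero x p.1 hτ, zero_mul]
    exact hasDerivAt_const ζ 0
  · have hpos : 0 < ζ + α * p.1 := add_pos hζ.1 (mul_pos hα hτ)
    exact (((hderiv _ (t - p.1 - p.2) hpos).comp_add_const ζ (α * p.1)).const_mul _).mul_const _

lemma hasDerivAt_cascade_t (h₁ : IsFlatKernel D₁) (h₂ : IsFlatKernel D₂) (h₂' : IsFlatKernel D₂')
    (hH : IsCausal H) (hα : 0 < α)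
    (hderiv : ∀ y w, 0 < y → HasDerivAt (fun w => D₂ y w) (D₂' y w) w)
    (hx : 0 < x) (hz : 0 ≤ z) (t : ℝ) :
    HasDerivAt (fun t => cascade α H D₁ D₂ x z t) (cascade α H D₁ D₂' x z t) t := by
  obtain ⟨bound, hint, hbound⟩ :=
    exists_integrable_bound_cascadeIntegrand h₁ h₂' hH hα hx x z (t + 1)
  simp only [cascade_eq_integral h₁ h₂ hH hα hx hz, cascade_eq_integral h₁ h₂' hH hα hx hz]
  refine (hasDerivAt_integral_of_dominated_loc_of_deriv_le
    (F := fun t p => cascadeIntegrand α H D₁ D₂ x z t p)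
    (F' := fun t p => cascadeIntegrand α H D₁ D₂' x z t p)
    (Iio_mem_nhds (lt_add_one t))
    (.of_forall fun s => (measurable_cascadeIntegrand h₁ h₂ hH α x z s).aestronglyMeasurable)
    (integrable_cascadeIntegrand h₁ h₂ hH hα hx hz t)
    (measurable_cascadeIntegrand h₁ h₂' hH α x z t).aestronglyMeasurable
    (.of_forall fun p s hs => hbound x z s ⟨le_rfl, le_rfl⟩ ⟨hz, le_rfl⟩ (le_of_lt hs) p) hint
    (.of_forall fun p s _ => ?_)).2
  rcases le_or_gt p.1 0 with hτ | hτ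
  · simp only [cascadeIntegrand, h₁.eq_zero x p.1 hτ, zero_mul]
    exact hasDerivAt_const s 0
  · have hpos : 0 < z + α * p.1 := add_pos_of_nonneg_of_pos hz (mul_pos hα hτ)
    simp only [cascadeIntegrand, sub_sub]
    exact (((hderiv _ (s - (p.1 + p.2)) hpos).comp_sub_const s (p.1 + p.2)).const_mul _).mul_const _

lemma exists_integrable_bound_mul_response_sub (h₁ : IsFlatKernel D₁) (h₂ : IsFlatKernel D₂)
    (h₂' : IsFlatKernel D₂') (hH : IsCausal H) (hα : 0 < α)
    (hderiv : ∀ y w, 0 < y → HasDerivAt (fun y => D₂ y w) (D₂' y w) y)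
    (hbound : ∀ Y T, ∃ M, ∀ y s, |y| ≤ Y → s ≤ T → |response D₂ H y s| ≤ M)
    (hx : 0 < x) (hz : 0 ≤ z) (t : ℝ) :
    ∃ bound : ℝ → ℝ, Integrable bound ∧ ∀ τ, ∀ ζ ∈ Metric.closedBall z 1,
      ‖D₁ x τ * response D₂ H (ζ + α * τ) (t - τ) - D₁ x τ * response D₂ H (z + α * τ) (t - τ)‖ ≤
        bound τ * ‖ζ - z‖ := by
  obtain ⟨M, hM⟩ := hbound (z + α * t + 1) t
  obtain ⟨m, C₂, hC₂⟩ := abs_response_add_sub_mul_pow_le h₂ h₂' hH hderiv hM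
  obtain ⟨C₁, hC₁0, hC₁⟩ := h₁.abs_le_pow hx x t m
  refine ⟨(Icc 0 t).indicator fun _ => C₁ * (|C₂| / α ^ m),
    (integrableOn_const measure_Icc_lt_top.ne).integrable_indicator measurableSet_Icc,
    fun τ ζ hζ => ?_⟩
  by_cases hτ : 0 < τ ∧ τ ≤ t
  · obtain ⟨hτ0, hτt⟩ := hτ
    have : 0 < α * τ := mul_pos hα hτ0
    have hsnd : |response D₂ H (ζ + α * τ) (t - τ) - response D₂ H (z + α * τ) (t - τ)| ≤
        |C₂| * |ζ - z| / (α * τ) ^ m := by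
      rw [le_div_iff₀ (by positivity), show ζ + α * τ = z + α * τ + (ζ - z) by ring]
      calc _ ≤ _ * (z + α * τ) ^ m := by gcongr; exact le_add_of_nonneg_left hz
        _ ≤ C₂ * |ζ - z| := hC₂ _ _ _ (by positivity) (by gcongr)
          (by simpa only [dist_eq_norm, norm_eq_abs] using Metric.mem_closedBall.1 hζ)
          (by linarith)
        _ ≤ |C₂| * |ζ - z| := by gcongr; exact le_abs_self C₂
    rw [indicator_of_mem (mem_Icc.2 ⟨hτ0.le, hτt⟩), ← mul_sub, norm_mul, norm_eq_abs, norm_eq_abs,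
      norm_eq_abs]
    calc _ ≤ C₁ * |τ| ^ m * (|C₂| * |ζ - z| / (α * τ) ^ m) := by
          gcongr
          exact hC₁ x τ le_rfl le_rfl hτt
      _ = _ := by
          rw [abs_of_pos hτ0, mul_pow]
          field_simp
  · have hzero : ∀ y, D₁ x τ * response D₂ H y (t - τ) = 0 := fun y => by
      rcases le_or_gt τ 0 with hτ0 | hτ0
      · rw [h₁.eq_zero x τ hτ0, zero_mul]
      · rw [response_of_neg h₂ hH y (by linarith [not_le.1 (not_and.1 hτ hτ0)]), mul_zero]
    rw [hzero, hzero, sub_zero, norm_zero]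
    exact mul_nonneg (indicator_nonneg (fun _ _ => by positivity) τ) (norm_nonneg _)

lemma hasDerivAt_cascade_z_of_response_bounded (h₁ : IsFlatKernel D₁) (h₂ : IsFlatKernel D₂)
    (h₂' : IsFlatKernel D₂') (hH : IsCausal H) (hα : 0 < α)
    (hderiv : ∀ y w, 0 < y → HasDerivAt (fun y => D₂ y w) (D₂' y w) y)
    (hbound : ∀ Y T, ∃ M, ∀ y s, |y| ≤ Y → s ≤ T → |response D₂ H y s| ≤ M)
    (hx : 0 < x) (hz : 0 ≤ z) (t : ℝ) :
    HasDerivAt (fun z => cascade α H D₁ D₂ x z t) (cascade α H D₁ D₂' x z t) z := by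
  obtain ⟨bound, hint, hle⟩ :=
    exists_integrable_bound_mul_response_sub h₁ h₂ h₂' hH hα hderiv hbound hx hz t
  have hmeas : ∀ {D : ℝ → ℝ → ℝ}, IsFlatKernel D → ∀ ζ,
      AEStronglyMeasurable fun τ => D₁ x τ * response D H (ζ + α * τ) (t - τ) := fun hD ζ =>
    ((h₁.measurable.comp measurable_prodMk_left).mul ((measurable_response hD hH).comp
      (f := fun τ => (ζ + α * τ, t - τ)) (by fun_prop))).aestronglyMeasurable
  refine hasDerivAt_integral_of_dominated_loc_of_lip' (Metric.closedBall_mem_nhds z one_pos)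
    (fun ζ _ => hmeas h₂ ζ) ?_ (hmeas h₂' z) (.of_forall hle) hint (.of_forall fun τ => ?_)
  · simpa only [integral_cascadeIntegrand_snd] using
      (integrable_cascadeIntegrand h₁ h₂ hH hα hx hz t).integral_prod_left
  · rcases le_or_gt τ 0 with hτ | hτ
    · simp only [h₁.eq_zero x τ hτ, zero_mul]
      exact hasDerivAt_const z 0
    · have hpos : 0 < z + α * τ := add_pos_of_nonneg_of_pos hz (mul_pos hα hτ)
      exact ((hasDerivAt_response h₂ h₂' hH hderiv hpos (t - τ)).comp_add_const z
        (α * τ)).const_mul _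

lemma cascade_firstPassageDw_fst {d : ℝ} (hd : 0 < d) (μ : ℝ) (h₂ : IsFlatKernel D₂)
    (hH : IsCausal H) (hα : 0 < α) (hx : 0 < x) (hz : 0 ≤ z) (t : ℝ) :
    cascade α H (firstPassageDw d μ) D₂ x z t =
      d * cascade α H (firstPassageDxx d μ) D₂ x z t -
        μ * cascade α H (firstPassageDx d μ) D₂ x z t := by
  have hDx := isFlatKernel_firstPassageDx hd μ
  have hDxx := isFlatKernel_firstPassageDxx hd μ
  rw [cascade_eq_integral (isFlatKernel_firstPassageDw hd μ) h₂ hH hα hx hz,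
    cascade_eq_integral hDx h₂ hH hα hx hz, cascade_eq_integral hDxx h₂ hH hα hx hz,
    ← integral_const_mul, ← integral_const_mul, ← integral_sub
      ((integrable_cascadeIntegrand hDxx h₂ hH hα hx hz t).const_mul d)
      ((integrable_cascadeIntegrand hDx h₂ hH hα hx hz t).const_mul μ)]
  congr 1 with p
  simp only [cascadeIntegrand, firstPassageDw_eq hd.ne']
  ring

lemma cascade_firstPassageDw_snd {d : ℝ} (hd : 0 < d) (μ : ℝ) (h₁ : IsFlatKernel D₁)
    (hH : IsCausal H) (hα : 0 < α) (hx : 0 < x) (hz : 0 ≤ z) (t : ℝ) :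
    cascade α H D₁ (firstPassageDw d μ) x z t =
      d * cascade α H D₁ (firstPassageDxx d μ) x z t -
        μ * cascade α H D₁ (firstPassageDx d μ) x z t := by
  have hDx := isFlatKernel_firstPassageDx hd μ
  have hDxx := isFlatKernel_firstPassageDxx hd μ
  rw [cascade_eq_integral h₁ (isFlatKernel_firstPassageDw hd μ) hH hα hx hz,
    cascade_eq_integral h₁ hDx hH hα hx hz, cascade_eq_integral h₁ hDxx hH hα hx hz,
    ← integral_const_mul, ← integral_const_mul, ← integral_sub
      ((integrable_cascadeIntegrand h₁ hDxx hH hα hx hz t).const_mul d)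
      ((integrable_cascadeIntegrand h₁ hDx hH hα hx hz t).const_mul μ)]
  congr 1 with p
  simp only [cascadeIntegrand, firstPassageDw_eq hd.ne']
  ring

end Cascade

section Transport

variable {d₁ d₂ α x z : ℝ} {H : ℝ → ℝ} (hd₁ : 0 < d₁) (hd₂ : 0 < d₂) (μ₁ μ₂ : ℝ)

include hd₁ hd₂

lemma hasDerivAt_cascadeIntegrand_delay (hH : IsCausal H) (hα : 0 < α) (hx : 0 < x) (hz : 0 ≤ z)
    (t r τ : ℝ) :
    HasDerivAt
      (fun τ => cascadeIntegrand α H (firstPassage d₁ μ₁) (firstPassage d₂ μ₂) x z t (τ, r))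
      (cascadeIntegrand α H (firstPassageDw d₁ μ₁) (firstPassage d₂ μ₂) x z t (τ, r) +
        α * cascadeIntegrand α H (firstPassage d₁ μ₁) (firstPassageDx d₂ μ₂) x z t (τ, r) -
        cascadeIntegrand α H (firstPassage d₁ μ₁) (firstPassageDw d₂ μ₂) x z t (τ, r)) τ := by
  have h₁ := isFlatKernel_firstPassage hd₁ μ₁
  have h₂ := isFlatKernel_firstPassage hd₂ μ₂
  rcases le_or_gt τ 0 with hτ | hτ
  · have hzero : ∀ σ ≤ 0,
        cascadeIntegrand α H (firstPassage d₁ μ₁) (firstPassage d₂ μ₂) x z t (σ, r) = 0 :=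
      fun σ hσ => by rw [cascadeIntegrand, h₁.eq_zero x σ hσ, zero_mul, zero_mul]
    have hzero' : cascadeIntegrand α H (firstPassageDw d₁ μ₁) (firstPassage d₂ μ₂) x z t (τ, r) +
        α * cascadeIntegrand α H (firstPassage d₁ μ₁) (firstPassageDx d₂ μ₂) x z t (τ, r) -
        cascadeIntegrand α H (firstPassage d₁ μ₁) (firstPassageDw d₂ μ₂) x z t (τ, r) = 0 := by
      simp only [cascadeIntegrand, h₁.eq_zero x τ hτ,
        (isFlatKernel_firstPassageDw hd₁ μ₁).eq_zero x τ hτ, zero_mul, mul_zero, add_zero, sub_zero]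
    rw [hzero']
    rcases hτ.lt_or_eq with hneg | rfl
    · exact (hasDerivAt_const τ (0 : ℝ)).congr_of_eventuallyEq
        ((gt_mem_nhds hneg).mono fun σ hσ => hzero σ (le_of_lt hσ))
    · obtain ⟨C, -, hC⟩ := abs_cascadeIntegrand_le_pow h₁ h₂ hH hα hx x z t 2
      refine hasDerivAt_zero_of_isBigO_sq (.of_bound C (.of_forall fun σ => ?_))
      rw [sub_zero, norm_pow]
      exact hC x z t ⟨le_rfl, le_rfl⟩ ⟨hz, le_rfl⟩ le_rfl (σ, r)
  · have hpos : 0 < z + α * τ := add_pos_of_nonneg_of_pos hz (mul_pos hα hτ)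
    have hfst := hasDerivAt_firstPassage_snd hd₁ μ₁ hx τ
    have hsnd := hasDerivAt_firstPassage hd₂ μ₂ (((hasDerivAt_id' τ).const_mul α).const_add z)
      (((hasDerivAt_id' τ).const_sub t).sub_const r) hpos
    refine ((hfst.mul hsnd).mul_const (H r)).congr_deriv ?_
    simp only [cascadeIntegrand]
    ring

-- Integration by parts in the delay `τ`.
lemma cascade_firstPassage_firstPassageDw (hH : IsCausal H) (hα : 0 < α) (hx : 0 < x)
    (hz : 0 ≤ z) (t : ℝ) :
    cascade α H (firstPassage d₁ μ₁) (firstPassageDw d₂ μ₂) x z t =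
      cascade α H (firstPassageDw d₁ μ₁) (firstPassage d₂ μ₂) x z t +
        α * cascade α H (firstPassage d₁ μ₁) (firstPassageDx d₂ μ₂) x z t := by
  have h₁ := isFlatKernel_firstPassage hd₁ μ₁
  have h₂ := isFlatKernel_firstPassage hd₂ μ₂
  have h₁w := isFlatKernel_firstPassageDw hd₁ μ₁
  have h₂x := isFlatKernel_firstPassageDx hd₂ μ₂
  have h₂w := isFlatKernel_firstPassageDw hd₂ μ₂
  have hint := integrable_cascadeIntegrand h₁ h₂ hH hα hx hz t
  have hintX := (integrable_cascadeIntegrand h₁ h₂x hH hα hx hz t).const_mul α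
  have hintWX := (integrable_cascadeIntegrand h₁w h₂ hH hα hx hz t).add hintX
  have hintW := integrable_cascadeIntegrand h₁ h₂w hH hα hx hz t
  have hint' := hintWX.sub hintW
  rw [eq_comm, ← sub_eq_zero, cascade_eq_integral h₁w h₂ hH hα hx hz,
    cascade_eq_integral h₁ h₂x hH hα hx hz, cascade_eq_integral h₁ h₂w hH hα hx hz,
    ← integral_const_mul,
    ← integral_add' (integrable_cascadeIntegrand h₁w h₂ hH hα hx hz t) hintX,
    ← integral_sub' hintWX hintW]
  rw [Measure.volume_eq_prod] at hint hint' ⊢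
  rw [integral_prod_symm _ hint']
  refine integral_eq_zero_of_ae ?_
  filter_upwards [hint.prod_left_ae, hint'.prod_left_ae] with r hr hr'
  exact integral_eq_zero_of_hasDerivAt_of_integrable
    (fun τ => hasDerivAt_cascadeIntegrand_delay hd₁ hd₂ μ₁ μ₂ hH hα hx hz t r τ) hr' hr

end Transport

section Mass

lemma rpow_mul_exp_eq {d w : ℝ} (hw : w ∈ Ioi (0 : ℝ)) :
    w ^ (-(3 / 2 : ℝ)) * exp (-(1 / (4 * d * w))) =
      2 * ((|-(1 / 2 : ℝ)| * w ^ (-(1 / 2 : ℝ) - 1)) •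
        exp (-(1 / (4 * d)) * (w ^ (-(1 / 2 : ℝ))) ^ 2)) := by
  have hsq : (w ^ (-(1 / 2 : ℝ))) ^ 2 = w⁻¹ := by
    rw [← rpow_natCast, ← rpow_mul (mem_Ioi.1 hw).le, ← rpow_neg_one]
    norm_num
  have harg : -(1 / (4 * d)) * w⁻¹ = -(1 / (4 * d * w)) := by
    rw [one_div, one_div, mul_inv (4 * d) w, neg_mul]
  rw [hsq, harg, abs_neg, abs_of_pos one_half_pos, smul_eq_mul,
    show (-(1 / 2 : ℝ) - 1) = -(3 / 2) by norm_num]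
  ring

lemma integrableOn_rpow_mul_exp {d : ℝ} (hd : 0 < d) :
    IntegrableOn (fun w : ℝ => w ^ (-(3 / 2 : ℝ)) * exp (-(1 / (4 * d * w)))) (Ioi 0) := by
  rw [integrableOn_congr_fun (fun w hw => rpow_mul_exp_eq hw) measurableSet_Ioi]
  refine Integrable.const_mul ?_ 2
  exact (integrableOn_Ioi_comp_rpow_iff _ (by norm_num : (-(1 / 2 : ℝ)) ≠ 0)).2
    (integrable_exp_neg_mul_sq (by positivity)).integrableOn

lemma integral_rpow_mul_exp {d : ℝ} (hd : 0 < d) :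
    ∫ w in Ioi (0 : ℝ), w ^ (-(3 / 2 : ℝ)) * exp (-(1 / (4 * d * w))) = 2 * √(π * d) := by
  rw [setIntegral_congr_fun measurableSet_Ioi (fun w hw => rpow_mul_exp_eq hw),
    integral_const_mul,
    integral_comp_rpow_Ioi (fun v => exp (-(1 / (4 * d)) * v ^ 2))
      (by norm_num : (-(1 / 2 : ℝ)) ≠ 0), integral_gaussian_Ioi]
  have hscale : π / (1 / (4 * d)) = 2 ^ 2 * (π * d) := by
    field_simp
    norm_num
  rw [hscale, sqrt_mul (by positivity), sqrt_sq zero_le_two]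
  ring

lemma firstPassage_zero_one_eq_indicator (d : ℝ) :
    firstPassage d 0 1 = (Ioi (0 : ℝ)).indicator
      fun w => w ^ (-(3 / 2 : ℝ)) * exp (-(1 / (4 * d * w))) := by
  ext w
  rcases le_or_gt w 0 with hw | hw
  · rw [indicator_of_notMem (notMem_Ioi.2 hw), firstPassage_of_nonpos d 0 1 hw]
  · rw [indicator_of_mem (mem_Ioi.2 hw), firstPassage_of_pos d 0 1 hw]
    simp only [zero_mul, sub_zero, one_pow, neg_div, one_mul]

lemma sq_mul_firstPassage_sq_mul {d x : ℝ} (hx : 0 < x) (μ σ : ℝ) :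
    x ^ 2 * firstPassage d μ x (x ^ 2 * σ) = firstPassage d (μ * x) 1 σ := by
  rcases le_or_gt σ 0 with hσ | hσ
  · rw [firstPassage_of_nonpos d _ 1 hσ, firstPassage_of_nonpos d μ x
      (mul_nonpos_of_nonneg_of_nonpos (sq_nonneg x) hσ), mul_zero]
  · have hpow : (x ^ 2) ^ (-(3 / 2 : ℝ)) = (x ^ 3)⁻¹ := by
      rw [← rpow_natCast, ← rpow_mul hx.le, ← rpow_natCast x 3, ← rpow_neg hx.le]
      norm_num
    have hexp : -(x - μ * (x ^ 2 * σ)) ^ 2 / (4 * d * (x ^ 2 * σ)) =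
        -(1 - μ * x * σ) ^ 2 / (4 * d * σ) := by
      rw [show -(x - μ * (x ^ 2 * σ)) ^ 2 = x ^ 2 * (-(1 - μ * x * σ) ^ 2) by ring,
        show 4 * d * (x ^ 2 * σ) = x ^ 2 * (4 * d * σ) by ring,
        mul_div_mul_left _ _ (by positivity)]
    rw [firstPassage_of_pos d _ _ hσ, firstPassage_of_pos d _ _ (by positivity),
      mul_rpow (by positivity) hσ.le, hpow, hexp]
    field_simp

lemma integral_firstPassage_mul {d x : ℝ} (hx : 0 < x) (μ : ℝ) (Φ : ℝ → ℝ) :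
    ∫ τ, firstPassage d μ x τ * Φ τ = ∫ σ, firstPassage d (μ * x) 1 σ * Φ (x ^ 2 * σ) := by
  have hx2 : 0 < x ^ 2 := by positivity
  have hsubst := Measure.integral_comp_mul_left (fun τ => firstPassage d μ x τ * Φ τ) (x ^ 2)
  rw [abs_of_pos (inv_pos.2 hx2), smul_eq_mul, eq_inv_mul_iff_mul_eq₀ hx2.ne',
    ← integral_const_mul] at hsubst
  rw [← hsubst]
  congr 1 with σ
  rw [← sq_mul_firstPassage_sq_mul hx, mul_assoc]

lemma integrable_firstPassage_zero {d x : ℝ} (hd : 0 < d) (hx : 0 < x) :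
    Integrable (firstPassage d 0 x) := by
  have hone : Integrable (firstPassage d 0 1) := by
    rw [firstPassage_zero_one_eq_indicator, integrable_indicator_iff measurableSet_Ioi]
    exact integrableOn_rpow_mul_exp hd
  have hx2 : x ^ 2 ≠ 0 := by positivity
  rw [← integrable_comp_mul_left_iff _ hx2, ← integrable_const_mul_iff (IsUnit.mk0 _ hx2)]
  simpa only [sq_mul_firstPassage_sq_mul hx, zero_mul] using hone

lemma integral_firstPassage_zero {d x : ℝ} (hd : 0 < d) (hx : 0 < x) :
    ∫ τ, firstPassage d 0 x τ = 2 * √(π * d) := by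
  have hscale := integral_firstPassage_mul (d := d) hx 0 fun _ => 1
  simp only [mul_one, zero_mul] at hscale
  rw [hscale, firstPassage_zero_one_eq_indicator, integral_indicator measurableSet_Ioi,
    integral_rpow_mul_exp hd]

lemma firstPassage_zero_of_pos (d y : ℝ) {w : ℝ} (hw : 0 < w) :
    firstPassage d 0 y w = y * (w ^ (-(3 / 2 : ℝ)) * exp (-(y ^ 2 / (4 * d * w)))) := by
  rw [firstPassage_of_pos d 0 y hw, zero_mul, sub_zero, neg_div]

lemma abs_firstPassage_le_exp_mul {d : ℝ} (hd : 0 < d) (μ y w : ℝ) :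
    |firstPassage d μ y w| ≤ exp (|μ| * |y| / (2 * d)) * firstPassage d 0 |y| w := by
  rcases le_or_gt w 0 with hw | hw
  · rw [firstPassage_of_nonpos d μ y hw, firstPassage_of_nonpos d 0 _ hw, abs_zero, mul_zero]
  · rw [firstPassage_zero_of_pos d |y| hw, firstPassage_of_pos d μ y hw, sq_abs, abs_mul,
      abs_of_nonneg (a := _ * exp _) (by positivity)]
    calc |y| * (w ^ (-(3 / 2 : ℝ)) * exp (-(y - μ * w) ^ 2 / (4 * d * w)))
        ≤ |y| * (w ^ (-(3 / 2 : ℝ)) *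
            (exp (|μ| * |y| / (2 * d)) * exp (-(y ^ 2 / (4 * d * w))))) := by
          gcongr
          exact exp_drift_le hd hw μ y
      _ = _ := by ring

lemma firstPassage_zero_le_double {d t w y : ℝ} (hd : 0 < d) (hy : 0 ≤ y) (hwt : w ≤ t) :
    firstPassage d 0 y w ≤ exp (-(y ^ 2 / (8 * d * t))) * firstPassage (2 * d) 0 y w := by
  rcases le_or_gt w 0 with hw | hw
  · rw [firstPassage_of_nonpos _ _ _ hw, firstPassage_of_nonpos _ _ _ hw, mul_zero]
  · have hhalf : y ^ 2 / (4 * d * w) = y ^ 2 / (8 * d * w) + y ^ 2 / (4 * (2 * d) * w) := by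
      field_simp
      ring
    rw [firstPassage_zero_of_pos _ _ hw, firstPassage_zero_of_pos _ _ hw, hhalf, neg_add, exp_add]
    calc y * (w ^ (-(3 / 2 : ℝ)) *
          (exp (-(y ^ 2 / (8 * d * w))) * exp (-(y ^ 2 / (4 * (2 * d) * w)))))
        ≤ y * (w ^ (-(3 / 2 : ℝ)) *
          (exp (-(y ^ 2 / (8 * d * t))) * exp (-(y ^ 2 / (4 * (2 * d) * w))))) := by gcongr
      _ = _ := by ring

lemma abs_firstPassage_le {d t w : ℝ} (hd : 0 < d) (μ y : ℝ) (hw : w ≤ t) :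
    |firstPassage d μ y w| ≤
      exp (|μ| * |y| / (2 * d) - y ^ 2 / (8 * d * t)) * firstPassage (2 * d) 0 |y| w := by
  rw [sub_eq_add_neg, exp_add, mul_assoc]
  refine (abs_firstPassage_le_exp_mul hd μ y w).trans ?_
  gcongr
  simpa only [sq_abs] using firstPassage_zero_le_double hd (abs_nonneg y) hw

lemma abs_integral_firstPassage_mul_le {d t C : ℝ} (hd : 0 < d) (μ y : ℝ) (hC : 0 ≤ C)
    {Φ : ℝ → ℝ} (hΦ : ∀ τ, 0 < τ → τ ≤ t → |Φ τ| ≤ C) (hΦ0 : ∀ τ, t < τ → Φ τ = 0) :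
    |∫ τ, firstPassage d μ y τ * Φ τ| ≤
      2 * √(π * (2 * d)) * C * exp (|μ| * |y| / (2 * d) - y ^ 2 / (8 * d * t)) := by
  rcases eq_or_ne y 0 with rfl | hy
  · simp only [firstPassage, zero_mul, integral_zero, abs_zero]
    positivity
  have hy' : 0 < |y| := abs_pos.2 hy
  have h2d : 0 < 2 * d := by positivity
  set E := exp (|μ| * |y| / (2 * d) - y ^ 2 / (8 * d * t))
  have hle : ∀ τ, ‖firstPassage d μ y τ * Φ τ‖ ≤ C * E * firstPassage (2 * d) 0 |y| τ := by
    intro τ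
    have hp : 0 ≤ firstPassage (2 * d) 0 |y| τ := firstPassage_nonneg _ _ (abs_nonneg y) τ
    rcases le_or_gt τ 0 with hτ | hτ
    · rw [firstPassage_of_nonpos _ _ _ hτ, zero_mul, norm_zero]
      positivity
    rcases le_or_gt τ t with hτt | hτt
    · rw [norm_mul, norm_eq_abs, norm_eq_abs]
      calc _ ≤ E * firstPassage (2 * d) 0 |y| τ * C := by
            gcongr
            exacts [abs_firstPassage_le hd μ y hτt, hΦ τ hτ hτt]
        _ = _ := by ring
    · rw [hΦ0 τ hτt, mul_zero, norm_zero]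
      positivity
  calc _ ≤ ∫ τ, C * E * firstPassage (2 * d) 0 |y| τ :=
        norm_integral_le_of_norm_le ((integrable_firstPassage_zero h2d hy').const_mul _)
          (.of_forall hle)
    _ = _ := by
        rw [integral_const_mul, integral_firstPassage_zero h2d hy']
        ring

lemma continuous_firstPassage_drift (d y w : ℝ) : Continuous fun μ => firstPassage d μ y w := by
  rcases le_or_gt w 0 with hw | hw
  · simp only [firstPassage_of_nonpos _ _ _ hw, continuous_const]
  · simp only [firstPassage_of_pos _ _ _ hw]
    fun_prop

lemma tendsto_integral_firstPassage_mul {ι : Type*} {l : Filter ι} [l.IsCountablyGenerated]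
    {d C L : ℝ} (hd : 0 < d) (μ : ℝ) {x : ι → ℝ} (hx : Tendsto x l (𝓝 0))
    (hpos : ∀ᶠ i in l, 0 < x i) {Φ : ι → ℝ → ℝ} (hmeas : ∀ i, Measurable (Φ i))
    (hC : ∀ᶠ i in l, ∀ τ, 0 < τ → |Φ i τ| ≤ C)
    (hlim : ∀ σ, 0 < σ → Tendsto (fun i => Φ i (x i ^ 2 * σ)) l (𝓝 L)) :
    Tendsto (fun i => ∫ τ, firstPassage d μ (x i) τ * Φ i τ) l (𝓝 (2 * √(π * d) * L)) := by
  have hscale : (fun i => ∫ σ, firstPassage d (μ * x i) 1 σ * Φ i (x i ^ 2 * σ)) =ᶠ[l]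
      fun i => ∫ τ, firstPassage d μ (x i) τ * Φ i τ :=
    hpos.mono fun i hi => (integral_firstPassage_mul hi μ (Φ i)).symm
  rw [← integral_firstPassage_zero hd one_pos, ← integral_mul_const]
  refine (tendsto_integral_filter_of_dominated_convergence
    (fun σ => exp (|μ| / (2 * d)) * firstPassage d 0 1 σ * C) ?meas ?bound
    (((integrable_firstPassage_zero hd one_pos).const_mul _).mul_const C) ?lim).congr' hscale
  case meas =>
    exact .of_forall fun i => (((isFlatKernel_firstPassage hd (μ * x i)).measurable.comp
      measurable_prodMk_left).mul ((hmeas i).comp (by fun_prop))).aestronglyMeasurable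
  case bound =>
    filter_upwards [hpos, hC, hx.eventually_lt_const one_pos] with i hi hCi hi1
    refine .of_forall fun σ => ?_
    have hp : 0 ≤ firstPassage d 0 1 σ := firstPassage_nonneg d 0 zero_le_one σ
    rcases le_or_gt σ 0 with hσ | hσ
    · rw [firstPassage_of_nonpos _ _ _ hσ, firstPassage_of_nonpos _ _ _ hσ, zero_mul, norm_zero,
        mul_zero, zero_mul]
    rw [norm_mul, norm_eq_abs, norm_eq_abs]
    gcongr
    · refine (abs_firstPassage_le_exp_mul hd (μ * x i) 1 σ).trans ?_
      rw [abs_one, mul_one, abs_mul, abs_of_pos hi]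
      gcongr
      exact mul_le_of_le_one_right (abs_nonneg μ) hi1.le
    · exact hCi _ (by positivity)
  case lim =>
    refine .of_forall fun σ => ?_
    rcases le_or_gt σ 0 with hσ | hσ
    · simpa only [firstPassage_of_nonpos _ _ _ hσ, zero_mul] using tendsto_const_nhds
    · refine Tendsto.mul ?_ (hlim σ hσ)
      simpa only [mul_zero, Function.comp_def] using
        ((continuous_firstPassage_drift d 1 σ).tendsto (μ * 0)).comp (hx.const_mul μ)

end Mass

section Limits

variable {d d₁ d₂ α B t : ℝ} {H : ℝ → ℝ}

lemma abs_response_firstPassage_le (hd : 0 < d) (μ : ℝ) (hH : IsCausal H)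
    (hB : ∀ r ≤ t, |H r| ≤ B) {s : ℝ} (hst : s ≤ t) (y : ℝ) :
    |response (firstPassage d μ) H y s| ≤
      2 * √(π * (2 * d)) * B * exp (|μ| * |y| / (2 * d) - y ^ 2 / (8 * d * t)) :=
  abs_integral_firstPassage_mul_le hd μ y ((abs_nonneg _).trans (hB t le_rfl))
    (fun w hw _ => hB _ (by linarith)) fun w hw => hH.eq_zero _ (by linarith)

lemma exists_abs_response_firstPassage_le (hd : 0 < d) (μ : ℝ) (hH : IsCausal H) (Y T : ℝ) :
    ∃ M, ∀ y s, |y| ≤ Y → s ≤ T → |response (firstPassage d μ) H y s| ≤ M := by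
  obtain ⟨B, hB⟩ := hH.bound (max T 0)
  have hB0 : 0 ≤ B := (abs_nonneg _).trans (hB 0 (le_max_right T 0))
  refine ⟨2 * √(π * (2 * d)) * B * exp (|μ| * Y / (2 * d)), fun y s hy hs => ?_⟩
  refine (abs_response_firstPassage_le hd μ hH hB (hs.trans (le_max_left T 0)) y).trans ?_
  gcongr
  exact (sub_le_self _ (by positivity)).trans (by gcongr)

lemma tendsto_response_firstPassage {ι : Type*} {l : Filter ι} [l.IsCountablyGenerated]
    (hd : 0 < d) (μ : ℝ) (hH : IsCausal H) {s₀ : ℝ} (hcont : ContinuousAt H s₀) {y s : ι → ℝ}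
    (hy : Tendsto y l (𝓝 0)) (hpos : ∀ᶠ i in l, 0 < y i) (hs : Tendsto s l (𝓝 s₀)) :
    Tendsto (fun i => response (firstPassage d μ) H (y i) (s i)) l
      (𝓝 (2 * √(π * d) * H s₀)) := by
  obtain ⟨B, hB⟩ := hH.bound (s₀ + 1)
  refine tendsto_integral_firstPassage_mul (Φ := fun i w => H (s i - w)) (C := B) hd μ hy hpos
    (fun i => hH.measurable.comp (measurable_const.sub measurable_id)) ?_ fun σ _ => ?_
  · filter_upwards [hs.eventually_le_const (lt_add_one s₀)] with i hi w hw
    exact hB _ (by linarith)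
  · refine hcont.tendsto.comp ?_
    simpa using hs.sub ((hy.pow 2).mul_const σ)

lemma tendsto_cascade_corner (hd₁ : 0 < d₁) (hd₂ : 0 < d₂) (μ₁ μ₂ : ℝ) (hH : IsCausal H)
    (hα : 0 < α) (hcont : ContinuousAt H t) :
    Tendsto (fun w : ℝ × ℝ => cascade α H (firstPassage d₁ μ₁) (firstPassage d₂ μ₂) w.1 w.2 t)
      (𝓝[Ioi 0 ×ˢ Ioi 0] (0, 0)) (𝓝 (2 * √(π * d₁) * (2 * √(π * d₂) * H t))) := by
  have h₂ := isFlatKernel_firstPassage hd₂ μ₂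
  have hfst : Tendsto Prod.fst (𝓝[Ioi (0 : ℝ) ×ˢ Ioi (0 : ℝ)] (0, 0)) (𝓝 0) :=
    (continuous_fst.tendsto ((0, 0) : ℝ × ℝ)).mono_left nhdsWithin_le_nhds
  have hsnd : Tendsto Prod.snd (𝓝[Ioi (0 : ℝ) ×ˢ Ioi (0 : ℝ)] (0, 0)) (𝓝 0) :=
    (continuous_snd.tendsto ((0, 0) : ℝ × ℝ)).mono_left nhdsWithin_le_nhds
  have hpos : ∀ᶠ w in 𝓝[Ioi (0 : ℝ) ×ˢ Ioi (0 : ℝ)] (0, 0), 0 < w.1 ∧ 0 < w.2 :=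
    self_mem_nhdsWithin
  obtain ⟨M, hM⟩ := exists_abs_response_firstPassage_le hd₂ μ₂ hH (1 + α * t) t
  refine tendsto_integral_firstPassage_mul (C := max M 0) hd₁ μ₁ hfst (hpos.mono fun w hw => hw.1)
    (Φ := fun w τ => response (firstPassage d₂ μ₂) H (w.2 + α * τ) (t - τ))
    (fun w => (measurable_response h₂ hH).comp (f := fun τ => (w.2 + α * τ, t - τ)) (by fun_prop))
    ?bound fun σ hσ => ?lim
  case bound =>
    filter_upwards [hpos, hsnd.eventually_lt_const one_pos] with w hw hw1 τ hτ
    rcases lt_or_ge t τ with htτ | hτt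
    · rw [response_of_neg h₂ hH _ (sub_neg.2 htτ), abs_zero]
      exact le_max_right M 0
    · have hy : 0 < w.2 + α * τ := add_pos hw.2 (mul_pos hα hτ)
      refine (hM _ _ ?_ (by linarith)).trans (le_max_left M 0)
      rw [abs_of_pos hy]
      gcongr
  case lim =>
    have hdelay : Tendsto (fun w : ℝ × ℝ => w.1 ^ 2 * σ)
        (𝓝[Ioi (0 : ℝ) ×ˢ Ioi (0 : ℝ)] (0, 0)) (𝓝 0) := by simpa using (hfst.pow 2).mul_const σ
    refine tendsto_response_firstPassage hd₂ μ₂ hH hcont ?_ (hpos.mono fun w hw => ?_) ?_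
    · simpa using hsnd.add (hdelay.const_mul α)
    · have := hw.1
      have := hw.2
      positivity
    · simpa using hdelay.const_sub t

lemma abs_cascade_firstPassage_le (hd₁ : 0 < d₁) (hd₂ : 0 < d₂) (μ₁ μ₂ : ℝ) (hH : IsCausal H)
    (hα : 0 ≤ α) (ht : 0 ≤ t) (hB : ∀ r ≤ t, |H r| ≤ B) {x z : ℝ} (hx : 0 ≤ x) (hz : 0 ≤ z) :
    |cascade α H (firstPassage d₁ μ₁) (firstPassage d₂ μ₂) x z t| ≤
      2 * √(π * (2 * d₁)) * (2 * √(π * (2 * d₂)) * B *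
        exp (|μ₂| * (z + α * t) / (2 * d₂) - z ^ 2 / (8 * d₂ * t))) *
        exp (|μ₁| * x / (2 * d₁) - x ^ 2 / (8 * d₁ * t)) := by
  have hB0 : 0 ≤ B := (abs_nonneg _).trans (hB t le_rfl)
  rw [show |μ₁| * x = |μ₁| * |x| by rw [abs_of_nonneg hx]]
  refine abs_integral_firstPassage_mul_le hd₁ μ₁ x (by positivity) (fun τ hτ hτt => ?_)
    fun τ hτ => response_of_neg (isFlatKernel_firstPassage hd₂ μ₂) hH _ (sub_neg.2 hτ)
  refine (abs_response_firstPassage_le hd₂ μ₂ hH hB (by linarith) _).trans ?_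
  have hατ : 0 ≤ α * τ := by positivity
  rw [abs_of_nonneg (add_nonneg hz hατ)]
  gcongr
  exact le_add_of_nonneg_right hατ

lemma linear_sub_quadratic_le (hd : 0 < d) (ht : 0 < t) (m y : ℝ) :
    m * y / (2 * d) - y ^ 2 / (8 * d * t) ≤ m ^ 2 * t / d - y ^ 2 / (16 * d * t) := by
  rw [← sub_nonneg]
  have hsq : m ^ 2 * t / d - y ^ 2 / (16 * d * t) - (m * y / (2 * d) - y ^ 2 / (8 * d * t)) =
      (4 * m * t - y) ^ 2 / (16 * d * t) := by
    field_simp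
    ring
  rw [hsq]
  positivity

lemma abs_cascade_firstPassage_le_exp_sum_sq (hd₁ : 0 < d₁) (hd₂ : 0 < d₂) (μ₁ μ₂ : ℝ)
    (hH : IsCausal H) (hα : 0 ≤ α) (ht : 0 < t) :
    ∃ K M κ : ℝ, 0 < κ ∧ ∀ x z, 0 ≤ x → 0 ≤ z →
      |cascade α H (firstPassage d₁ μ₁) (firstPassage d₂ μ₂) x z t| ≤
        K * exp (M - κ * (x ^ 2 + z ^ 2)) := by
  obtain ⟨B, hB⟩ := hH.bound t
  have hB0 : 0 ≤ B := (abs_nonneg _).trans (hB t le_rfl)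
  refine ⟨2 * √(π * (2 * d₁)) * (2 * √(π * (2 * d₂)) * B),
    |μ₂| * (α * t) / (2 * d₂) + |μ₂| ^ 2 * t / d₂ + |μ₁| ^ 2 * t / d₁,
    1 / (16 * (d₁ + d₂) * t), by positivity, fun x z hx hz => ?_⟩
  refine (abs_cascade_firstPassage_le hd₁ hd₂ μ₁ μ₂ hH hα ht.le hB hx hz).trans ?_
  rw [mul_assoc _ _ (exp _), mul_assoc _ (exp _) (exp _), ← exp_add, ← mul_assoc]
  gcongr
  have hκ₁ : 1 / (16 * (d₁ + d₂) * t) * x ^ 2 ≤ x ^ 2 / (16 * d₁ * t) := by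
    rw [one_div_mul_eq_div]
    gcongr
    exact le_add_of_nonneg_right hd₂.le
  have hκ₂ : 1 / (16 * (d₁ + d₂) * t) * z ^ 2 ≤ z ^ 2 / (16 * d₂ * t) := by
    rw [one_div_mul_eq_div]
    gcongr
    exact le_add_of_nonneg_left hd₁.le
  rw [mul_add |μ₂|, add_div, mul_add]
  linarith [linear_sub_quadratic_le hd₁ ht |μ₁| x, linear_sub_quadratic_le hd₂ ht |μ₂| z]

lemma tendsto_cascade_infinity (hd₁ : 0 < d₁) (hd₂ : 0 < d₂) (μ₁ μ₂ : ℝ) (hH : IsCausal H)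
    (hα : 0 ≤ α) (ht : 0 < t) :
    Tendsto (fun w : ℝ × ℝ => cascade α H (firstPassage d₁ μ₁) (firstPassage d₂ μ₂) w.1 w.2 t)
      (comap (fun w : ℝ × ℝ => w.1 ^ 2 + w.2 ^ 2) atTop ⊓ 𝓟 (Ioi 0 ×ˢ Ioi 0)) (𝓝 0) := by
  obtain ⟨K, M, κ, hκ, hle⟩ := abs_cascade_firstPassage_le_exp_sum_sq hd₁ hd₂ μ₁ μ₂ hH hα ht
  have hexp : Tendsto (fun r => K * exp (M - κ * r)) atTop (𝓝 0) := by
    have hbot : Tendsto (fun r => M - κ * r) atTop atBot :=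
      tendsto_const_nhds.add_atBot (tendsto_neg_atTop_atBot.comp (tendsto_id.const_mul_atTop hκ))
    simpa using (tendsto_exp_atBot.comp hbot).const_mul K
  refine squeeze_zero_norm' ?_ ((hexp.comp tendsto_comap).mono_left inf_le_left)
  filter_upwards [mem_inf_of_right (mem_principal_self _)] with w hw
  exact hle w.1 w.2 (le_of_lt hw.1) (le_of_lt hw.2)

lemma tendsto_cascade_initial (hd₁ : 0 < d₁) (hd₂ : 0 < d₂) (μ₁ μ₂ : ℝ) (hH : IsCausal H)
    (hα : 0 ≤ α) {x z : ℝ} (hx : 0 < x) (hz : 0 ≤ z) :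
    Tendsto (fun t => cascade α H (firstPassage d₁ μ₁) (firstPassage d₂ μ₂) x z t)
      (𝓝[>] 0) (𝓝 0) := by
  obtain ⟨B, hB⟩ := hH.bound 1
  have hB0 : 0 ≤ B := (abs_nonneg _).trans (hB 1 le_rfl)
  set K := 2 * √(π * (2 * d₁)) * (2 * √(π * (2 * d₂)) * B *
    exp (|μ₂| * (z + α * 1) / (2 * d₂)))
  have hexp : Tendsto (fun t => K * exp (|μ₁| * x / (2 * d₁) - x ^ 2 / (8 * d₁) * t⁻¹))
      (𝓝[>] 0) (𝓝 0) := by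
    have hbot : Tendsto (fun t : ℝ => |μ₁| * x / (2 * d₁) - x ^ 2 / (8 * d₁) * t⁻¹)
        (𝓝[>] 0) atBot :=
      tendsto_const_nhds.add_atBot (tendsto_neg_atTop_atBot.comp
        (tendsto_inv_nhdsGT_zero.const_mul_atTop (by positivity)))
    simpa using (tendsto_exp_atBot.comp hbot).const_mul K
  refine squeeze_zero_norm' ?_ hexp
  filter_upwards [Ioc_mem_nhdsGT one_pos] with t ht
  have ht0 : 0 < t := ht.1
  refine (abs_cascade_firstPassage_le hd₁ hd₂ μ₁ μ₂ hH hα ht0.le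
    (fun r hr => hB r (hr.trans ht.2)) hx.le hz).trans ?_
  rw [← div_eq_mul_inv, div_div]
  unfold K
  gcongr
  calc |μ₂| * (z + α * t) / (2 * d₂) - z ^ 2 / (8 * d₂ * t)
      ≤ |μ₂| * (z + α * t) / (2 * d₂) := sub_le_self _ (by positivity)
    _ ≤ |μ₂| * (z + α * 1) / (2 * d₂) := by
        gcongr
        exact ht.2

end Limits

/-- The classical lumped boundary value problem on the quadrant `x, z > 0`: advection-diffusion
with diffusivity `d₂` and drift `μ₂` in `z`, the dynamic boundary condition on `z = 0` combining
diffusivity `d₁` and drift `μ₁` in `x` with the flux `α * ∂_z u`, the corner data `g`, and decay at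
spatial infinity and at the initial time. Limits in space are taken within the open quadrant. -/
structure IsLumpedSolution (d₁ μ₁ d₂ μ₂ α : ℝ) (g : ℝ → ℝ) (u : ℝ → ℝ → ℝ → ℝ) : Prop where
  interior : ∀ x z t, 0 < x → 0 < z → 0 < t →
    deriv (fun t' => u x z t') t =
      d₂ * iteratedDeriv 2 (fun z' => u x z' t) z - μ₂ * deriv (fun z' => u x z' t) z
  boundary : ∀ x t, 0 < x → 0 < t →
    deriv (fun t' => u x 0 t') t =
      d₁ * iteratedDeriv 2 (fun x' => u x' 0 t) x - μ₁ * deriv (fun x' => u x' 0 t) x +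
        α * deriv (fun z' => u x z' t) 0
  corner : ∀ t, 0 < t →
    Tendsto (fun w : ℝ × ℝ => u w.1 w.2 t) (𝓝[Ioi 0 ×ˢ Ioi 0] (0, 0)) (𝓝 (g t))
  infinity : ∀ t, 0 < t →
    Tendsto (fun w : ℝ × ℝ => u w.1 w.2 t)
      (comap (fun w : ℝ × ℝ => w.1 ^ 2 + w.2 ^ 2) atTop ⊓ 𝓟 (Ioi 0 ×ˢ Ioi 0)) (𝓝 0)
  initial : ∀ x z, 0 < x → 0 < z → Tendsto (fun t => u x z t) (𝓝[>] 0) (𝓝 0)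

section Equations

variable {d d₁ d₂ α x z : ℝ} {H : ℝ → ℝ}

lemma deriv_cascade_eq_diffusion_z {D : ℝ → ℝ → ℝ} (hD : IsFlatKernel D) (hd : 0 < d) (μ : ℝ)
    (hH : IsCausal H) (hα : 0 < α) (hx : 0 < x) (hz : 0 < z) (t : ℝ) :
    deriv (fun t => cascade α H D (firstPassage d μ) x z t) t =
      d * iteratedDeriv 2 (fun z => cascade α H D (firstPassage d μ) x z t) z -
        μ * deriv (fun z => cascade α H D (firstPassage d μ) x z t) z := by
  have h := isFlatKernel_firstPassage hd μ
  have h' := isFlatKernel_firstPassageDx hd μ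
  have hderiv_z := fun y (hy : 0 < y) => hasDerivAt_cascade_z hD h h' hH hα
    (fun _ w hy => hasDerivAt_firstPassage_fst hd μ hy w) hx hy t
  have hderiv_zz := hasDerivAt_cascade_z hD h' (isFlatKernel_firstPassageDxx hd μ) hH hα
    (fun y w _ => hasDerivAt_firstPassageDx hd μ y w) hx hz t
  rw [(hasDerivAt_cascade_t hD h (isFlatKernel_firstPassageDw hd μ) hH hα
      (fun _ w hy => hasDerivAt_firstPassage_snd hd μ hy w) hx hz.le t).deriv,
    (hderiv_z z hz).deriv,
    iteratedDeriv_two_eq_of_hasDerivAt ((lt_mem_nhds hz).mono hderiv_z) hderiv_zz,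
    cascade_firstPassageDw_snd hd μ hD hH hα hx hz.le]

lemma deriv_cascade_eq_diffusion_x_add_transport (hd₁ : 0 < d₁) (hd₂ : 0 < d₂) (μ₁ μ₂ : ℝ)
    (hH : IsCausal H) (hα : 0 < α) (hx : 0 < x) (hz : 0 ≤ z) (t : ℝ) :
    deriv (fun t => cascade α H (firstPassage d₁ μ₁) (firstPassage d₂ μ₂) x z t) t =
      d₁ * iteratedDeriv 2
          (fun x => cascade α H (firstPassage d₁ μ₁) (firstPassage d₂ μ₂) x z t) x -
        μ₁ * deriv (fun x => cascade α H (firstPassage d₁ μ₁) (firstPassage d₂ μ₂) x z t) x +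
        α * deriv (fun z => cascade α H (firstPassage d₁ μ₁) (firstPassage d₂ μ₂) x z t) z := by
  have h₁ := isFlatKernel_firstPassage hd₁ μ₁
  have h₁' := isFlatKernel_firstPassageDx hd₁ μ₁
  have h₂ := isFlatKernel_firstPassage hd₂ μ₂
  have hderiv_x := fun x (hx : 0 < x) => hasDerivAt_cascade_x h₁ h₁' h₂ hH hα
    (fun _ w hy => hasDerivAt_firstPassage_fst hd₁ μ₁ hy w) hx hz t
  have hderiv_xx := hasDerivAt_cascade_x h₁' (isFlatKernel_firstPassageDxx hd₁ μ₁) h₂ hH hα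
    (fun y w _ => hasDerivAt_firstPassageDx hd₁ μ₁ y w) hx hz t
  rw [(hasDerivAt_cascade_t h₁ h₂ (isFlatKernel_firstPassageDw hd₂ μ₂) hH hα
      (fun _ w hy => hasDerivAt_firstPassage_snd hd₂ μ₂ hy w) hx hz t).deriv,
    (hasDerivAt_cascade_z_of_response_bounded h₁ h₂ (isFlatKernel_firstPassageDx hd₂ μ₂) hH hα
      (fun _ w hy => hasDerivAt_firstPassage_fst hd₂ μ₂ hy w)
      (exists_abs_response_firstPassage_le hd₂ μ₂ hH) hx hz t).deriv,
    (hderiv_x x hx).deriv,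
    iteratedDeriv_two_eq_of_hasDerivAt ((lt_mem_nhds hx).mono hderiv_x) hderiv_xx,
    cascade_firstPassage_firstPassageDw hd₁ hd₂ μ₁ μ₂ hH hα hx hz,
    cascade_firstPassageDw_fst hd₁ μ₁ h₂ hH hα hx hz]

lemma isLumpedSolution_cascade (hd₁ : 0 < d₁) (hd₂ : 0 < d₂) (μ₁ μ₂ : ℝ) (hH : IsCausal H)
    (hα : 0 < α) (hcont : ∀ t, 0 < t → ContinuousAt H t) :
    IsLumpedSolution d₁ μ₁ d₂ μ₂ α (fun t => 2 * √(π * d₁) * (2 * √(π * d₂) * H t))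
      (cascade α H (firstPassage d₁ μ₁) (firstPassage d₂ μ₂)) where
  interior _ _ t hx hz _ := deriv_cascade_eq_diffusion_z (isFlatKernel_firstPassage hd₁ μ₁) hd₂ μ₂
    hH hα hx hz t
  boundary _ t hx _ := deriv_cascade_eq_diffusion_x_add_transport hd₁ hd₂ μ₁ μ₂ hH hα hx le_rfl t
  corner t ht := tendsto_cascade_corner hd₁ hd₂ μ₁ μ₂ hH hα (hcont t ht)
  infinity _ ht := tendsto_cascade_infinity hd₁ hd₂ μ₁ μ₂ hH hα.le ht
  initial _ _ hx hz := tendsto_cascade_initial hd₁ hd₂ μ₁ μ₂ hH hα.le hx hz.le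

end Equations

namespace IsLumpedSolution

variable {d₁ μ₁ d₂ μ₂ α : ℝ} {f g : ℝ → ℝ} {u v : ℝ → ℝ → ℝ → ℝ}

lemma const_mul (hu : IsLumpedSolution d₁ μ₁ d₂ μ₂ α g u) (c : ℝ) :
    IsLumpedSolution d₁ μ₁ d₂ μ₂ α (fun t => c * g t) (fun x z t => c * u x z t) where
  interior x z t hx hz ht := by
    simp only [iteratedDeriv_const_mul_field, deriv_const_mul_field, hu.interior x z t hx hz ht]
    ring
  boundary x t hx ht := by
    simp only [iteratedDeriv_const_mul_field, deriv_const_mul_field, hu.boundary x t hx ht]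
    ring
  corner t ht := (hu.corner t ht).const_mul c
  infinity t ht := by simpa only [mul_zero] using (hu.infinity t ht).const_mul c
  initial x z hx hz := by simpa only [mul_zero] using (hu.initial x z hx hz).const_mul c

lemma congr (hv : IsLumpedSolution d₁ μ₁ d₂ μ₂ α g v)
    (huv : ∀ t, 0 < t → ∀ x z, u x z t = v x z t) (hfg : ∀ t, 0 < t → f t = g t) :
    IsLumpedSolution d₁ μ₁ d₂ μ₂ α f u := by
  have hderiv_t : ∀ x z t, 0 < t → deriv (fun t' => u x z t') t = deriv (fun t' => v x z t') t :=
    fun x z t ht => EventuallyEq.deriv_eq ((lt_mem_nhds ht).mono fun s hs => huv s hs x z)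
  constructor
  case interior =>
    intro x z t hx hz ht
    simp only [hderiv_t x z t ht, huv t ht, hv.interior x z t hx hz ht]
  case boundary =>
    intro x t hx ht
    simp only [hderiv_t x 0 t ht, huv t ht, hv.boundary x t hx ht]
  case corner => exact fun t ht => by simpa only [huv t ht, hfg t ht] using hv.corner t ht
  case infinity => exact fun t ht => by simpa only [huv t ht] using hv.infinity t ht
  case initial =>
    exact fun x z hx hz => (hv.initial x z hx hz).congr'
      (eventually_mem_nhdsWithin.mono fun t ht => (huv t ht x z).symm)

end IsLumpedSolution

section ExplicitFormula

variable {d d₁ d₂ t : ℝ} {H h : ℝ → ℝ}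

lemma firstPassage_eq_exp_mul {w : ℝ} (hd : d ≠ 0) (hw : 0 < w) (μ y : ℝ) :
    firstPassage d μ y w = exp (μ * y / (2 * d)) * (y * (w ^ (-(3 / 2 : ℝ)) *
      exp (-y ^ 2 / (4 * d * w)) * exp (-μ ^ 2 * w / (4 * d)))) := by
  rw [firstPassage_of_pos d μ y hw, exp_drift_eq hd hw.ne']
  simp only [neg_div, neg_mul]
  ring

lemma response_firstPassage_eq_intervalIntegral (hd : d ≠ 0) (μ : ℝ) (hH : IsCausal H)
    (hh : EqOn H h (Ici 0)) (y : ℝ) {s : ℝ} (hs : 0 ≤ s) :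
    response (firstPassage d μ) H y s =
      exp (μ * y / (2 * d)) * (y * ∫ w in (0 : ℝ)..s, w ^ (-(3 / 2 : ℝ)) *
        exp (-y ^ 2 / (4 * d * w)) * exp (-μ ^ 2 * w / (4 * d)) * h (s - w)) := by
  have hsupp : ∀ w ∉ Ioc 0 s, firstPassage d μ y w * H (s - w) = 0 := by
    intro w hw
    rcases le_or_gt w 0 with hw0 | hw0
    · rw [firstPassage_of_nonpos d μ y hw0, zero_mul]
    · rw [hH.eq_zero _ (sub_neg.2 (not_le.1 fun hws => hw ⟨hw0, hws⟩)), mul_zero]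
  rw [response, ← setIntegral_eq_integral_of_forall_compl_eq_zero hsupp,
    intervalIntegral.integral_of_le hs, ← integral_const_mul, ← integral_const_mul]
  refine setIntegral_congr_fun measurableSet_Ioc fun w hw => ?_
  simp only [firstPassage_eq_exp_mul hd hw.1, hh (mem_Ici.2 (sub_nonneg.2 hw.2))]
  ring

lemma cascade_firstPassage_eq_intervalIntegral (hd₁ : d₁ ≠ 0) (hd₂ : 0 < d₂) (μ₁ μ₂ : ℝ)
    (hH : IsCausal H) (hh : EqOn H h (Ici 0)) (α x z : ℝ) (ht : 0 ≤ t) :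
    cascade α H (firstPassage d₁ μ₁) (firstPassage d₂ μ₂) x z t =
      x * exp (μ₁ * x / (2 * d₁)) * ∫ τ in (0 : ℝ)..t, τ ^ (-(3 / 2 : ℝ)) *
        exp (-x ^ 2 / (4 * d₁ * τ) - μ₁ ^ 2 * τ / (4 * d₁)) *
        exp (μ₂ * (z + α * τ) / (2 * d₂)) * ((z + α * τ) *
          ∫ w in (0 : ℝ)..(t - τ), w ^ (-(3 / 2 : ℝ)) *
            exp (-(z + α * τ) ^ 2 / (4 * d₂ * w)) * exp (-μ₂ ^ 2 * w / (4 * d₂)) *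
            h (t - τ - w)) := by
  have hsupp : ∀ τ ∉ Ioc 0 t, firstPassage d₁ μ₁ x τ *
      response (firstPassage d₂ μ₂) H (z + α * τ) (t - τ) = 0 := by
    intro τ hτ
    rcases le_or_gt τ 0 with hτ0 | hτ0
    · rw [firstPassage_of_nonpos d₁ μ₁ x hτ0, zero_mul]
    · rw [response_of_neg (isFlatKernel_firstPassage hd₂ μ₂) hH _
        (sub_neg.2 (not_le.1 fun hτt => hτ ⟨hτ0, hτt⟩)), mul_zero]
  rw [cascade, ← setIntegral_eq_integral_of_forall_compl_eq_zero hsupp,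
    intervalIntegral.integral_of_le ht, ← integral_const_mul]
  refine setIntegral_congr_fun measurableSet_Ioc fun τ hτ => ?_
  have hexp : exp (-x ^ 2 / (4 * d₁ * τ) - μ₁ ^ 2 * τ / (4 * d₁)) =
      exp (-x ^ 2 / (4 * d₁ * τ)) * exp (-μ₁ ^ 2 * τ / (4 * d₁)) := by
    rw [← exp_add, neg_mul, neg_div (4 * d₁), ← sub_eq_add_neg]
  simp only [firstPassage_eq_exp_mul hd₁ hτ.1, response_firstPassage_eq_intervalIntegral hd₂.ne'
    μ₂ hH hh _ (sub_nonneg.2 hτ.2), hexp]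
  ring

end ExplicitFormula

section LumpedFormulation

lemma lumped_integral_eq_cascade {a : ℝ} (ha : 0 < a) (lam α γ A : ℝ) {H h : ℝ → ℝ}
    (hH : IsCausal H) (hh : EqOn H h (Ici 0)) (x z : ℝ) {t : ℝ} (ht : 0 ≤ t) :
    (A * x * exp (γ * x) / (4 * a * π)) *
        ∫ τ in (0 : ℝ)..t, τ ^ (-(3 / 2 : ℝ)) * exp (-x ^ 2 / (4 * τ) - γ ^ 2 * τ) *
          exp (lam * (z + α * τ) / (2 * a ^ 2)) * ((z + α * τ) *
            ∫ w in (0 : ℝ)..(t - τ), w ^ (-(3 / 2 : ℝ)) *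
              exp (-(z + α * τ) ^ 2 / (4 * a ^ 2 * w)) * exp (-lam ^ 2 * w / (4 * a ^ 2)) *
              h (t - τ - w)) =
      A / (4 * a * π) *
        cascade α H (firstPassage 1 (2 * γ)) (firstPassage (a ^ 2) lam) x z t := by
  have hexp : ∀ τ : ℝ, -x ^ 2 / (4 * 1 * τ) - (2 * γ) ^ 2 * τ / (4 * 1) =
      -x ^ 2 / (4 * τ) - γ ^ 2 * τ := fun τ => by ring
  rw [cascade_firstPassage_eq_intervalIntegral one_ne_zero (pow_pos ha 2) (2 * γ) lam hH hh α x z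
    ht, ← mul_assoc]
  simp only [hexp]
  congr 1
  rw [show 2 * γ * x / (2 * 1) = γ * x by ring]
  ring

lemma lumped_corner_value {a : ℝ} (ha : 0 < a) (A c : ℝ) :
    A / (4 * a * π) * (2 * √(π * 1) * (2 * √(π * a ^ 2) * c)) = A * c := by
  have hπ : √π * √π = π := mul_self_sqrt pi_pos.le
  rw [mul_one, sqrt_mul pi_pos.le, sqrt_sq ha.le]
  field_simp
  linear_combination (4 * A * c) * hπ

theorem classical_incomplete_lumped_linear_general
    (a lam α γ A : ℝ) (ha : 0 < a) (hα : 0 < α) (h : ℝ → ℝ) (hcont : ContinuousOn h (Ici 0))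
    (u : ℝ → ℝ → ℝ → ℝ)
    (hu : ∀ x z t : ℝ, u x z t =
      (A * x * exp (γ * x) / (4 * a * π)) *
        ∫ τ in (0 : ℝ)..t, τ ^ (-(3 / 2 : ℝ)) * exp (-x ^ 2 / (4 * τ) - γ ^ 2 * τ) *
          exp (lam * (z + α * τ) / (2 * a ^ 2)) * ((z + α * τ) *
            ∫ w in (0 : ℝ)..(t - τ), w ^ (-(3 / 2 : ℝ)) *
              exp (-(z + α * τ) ^ 2 / (4 * a ^ 2 * w)) * exp (-lam ^ 2 * w / (4 * a ^ 2)) *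
              h (t - τ - w))) :
    IsLumpedSolution 1 (2 * γ) (a ^ 2) lam α (fun t => A * h t) u := by
  have hH : IsCausal ((Ici 0).indicator h) := .indicator_Ici hcont
  have hHh : EqOn ((Ici 0).indicator h) h (Ici 0) := eqOn_indicator
  have hHcont : ∀ t, 0 < t → ContinuousAt ((Ici 0).indicator h) t := fun t ht =>
    (hcont.continuousAt (Ici_mem_nhds ht)).congr
      (hHh.symm.eventuallyEq_of_mem (Ici_mem_nhds ht))
  have hcascade := isLumpedSolution_cascade one_pos (pow_pos ha 2) (2 * γ) lam hH hα hHcont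
  refine (hcascade.const_mul (A / (4 * a * π))).congr (fun t ht x z => ?_) fun t ht => ?_
  · exact (hu x z t).trans (lumped_integral_eq_cascade ha lam α γ A hH hHh x z ht.le)
  · rw [hHh (mem_Ici.2 ht.le), lumped_corner_value ha]

end LumpedFormulation

/-- Special case of Theorem 1 with `2β = 1` (classical incomplete lumped formulation,
linear case): the function
`u(x,z,t) = (A x e^{γx}/(4aπ)) ∫_0^t τ^{−3/2} e^{−x²/(4τ)−γ²τ} e^{λ(z+ατ)/(2a²)}
  [ (z+ατ) ∫_0^{t−τ} w^{−3/2} e^{−(z+ατ)²/(4a²w)} e^{−λ²w/(4a²)} h(t−τ−w) dw ] dτ`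
solves the classical boundary value problem (1.1)–(1.3) (with data `A h(t)`). -/
theorem classical_incomplete_lumped_linear
    (a lam α γ A : ℝ) (ha : 0 < a) (hlam : 0 < lam) (hα : 0 < α) (hγ : 0 < γ)
    (hA : 0 < A)
    (h : ℝ → ℝ) (hcont : ContinuousOn h (Ici 0))
    (hbdd : ∃ Cb : ℝ, ∀ t : ℝ, 0 ≤ t → |h t| ≤ Cb) (h0 : h 0 = 0)
    (u : ℝ → ℝ → ℝ → ℝ)
    (hu : ∀ x z t : ℝ, u x z t =
      (A * x * Real.exp (γ * x) / (4 * a * π)) *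
        ∫ τ in (0 : ℝ)..t, τ ^ (-(3 / 2 : ℝ)) *
          Real.exp (-x ^ 2 / (4 * τ) - γ ^ 2 * τ) *
          Real.exp (lam * (z + α * τ) / (2 * a ^ 2)) *
          ((z + α * τ) *
            ∫ w in (0 : ℝ)..(t - τ), w ^ (-(3 / 2 : ℝ)) *
              Real.exp (-(z + α * τ) ^ 2 / (4 * a ^ 2 * w)) *
              Real.exp (-lam ^ 2 * w / (4 * a ^ 2)) * h (t - τ - w))) :
    -- (i) the heat equation for `x, z, t > 0`
    (∀ x z t : ℝ, 0 < x → 0 < z → 0 < t →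
      deriv (fun t' => u x z t') t =
        a ^ 2 * iteratedDeriv 2 (fun z' => u x z' t) z -
          lam * deriv (fun z' => u x z' t) z) ∧
    -- (ii) the boundary condition at `z = 0`
    (∀ x t : ℝ, 0 < x → 0 < t →
      deriv (fun t' => u x 0 t') t =
        iteratedDeriv 2 (fun x' => u x' 0 t) x -
          2 * γ * deriv (fun x' => u x' 0 t) x +
          α * deriv (fun z' => u x z' t) 0) ∧
    -- (iii) `u → A h(t)` as `(x,z) → (0,0)`
    (∀ t : ℝ, 0 < t →
      Tendsto (fun w : ℝ × ℝ => u w.1 w.2 t)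
        (nhdsWithin (0, 0) (Ioi (0 : ℝ) ×ˢ Ioi (0 : ℝ))) (nhds (A * h t))) ∧
    -- (iv) `u → 0` as `x² + z² → ∞`
    (∀ t : ℝ, 0 < t →
      Tendsto (fun w : ℝ × ℝ => u w.1 w.2 t)
        ((comap (fun w : ℝ × ℝ => w.1 ^ 2 + w.2 ^ 2) atTop) ⊓
          𝓟 (Ioi (0 : ℝ) ×ˢ Ioi (0 : ℝ))) (nhds 0)) ∧
    -- (v) `u → 0` as `t → 0⁺`
    (∀ x z : ℝ, 0 < x → 0 < z →
      Tendsto (fun t => u x z t) (nhdsWithin 0 (Ioi 0)) (nhds 0)) := by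
  have hsol := classical_incomplete_lumped_linear_general a lam α γ A ha hα h hcont u hu
  exact ⟨hsol.interior, by simpa only [one_mul] using hsol.boundary, hsol.corner, hsol.infinity,
    hsol.initial⟩
end
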